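/- Fix an integer n ≥ 1 and assume the Riemann Hypothesis. With c = 1 + 1/log(2πY) and V = 2πY, as Y → ∞: (1/2π) ∫_{−V}^{V} (ζ'/ζ)^{(n)}(c + it) · ζ(c + it) · Y^{c+it}/(c + it) dt = M_n(Y) + O(Y^{1/2} log^{n+5/2} Y), where M_n(Y) = (−1)^{n+1} (1/(n+1)) Y log^{n+1} Y + (−1)^{n+1} ∑_{k=0}^{n} binom(n,k) (−1)^k k! (−1 + ∑_{j=0}^{k} (−1)^j C_j) Y log^{n−k} Y + n! A_n Y. -/

import Mathlib

open Complex Finset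

/-- The vertical line integral
`(1/2πi) ∫_{c-iV}^{c+iV} (ζ'/ζ)^{(n)}(s) ζ(s) Y^s / s ds`, written as a real
integral in `t`. -/
noncomputable def perronIntegral (n : ℕ) (c V Y : ℝ) : ℂ :=
  ((1 / (2 * Real.pi) : ℝ) : ℂ) *
    ∫ t in -V..V,
      iteratedDeriv n (fun s => deriv riemannZeta s / riemannZeta s) (↑c + ↑t * I) *
        riemannZeta (↑c + ↑t * I) * (Y : ℂ) ^ (↑c + ↑t * I) / (↑c + ↑t * I)

/-- `M_n(Y)`, the residue at `s = 1` of `(ζ'/ζ)^{(n)}(s) ζ(s) Y^s / s`,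
expressed via the Laurent coefficients `C j` of `ζ` and `A j` of `ζ'/ζ`
about `s = 1`. -/
noncomputable def Mterm (C A : ℕ → ℂ) (n : ℕ) (Y : ℝ) : ℂ :=
  (-1 : ℂ) ^ (n + 1) * (1 / ((n : ℂ) + 1)) * ((Y * Real.log Y ^ (n + 1) : ℝ) : ℂ)
  + (-1 : ℂ) ^ (n + 1) *
      ∑ k ∈ Finset.range (n + 1),
        (n.choose k : ℂ) * (-1 : ℂ) ^ k * (k.factorial : ℂ) *
          (-1 + ∑ j ∈ Finset.range (k + 1), (-1 : ℂ) ^ j * C j) *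
          ((Y * Real.log Y ^ (n - k) : ℝ) : ℂ)
  + (n.factorial : ℂ) * A n * ((Y : ℝ) : ℂ)


lemma pz_hasDerivAt_cpow (w : ℂ) {x : ℝ} (hx : 0 < x) :
    HasDerivAt (fun y : ℝ => (y : ℂ) ^ w) (w * (x : ℂ) ^ (w - 1)) x := by
  have h1 : HasDerivAt (fun z : ℂ => z ^ w) (w * (x : ℂ) ^ (w - 1)) (x : ℂ) := by
    have := (hasDerivAt_id (x : ℂ)).cpow_const (c := w) (Or.inl (by simpa using hx))
    simpa using this
  exact h1.comp_ofReal

/-- mean value bound for complex powers -/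
lemma pz_cpow_sub_le (w : ℂ) (hw : w.re ≤ 1) {m a b : ℝ} (hm : 0 < m) (ha : m ≤ a) (hab : a ≤ b) :
    ‖(b : ℂ) ^ w - (a : ℂ) ^ w‖ ≤ ‖w‖ * m ^ (w.re - 1) * (b - a) := by
  have := norm_image_sub_le_of_norm_deriv_le_segment' (f := fun y : ℝ => (y : ℂ) ^ w)
    (f' := fun x => w * (x : ℂ) ^ (w - 1)) (C := ‖w‖ * m ^ (w.re - 1)) (a := a) (b := b)
    (fun x hx => (pz_hasDerivAt_cpow w (by linarith [hx.1])).hasDerivWithinAt)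
    (fun x hx => by
      have hx0 : 0 < x := by linarith [hx.1]
      rw [norm_mul, Complex.norm_cpow_eq_rpow_re_of_pos hx0]
      simp only [sub_re, one_re]
      gcongr ?_ * ?_
      exact Real.rpow_le_rpow_of_nonpos hm (by linarith [hx.1]) (by linarith))
    b ⟨hab, le_rfl⟩
  exact this

noncomputable def pzTerm (n : ℕ) (s : ℂ) : ℂ :=
  (s - 1) * (((n : ℝ) + 1 : ℝ) : ℂ) ^ (-s) + (((n : ℝ) + 3 / 2 : ℝ) : ℂ) ^ (1 - s)
    - (((n : ℝ) + 1 / 2 : ℝ) : ℂ) ^ (1 - s)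

lemma pzTerm_le_simple (n : ℕ) (s : ℂ) (hs : 0 ≤ s.re) :
    ‖pzTerm n s‖ ≤ 2 * ‖s - 1‖ * ((n : ℝ) + 1 / 2) ^ (-s.re) := by
  have hn : (0 : ℝ) ≤ n := n.cast_nonneg
  have h1 := pz_cpow_sub_le (1 - s) (by simpa using hs) (m := (n : ℝ) + 1 / 2) (a := n + 1 / 2)
    (b := n + 3 / 2) (by positivity) le_rfl (by linarith)
  have h2 : ‖(s - 1) * (((n : ℝ) + 1 : ℝ) : ℂ) ^ (-s)‖ ≤ ‖s - 1‖ * ((n : ℝ) + 1 / 2) ^ (-s.re) := by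
    rw [norm_mul, Complex.norm_cpow_eq_rpow_re_of_pos (by positivity)]
    gcongr ?_ * ?_
    exact Real.rpow_le_rpow_of_nonpos (by positivity) (by linarith) (by simpa using hs)
  have h3 : (1 - s).re - 1 = - s.re := by simp
  rw [h3, norm_sub_rev 1 s] at h1
  unfold pzTerm
  rw [add_sub_assoc]
  refine (norm_add_le _ _).trans ?_
  calc _ ≤ _ := add_le_add h2 h1
    _ = _ := by ring

lemma pzTerm_le (n : ℕ) (s : ℂ) (hs : -1 ≤ s.re) :
    ‖pzTerm n s‖ ≤ ‖s - 1‖ * ‖s‖ * ‖s + 1‖ * ((n : ℝ) + 1 / 2) ^ (-s.re - 2) := by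
  have hn : (0 : ℝ) ≤ n := n.cast_nonneg
  set x : ℝ := n + 1 with hx
  set B : ℝ := ‖s - 1‖ * ‖s‖ * ‖s + 1‖ * ((n : ℝ) + 1 / 2) ^ (-s.re - 2) with hB
  have hB0 : 0 ≤ B := by positivity
  let φ : ℝ → ℂ := fun u => ((x + u : ℝ) : ℂ) ^ (1 - s) - ((x - u : ℝ) : ℂ) ^ (1 - s)
    + (2 * u : ℝ) * ((s - 1) * (x : ℂ) ^ (-s))
  let φ1 : ℝ → ℂ := fun u => (1 - s) * (((x + u : ℝ) : ℂ) ^ (-s) + ((x - u : ℝ) : ℂ) ^ (-s)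
    - 2 * (x : ℂ) ^ (-s))
  let φ2 : ℝ → ℂ := fun u => (1 - s) * (-s * (((x + u : ℝ) : ℂ) ^ (-s - 1) - ((x - u : ℝ) : ℂ) ^ (-s - 1)))
  have hp : ∀ u ∈ Set.Icc (0 : ℝ) (1 / 2), 0 < x + u ∧ 0 < x - u := by
    intro u hu; constructor <;> linarith [hu.1, hu.2]
  have hadd : ∀ (w : ℂ) (u : ℝ), 0 < x + u →
      HasDerivAt (fun u : ℝ => ((x + u : ℝ) : ℂ) ^ w) (w * ((x + u : ℝ) : ℂ) ^ (w - 1)) u := by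
    intro w u hu
    have := HasDerivAt.scomp u (pz_hasDerivAt_cpow w hu) ((hasDerivAt_id u).const_add x)
    simpa [Function.comp_def] using this
  have hsub : ∀ (w : ℂ) (u : ℝ), 0 < x - u →
      HasDerivAt (fun u : ℝ => ((x - u : ℝ) : ℂ) ^ w) (-(w * ((x - u : ℝ) : ℂ) ^ (w - 1))) u := by
    intro w u hu
    have := HasDerivAt.scomp u (pz_hasDerivAt_cpow w hu) ((hasDerivAt_id u).const_sub x)
    simpa [Function.comp_def] using this
  have d0 : ∀ u ∈ Set.Icc (0 : ℝ) (1 / 2), HasDerivWithinAt φ (φ1 u) (Set.Icc 0 (1/2)) u := by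
    intro u hu
    have h1 := hadd (1 - s) u (hp u hu).1
    have h2 := hsub (1 - s) u (hp u hu).2
    have h3 : HasDerivAt (fun u : ℝ => ((2 * u : ℝ) : ℂ) * ((s - 1) * (x : ℂ) ^ (-s)))
        (2 * ((s - 1) * (x : ℂ) ^ (-s))) u := by
      have := (((hasDerivAt_id u).const_mul 2).ofReal_comp).mul_const ((s - 1) * (x : ℂ) ^ (-s))
      simpa using this
    have := ((h1.sub h2).add h3).hasDerivWithinAt (s := Set.Icc 0 (1/2))
    refine HasDerivWithinAt.congr_deriv (f := φ) this ?_
    have e : (1 - s - 1 : ℂ) = -s := by ring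
    simp only [φ1]
    rw [e]; ring
  have d1 : ∀ u ∈ Set.Icc (0 : ℝ) (1 / 2), HasDerivWithinAt φ1 (φ2 u) (Set.Icc 0 (1/2)) u := by
    intro u hu
    have h1 := hadd (- s) u (hp u hu).1
    have h2 := hsub (- s) u (hp u hu).2
    have := (((h1.add h2).sub_const (2 * (x : ℂ) ^ (-s))).const_mul (1 - s)).hasDerivWithinAt (s := Set.Icc 0 (1/2))
    refine HasDerivWithinAt.congr_deriv (f := φ1) this ?_
    simp only [φ2]
    ring
  have b2 : ∀ u ∈ Set.Icc (0 : ℝ) (1 / 2), ‖φ2 u‖ ≤ B := by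
    intro u hu
    have h := pz_cpow_sub_le (-s - 1) (by simp; linarith) (m := (n : ℝ) + 1 / 2) (a := x - u)
      (b := x + u) (by positivity) (by linarith [hu.2]) (by linarith [hu.1])
    have e1 : (-s - 1).re - 1 = -s.re - 2 := by simp; ring
    have e2 : ‖-s - 1‖ = ‖s + 1‖ := by rw [← norm_neg]; congr 1; ring
    rw [e1, e2] at h
    simp only [φ2]
    rw [norm_mul, norm_mul, norm_neg, norm_sub_rev 1 s]
    calc _ ≤ ‖s - 1‖ * (‖s‖ * (‖s + 1‖ * ((n : ℝ) + 1 / 2) ^ (-s.re - 2) * 1)) := by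
          gcongr
          refine h.trans ?_
          gcongr
          linarith [hu.2]
      _ = B := by rw [hB]; ring
  have b1 : ∀ u ∈ Set.Icc (0 : ℝ) (1 / 2), ‖φ1 u‖ ≤ B := by
    intro u hu
    have := norm_image_sub_le_of_norm_deriv_le_segment' d1 (fun v hv => b2 v ⟨hv.1, hv.2.le⟩) u hu
    have e : φ1 0 = 0 := by simp [φ1]; right; ring
    rw [e, sub_zero] at this
    refine this.trans ?_
    nlinarith [hu.1, hu.2]
  have := norm_image_sub_le_of_norm_deriv_le_segment' d0 (fun v hv => b1 v ⟨hv.1, hv.2.le⟩) (1/2) ⟨by norm_num, le_rfl⟩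
  have e : φ 0 = 0 := by simp [φ]
  have e2 : φ (1/2) = pzTerm n s := by
    simp only [φ, pzTerm, hx]
    rw [show (n : ℝ) + 1 + 1/2 = n + 3/2 by ring, show (n : ℝ) + 1 - 1/2 = n + 1/2 by ring]
    push_cast; ring
  rw [e, e2, sub_zero] at this
  linarith

/-- `(s-1) ζ(s)`, with the singularity removed. -/
noncomputable def pzZ : ℂ → ℂ := Function.update (fun s => (s - 1) * riemannZeta s) 1 1

lemma pzZ_of_ne {s : ℂ} (hs : s ≠ 1) : pzZ s = (s - 1) * riemannZeta s := by
  simp [pzZ, hs]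

lemma pzZ_one : pzZ 1 = 1 := by simp [pzZ]

lemma pzZ_differentiable : Differentiable ℂ pzZ := by
  have h := (Complex.differentiableOn_compl_singleton_and_continuousAt_iff
    (f := pzZ) (s := Set.univ) (c := 1) Filter.univ_mem).1 ⟨?_, ?_⟩
  · exact differentiableOn_univ.1 h
  · intro s hs
    have hs1 : s ≠ 1 := by simpa using hs
    have : DifferentiableAt ℂ (fun s => (s - 1) * riemannZeta s) s :=
      (differentiableAt_id.sub_const 1).mul (differentiableAt_riemannZeta hs1)
    refine (this.congr_of_eventuallyEq ?_).differentiableWithinAt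
    filter_upwards [isOpen_ne.mem_nhds hs1] with z hz using pzZ_of_ne hz
  · rw [pzZ, continuousAt_update_same]
    exact riemannZeta_residue_one



lemma pz_half_rpow (n : ℕ) {σ a : ℝ} (ha : -2 ≤ a) (h : a ≤ σ) :
    ((n : ℝ) + 1 / 2) ^ (-σ - 2) ≤ 2 ^ (σ + 2) * ((n : ℝ) + 1) ^ (-a - 2) := by
  have hn : (0 : ℝ) ≤ n := n.cast_nonneg
  have e : (n : ℝ) + 1 / 2 = 2⁻¹ * (2 * n + 1) := by ring
  rw [e, Real.mul_rpow (by norm_num) (by positivity), Real.inv_rpow (by norm_num),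
    ← Real.rpow_neg (by norm_num), show -(-σ - 2) = σ + 2 by ring]
  gcongr ?_ * ?_
  calc (2 * (n : ℝ) + 1) ^ (-σ - 2) ≤ (2 * (n : ℝ) + 1) ^ (-a - 2) :=
        Real.rpow_le_rpow_of_exponent_le (by linarith) (by linarith)
    _ ≤ _ := Real.rpow_le_rpow_of_nonpos (by positivity) (by linarith) (by linarith)

lemma pzTerm_le' (n : ℕ) (s : ℂ) {a : ℝ} (ha : -1 ≤ a) (hs : a ≤ s.re) :
    ‖pzTerm n s‖ ≤ ‖s - 1‖ * ‖s‖ * ‖s + 1‖ * (2 ^ (s.re + 2) * ((n : ℝ) + 1) ^ (-a - 2)) := by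
  refine (pzTerm_le n s (by linarith)).trans ?_
  gcongr
  exact pz_half_rpow n (by linarith) hs

lemma pz_summable_rpow {a : ℝ} (ha : -1 < a) : Summable (fun n : ℕ => ((n : ℝ) + 1) ^ (-a - 2)) := by
  have := (Real.summable_nat_rpow (p := -a - 2)).2 (by linarith)
  have := (summable_nat_add_iff 1).2 this
  simpa using this

lemma pzTerm_summable (s : ℂ) (hs : -1 < s.re) : Summable (fun n => pzTerm n s) := by
  refine Summable.of_norm_bounded (((pz_summable_rpow hs).mul_left (2 ^ (s.re + 2))).mul_left
    (‖s - 1‖ * ‖s‖ * ‖s + 1‖)) (fun n => pzTerm_le' n s hs.le le_rfl)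

lemma pzTerm_differentiable (n : ℕ) : Differentiable ℂ (pzTerm n) := by
  have hn : (0 : ℝ) ≤ n := n.cast_nonneg
  have h : ∀ x : ℝ, 0 < x → (x : ℂ) ≠ 0 := fun x hx => by exact_mod_cast hx.ne'
  unfold pzTerm
  refine ((Differentiable.mul (by fun_prop) ?_).add ?_).sub ?_
  · exact (by fun_prop : Differentiable ℂ (fun s : ℂ => -s)).const_cpow (Or.inl (h _ (by positivity)))
  · exact (by fun_prop : Differentiable ℂ (fun s : ℂ => 1-s)).const_cpow (Or.inl (h _ (by positivity)))
  · exact (by fun_prop : Differentiable ℂ (fun s : ℂ => 1-s)).const_cpow (Or.inl (h _ (by positivity)))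

lemma pz_tsum_differentiableOn : DifferentiableOn ℂ (fun s => ∑' n, pzTerm n s) {s | -1 < s.re} := by
  intro s hs
  obtain ⟨a, ha, has⟩ := exists_between (show -1 < s.re from hs)
  set R := ‖s‖ + 1
  let U : Set ℂ := {z | a < z.re} ∩ Metric.ball 0 R
  have hU : IsOpen U := (isOpen_lt continuous_const continuous_re).inter Metric.isOpen_ball
  have hsU : s ∈ U := ⟨has, by simp [R]⟩
  have := differentiableOn_tsum_of_summable_norm (F := fun n s => pzTerm n s) (U := U)
    (u := fun n : ℕ => ((R + 1) * R * (R + 1)) * (2 ^ (R + 2) * ((n : ℝ) + 1) ^ (-a - 2)))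
    (((pz_summable_rpow ha).mul_left _).mul_left _)
    (fun n => (pzTerm_differentiable n).differentiableOn) hU
    (fun n z hz => by
      have hz2 : ‖z‖ < R := by simpa using hz.2
      refine (pzTerm_le' n z ha.le (le_of_lt hz.1)).trans ?_
      have h1 : ‖z - 1‖ ≤ R + 1 := (norm_sub_le _ _).trans (by simp; linarith)
      have h2 : ‖z + 1‖ ≤ R + 1 := (norm_add_le _ _).trans (by simp; linarith)
      have h3 : z.re ≤ R := (re_le_norm z).trans hz2.le
      gcongr
      norm_num)
  exact (this.differentiableAt (hU.mem_nhds hsU)).differentiableWithinAt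

lemma pzZ_eq_of_one_lt {s : ℂ} (hs : 1 < s.re) :
    pzZ s = ((1 / 2 : ℝ) : ℂ) ^ (1 - s) + ∑' n, pzTerm n s := by
  have hs1 : s ≠ 1 := by rintro rfl; simp at hs
  rw [pzZ_of_ne hs1, zeta_eq_tsum_one_div_nat_add_one_cpow hs]
  have hz : Summable (fun n : ℕ => (s - 1) * (((n : ℝ) + 1 : ℝ) : ℂ) ^ (-s)) := by
    have := (Complex.summable_one_div_nat_cpow (p := s)).2 hs
    have := ((summable_nat_add_iff 1).2 this).mul_left (s - 1)
    refine this.congr (fun n => ?_)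
    rw [cpow_neg]; push_cast; simp
  have ht := pzTerm_summable s (by linarith)
  have hd : Summable (fun n : ℕ => (((n : ℝ) + 3 / 2 : ℝ) : ℂ) ^ (1 - s)
    - (((n : ℝ) + 1 / 2 : ℝ) : ℂ) ^ (1 - s)) := by
    refine (ht.sub hz).congr (fun n => ?_)
    simp only [pzTerm]; ring
  have hd1 : ∑' n : ℕ, ((((n : ℝ) + 3 / 2 : ℝ) : ℂ) ^ (1 - s)
    - (((n : ℝ) + 1 / 2 : ℝ) : ℂ) ^ (1 - s)) = - ((1 / 2 : ℝ) : ℂ) ^ (1 - s) := by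
    have h1 := hd.hasSum.tendsto_sum_nat
    have h2 : ∀ N : ℕ, ∑ n ∈ range N, ((((n : ℝ) + 3 / 2 : ℝ) : ℂ) ^ (1 - s)
      - (((n : ℝ) + 1 / 2 : ℝ) : ℂ) ^ (1 - s)) = (((N : ℝ) + 1 / 2 : ℝ) : ℂ) ^ (1 - s)
        - ((1 / 2 : ℝ) : ℂ) ^ (1 - s) := by
      intro N
      have := Finset.sum_range_sub (fun n : ℕ => (((n : ℝ) + 1 / 2 : ℝ) : ℂ) ^ (1 - s)) N
      convert this using 3 with n
      · push_cast; ring_nf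
      · norm_num
    simp only [h2] at h1
    refine tendsto_nhds_unique h1 ?_
    have h3 : Filter.Tendsto (fun N : ℕ => (((N : ℝ) + 1 / 2 : ℝ) : ℂ) ^ (1 - s)) Filter.atTop (nhds 0) := by
      rw [tendsto_zero_iff_norm_tendsto_zero]
      have h4 : ∀ N : ℕ, ‖(((N : ℝ) + 1 / 2 : ℝ) : ℂ) ^ (1 - s)‖ = ((N : ℝ) + 1 / 2) ^ (-(s.re - 1)) := by
        intro N
        rw [Complex.norm_cpow_eq_rpow_re_of_pos (by positivity)]; simp
      simp only [h4]
      refine (tendsto_rpow_neg_atTop (by linarith : 0 < s.re - 1)).comp ?_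
      exact Filter.tendsto_atTop_add_const_right _ _ tendsto_natCast_atTop_atTop
    simpa using h3.sub_const (((1 / 2 : ℝ) : ℂ) ^ (1 - s))
  have h5 : ∑' n, pzTerm n s = (∑' n : ℕ, (s - 1) * (((n : ℝ) + 1 : ℝ) : ℂ) ^ (-s))
      + - ((1 / 2 : ℝ) : ℂ) ^ (1 - s) := by
    rw [← hd1, ← hz.tsum_add hd]
    congr 1; ext n; simp only [pzTerm]; ring
  rw [h5, tsum_mul_left]
  have h6 : ∑' n : ℕ, 1 / ((n : ℂ) + 1) ^ s = ∑' n : ℕ, (((n : ℝ) + 1 : ℝ) : ℂ) ^ (-s) := by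
    congr 1; ext n; rw [cpow_neg]; push_cast; simp
  rw [h6]; ring

lemma pzZ_eq {s : ℂ} (hs : -1 < s.re) :
    pzZ s = ((1 / 2 : ℝ) : ℂ) ^ (1 - s) + ∑' n, pzTerm n s := by
  have hO : IsOpen {s : ℂ | -1 < s.re} := isOpen_lt continuous_const continuous_re
  have h1 : AnalyticOnNhd ℂ pzZ {s | -1 < s.re} :=
    pzZ_differentiable.differentiableOn.analyticOnNhd hO
  have h2 : AnalyticOnNhd ℂ (fun s => ((1 / 2 : ℝ) : ℂ) ^ (1 - s) + ∑' n, pzTerm n s) {s | -1 < s.re} := by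
    refine DifferentiableOn.analyticOnNhd ?_ hO
    refine DifferentiableOn.add (Differentiable.differentiableOn ?_) pz_tsum_differentiableOn
    exact (by fun_prop : Differentiable ℂ (fun s : ℂ => 1-s)).const_cpow (Or.inl (by norm_num))
  refine h1.eqOn_of_preconnected_of_eventuallyEq h2 (convex_halfSpace_re_gt (-1)).isPreconnected
    (z₀ := 2) (by simp; norm_num) ?_ hs
  have : {s : ℂ | 1 < s.re} ∈ nhds (2 : ℂ) :=
    (isOpen_lt continuous_const continuous_re).mem_nhds (by simp)
  filter_upwards [this] with z hz using pzZ_eq_of_one_lt hz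

lemma pzZ_bound : ∃ C > 0, ∀ s : ℂ, -1/2 ≤ s.re → s.re ≤ 3 → ‖pzZ s‖ ≤ C * (|s.im| + 2) ^ 3 := by
  set S := ∑' n : ℕ, ((n : ℝ) + 1) ^ (-(-1/2 : ℝ) - 2)
  have hS : 0 ≤ S := tsum_nonneg (fun n => by positivity)
  refine ⟨4 + 8 * 32 * S, by positivity, fun s h1 h2 => ?_⟩
  rw [pzZ_eq (by linarith)]
  have hn : ‖s‖ ≤ |s.im| + 3 := by
    have := norm_le_abs_re_add_abs_im s
    have : |s.re| ≤ 3 := abs_le.2 ⟨by linarith, by linarith⟩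
    linarith
  have ht : (0 : ℝ) ≤ |s.im| := abs_nonneg _
  have hb1 : ‖((1 / 2 : ℝ) : ℂ) ^ (1 - s)‖ ≤ 4 := by
    rw [Complex.norm_cpow_eq_rpow_re_of_pos (by positivity)]
    simp only [sub_re, one_re]
    calc (1 / 2 : ℝ) ^ (1 - s.re) ≤ (1/2 : ℝ) ^ (-2 : ℝ) :=
          Real.rpow_le_rpow_of_exponent_ge (by norm_num) (by norm_num) (by linarith)
      _ = 4 := by rw [Real.rpow_neg (by norm_num)]; norm_num
  have hsum := (pz_summable_rpow (a := -1/2) (by norm_num))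
  have hb2 : ‖∑' n, pzTerm n s‖ ≤ ‖s - 1‖ * ‖s‖ * ‖s + 1‖ * (2 ^ (s.re + 2) * S) := by
    exact tsum_of_norm_bounded ((hsum.hasSum.mul_left (2 ^ (s.re + 2))).mul_left
      (‖s - 1‖ * ‖s‖ * ‖s + 1‖)) (fun n => pzTerm_le' n s (by norm_num) h1)
  have h3 : ‖s - 1‖ ≤ 2 * (|s.im| + 2) := (norm_sub_le _ _).trans (by simp; linarith)
  have h4 : ‖s + 1‖ ≤ 2 * (|s.im| + 2) := (norm_add_le _ _).trans (by simp; linarith)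
  have h5 : ‖s‖ ≤ 2 * (|s.im| + 2) := by linarith
  have h6 : (2 : ℝ) ^ (s.re + 2) ≤ 32 := by
    calc (2 : ℝ) ^ (s.re + 2) ≤ (2 : ℝ) ^ (5 : ℝ) :=
          Real.rpow_le_rpow_of_exponent_le (by norm_num) (by linarith)
      _ = 32 := by norm_num
  have h7 : ‖∑' n, pzTerm n s‖ ≤
      (2 * (|s.im| + 2)) * (2 * (|s.im| + 2)) * (2 * (|s.im| + 2)) * (32 * S) := by
    refine hb2.trans ?_
    gcongr
  have h8 : 1 ≤ (|s.im| + 2) ^ 3 := one_le_pow₀ (by linarith)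
  refine (norm_add_le _ _).trans ?_
  nlinarith

lemma pz_sum_sqrt (N : ℕ) : ∑ n ∈ range N, ((n : ℝ) + 1) ^ (-(1/2) : ℝ) ≤ 2 * Real.sqrt N := by
  induction N with
  | zero => simp
  | succ N ih =>
    rw [sum_range_succ]
    have h0 : (0 : ℝ) ≤ N := N.cast_nonneg
    have e : ((N : ℝ) + 1) ^ (-(1/2) : ℝ) = (Real.sqrt (N + 1))⁻¹ := by
      rw [Real.rpow_neg (by positivity), Real.sqrt_eq_rpow]
    rw [e]
    push_cast
    set a := Real.sqrt N
    set b := Real.sqrt ((N : ℝ) + 1)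
    have ha : a ^ 2 = N := Real.sq_sqrt h0
    have hb : b ^ 2 = N + 1 := Real.sq_sqrt (by positivity)
    have hb0 : 0 < b := Real.sqrt_pos.2 (by positivity)
    have : b⁻¹ ≤ 2 * b - 2 * a := by
      rw [inv_le_iff_one_le_mul₀ hb0]
      nlinarith [sq_nonneg (a - b)]
    linarith

lemma pz_zeta_sqrt : ∃ C > 0, ∀ s : ℂ, 1/2 ≤ s.re → s.re ≤ 2 → 1 ≤ |s.im| →
    ‖riemannZeta s‖ ≤ C * Real.sqrt |s.im| := by
  refine ⟨2 + 32 + 16 * 3 * 4, by positivity, fun s h1 h2 ht => ?_⟩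
  set t := |s.im| with htdef
  have hs1 : s ≠ 1 := by rintro rfl; simp at htdef; linarith
  have hd0 : t ≤ ‖s - 1‖ := by
    have := abs_im_le_norm (s - 1); simpa using this
  have hd : 0 < ‖s - 1‖ := by linarith
  set w := Real.sqrt t with hw
  have hw1 : 1 ≤ w := by rw [hw]; exact Real.one_le_sqrt.2 ht
  have hw2 : w ^ 2 = t := Real.sq_sqrt (by linarith)
  obtain ⟨N, hN1, hN2⟩ : ∃ N : ℕ, t ≤ N ∧ (N : ℝ) ≤ 2 * t :=
    ⟨⌈t⌉₊, Nat.le_ceil _, by linarith [Nat.ceil_lt_add_one (by linarith : 0 ≤ t)]⟩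
  have hNpos : (0 : ℝ) < N := by linarith
  have hns : ‖s‖ ≤ 3 * t := by
    have := norm_le_abs_re_add_abs_im s
    have : |s.re| ≤ 2 := abs_le.2 ⟨by linarith, by linarith⟩
    linarith
  have hns1 : ‖s + 1‖ ≤ 4 * t := (norm_add_le _ _).trans (by simp; linarith)
  -- first range
  have hA : ∀ n : ℕ, ‖pzTerm n s‖ ≤ ‖s - 1‖ * (8 * ((n : ℝ) + 1) ^ (-(1/2) : ℝ)) := by
    intro n
    refine (pzTerm_le_simple n s (by linarith)).trans ?_
    have h := pz_half_rpow n (σ := s.re - 2) (a := -3/2) (by norm_num) (by linarith)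
    have e1 : -(s.re - 2) - 2 = -s.re := by ring
    have e2 : (-(-3/2) - 2 : ℝ) = -(1/2) := by norm_num
    rw [e1, e2] at h
    have h6 : (2 : ℝ) ^ (s.re - 2 + 2) ≤ 4 := by
      calc (2 : ℝ) ^ (s.re - 2 + 2) ≤ (2 : ℝ) ^ (2 : ℝ) :=
            Real.rpow_le_rpow_of_exponent_le (by norm_num) (by linarith)
        _ = 4 := by norm_num
    calc _ ≤ 2 * ‖s - 1‖ * (4 * ((n : ℝ) + 1) ^ (-(1/2) : ℝ)) := by
          gcongr
          refine h.trans ?_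
          gcongr
      _ = _ := by ring
  have hB : ∀ n : ℕ, N ≤ n → ‖pzTerm n s‖ ≤ ‖s - 1‖ * (16 * 12 * t ^ 2 / w * (((n : ℝ) + 1) ^ 2)⁻¹) := by
    intro n hn
    refine (pzTerm_le' n s (a := 1/2) (by norm_num) h1).trans ?_
    have h6 : (2 : ℝ) ^ (s.re + 2) ≤ 16 := by
      calc (2 : ℝ) ^ (s.re + 2) ≤ (2 : ℝ) ^ (4 : ℝ) :=
            Real.rpow_le_rpow_of_exponent_le (by norm_num) (by linarith)
        _ = 16 := by norm_num
    have hn' : (N : ℝ) ≤ n := by exact_mod_cast hn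
    have e : ((n : ℝ) + 1) ^ (-(1/2) - 2 : ℝ) ≤ w⁻¹ * (((n : ℝ) + 1) ^ 2)⁻¹ := by
      rw [Real.rpow_sub (by positivity), div_eq_mul_inv]
      have : ((n : ℝ) + 1) ^ (-(1/2) : ℝ) ≤ w⁻¹ := by
        rw [Real.rpow_neg (by positivity), ← Real.sqrt_eq_rpow]
        exact inv_anti₀ (by linarith) (Real.sqrt_le_sqrt (by linarith))
      have e2 : ((n : ℝ) + 1) ^ (2 : ℝ) = ((n : ℝ) + 1) ^ 2 := by norm_cast
      rw [e2]
      gcongr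
    calc _ ≤ ‖s - 1‖ * (3 * t) * (4 * t) * (16 * (w⁻¹ * (((n : ℝ) + 1) ^ 2)⁻¹)) := by gcongr
      _ = _ := by field_simp; ring
  have hpart : ∀ M : ℕ, N ≤ M → ‖∑ n ∈ range M, pzTerm n s‖ ≤ ‖s - 1‖ * ((32 + 16 * 12) * w) := by
    intro M hM
    refine (norm_sum_le _ _).trans ?_
    rw [← Finset.sum_range_add_sum_Ico _ hM]
    have i1 : ∑ n ∈ range N, ‖pzTerm n s‖ ≤ ‖s - 1‖ * (32 * w) := by
      calc _ ≤ ∑ n ∈ range N, ‖s - 1‖ * (8 * ((n : ℝ) + 1) ^ (-(1/2) : ℝ)) := sum_le_sum (fun n _ => hA n)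
        _ = ‖s - 1‖ * (8 * ∑ n ∈ range N, ((n : ℝ) + 1) ^ (-(1/2) : ℝ)) := by
            rw [← mul_sum, ← mul_sum]
        _ ≤ ‖s - 1‖ * (8 * (2 * (2 * w))) := by
            gcongr
            refine (pz_sum_sqrt N).trans ?_
            gcongr
            rw [Real.sqrt_le_left (by positivity)]
            nlinarith
        _ = _ := by ring
    have i2 : ∑ n ∈ Ico N M, ‖pzTerm n s‖ ≤ ‖s - 1‖ * (16 * 12 * w) := by
      calc _ ≤ ∑ n ∈ Ico N M, ‖s - 1‖ * (16 * 12 * t ^ 2 / w * (((n : ℝ) + 1) ^ 2)⁻¹) :=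
            sum_le_sum (fun n hn => hB n (Finset.mem_Ico.1 hn).1)
        _ = ‖s - 1‖ * (16 * 12 * t ^ 2 / w * ∑ n ∈ Ico N M, (((n : ℝ) + 1) ^ 2)⁻¹) := by
            rw [← mul_sum, ← mul_sum]
        _ ≤ ‖s - 1‖ * (16 * 12 * t ^ 2 / w * t⁻¹) := by
            gcongr
            have h := sum_Ioc_inv_sq_le_sub (α := ℝ) (k := N) (n := M)
              (by rintro rfl; simp at hNpos) hM
            have e : ∑ n ∈ Ico N M, (((n : ℝ) + 1) ^ 2)⁻¹ = ∑ i ∈ Ioc N M, ((i : ℝ) ^ 2)⁻¹ := by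
              rw [Finset.sum_bij (fun a _ => a + 1)]
              · intro a ha; simp at ha ⊢; omega
              · intro a _ b _ h; omega
              · intro b hb; simp at hb
                exact ⟨b - 1, by simp; omega, by omega⟩
              · intro a _; push_cast; rfl
            rw [e]
            refine h.trans ?_
            have : (0 : ℝ) ≤ (M : ℝ)⁻¹ := by positivity
            have : (N : ℝ)⁻¹ ≤ t⁻¹ := by gcongr
            linarith
        _ = _ := by
            rw [← hw2]; field_simp
    linarith
  have hlim : ‖∑' n, pzTerm n s‖ ≤ ‖s - 1‖ * ((32 + 16 * 12) * w) := by
    refine le_of_tendsto (pzTerm_summable s (by linarith)).hasSum.tendsto_sum_nat.norm ?_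
    filter_upwards [Filter.eventually_ge_atTop N] with M hM using hpart M hM
  have hb1 : ‖((1 / 2 : ℝ) : ℂ) ^ (1 - s)‖ ≤ 2 := by
    rw [Complex.norm_cpow_eq_rpow_re_of_pos (by positivity)]
    simp only [sub_re, one_re]
    calc (1 / 2 : ℝ) ^ (1 - s.re) ≤ (1/2 : ℝ) ^ (-1 : ℝ) :=
          Real.rpow_le_rpow_of_exponent_ge (by norm_num) (by norm_num) (by linarith)
      _ = 2 := by rw [Real.rpow_neg (by norm_num)]; norm_num
  have hZ := pzZ_eq (s := s) (by linarith)
  rw [pzZ_of_ne hs1] at hZ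
  have hZn : ‖s - 1‖ * ‖riemannZeta s‖ ≤ ‖s - 1‖ * ((2 + 32 + 16 * 12) * w) := by
    rw [← norm_mul, hZ]
    refine (norm_add_le _ _).trans ?_
    nlinarith
  have := le_of_mul_le_mul_left hZn hd
  linarith


lemma pz_max {f : ℂ → ℂ} (hf : Differentiable ℂ f) {R M : ℝ} (hR : 0 < R)
    (hM : ∀ z, ‖z‖ = R → ‖f z‖ ≤ M) {z : ℂ} (hz : ‖z‖ ≤ R) : ‖f z‖ ≤ M := by
  refine norm_le_of_forall_mem_frontier_norm_le (U := Metric.ball (0:ℂ) R) Metric.isBounded_ball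
    hf.diffContOnCl ?_ ?_
  · intro w hw
    rw [frontier_ball _ hR.ne'] at hw
    exact hM w (by simpa using hw)
  · rw [closure_ball _ hR.ne']; simpa using hz

lemma pz_logderiv_zerofree {f : ℂ → ℂ} (hf : Differentiable ℂ f) {M : ℝ}
    (hM : ∀ z, ‖z‖ ≤ 4/5 → ‖f z‖ ≤ M) (h0 : f 0 ≠ 0)
    (hz : ∀ z, ‖z‖ < 4/5 → f z ≠ 0) {z : ℂ} (hzz : ‖z‖ ≤ 3/4) :
    ‖deriv f z / f z‖ ≤ 2560 * (Real.log (M / ‖f 0‖) + 1) := by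
  have hm : ∀ z, z ∈ Metric.ball (0:ℂ) (4/5) ↔ ‖z‖ < 4/5 := fun z => by simp
  have hO : IsOpen (Metric.ball (0:ℂ) (4/5)) := Metric.isOpen_ball
  have hd : DifferentiableOn ℂ (fun z => deriv f z / f z) (Metric.ball 0 (4/5)) := by
    refine DifferentiableOn.div ?_ hf.differentiableOn (fun z h => hz z ((hm z).1 h))
    exact (hf.differentiableOn.analyticOnNhd isOpen_univ).deriv.differentiableOn.mono (Set.subset_univ _)
  obtain ⟨h, hh0, hh⟩ := hd.isExactOn_ball.with_val_at 0 0
  have hhd : DifferentiableOn ℂ h (Metric.ball 0 (4/5)) := fun z hz =>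
    (hh z hz).differentiableAt.differentiableWithinAt
  have hexp : ∀ w, ‖w‖ < 4/5 → f w = f 0 * exp (h w) := by
    intro w hw
    have hder : ∀ u ∈ Metric.ball (0:ℂ) (4/5), HasDerivAt (fun u => f u * exp (-h u)) 0 u := by
      intro u hu
      have h1 := (hf u).hasDerivAt.mul ((hh u hu).neg.cexp)
      refine h1.congr_deriv ?_
      have := hz u ((hm u).1 hu)
      field_simp
      ring
    have := hO.is_const_of_deriv_eq_zero (convex_ball (0:ℂ) (4/5)).isPreconnected
      (f := fun u => f u * exp (-h u))
      (fun u hu => (hder u hu).differentiableAt.differentiableWithinAt)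
      (fun u hu => (hder u hu).deriv) ((hm w).2 hw) ((hm 0).2 (by simp))
    simp only [hh0, neg_zero, exp_zero, mul_one] at this
    rw [← this, mul_assoc, ← exp_add]; simp
  have hM0 : ‖f 0‖ ≤ M := hM 0 (by simp; norm_num)
  have hf0 : 0 < ‖f 0‖ := norm_pos_iff.2 h0
  set A := Real.log (M / ‖f 0‖) + 1 with hA
  have hA1 : 0 < A := by
    have : 0 ≤ Real.log (M / ‖f 0‖) := Real.log_nonneg ((one_le_div hf0).2 hM0)
    linarith
  have hre : Set.MapsTo h (Metric.ball 0 (4/5)) {z | z.re ≤ A} := by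
    intro w hw
    have h1 := hexp w ((hm w).1 hw)
    have h2 := hM w ((hm w).1 hw).le
    rw [h1, norm_mul, norm_exp] at h2
    have h3 : Real.exp (h w).re ≤ M / ‖f 0‖ := by rw [le_div_iff₀ hf0]; linarith
    have := Real.log_le_log (Real.exp_pos _) h3
    rw [Real.log_exp] at this
    simp only [Set.mem_ofPred_eq]; linarith
  have hbc : ∀ w, ‖w‖ ≤ 31/40 → ‖h w‖ ≤ 64 * A := by
    intro w hw
    have := borelCaratheodory_zero hA1 hhd hre (by norm_num) ((hm w).2 (by linarith)) hh0
    refine this.trans ?_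
    rw [div_le_iff₀ (by linarith)]
    nlinarith [norm_nonneg w]
  have hder : deriv f z / f z = deriv h z := ((hh z ((hm z).2 (by linarith))).deriv).symm
  rw [hder]
  have hb : ∀ w, ‖w - z‖ ≤ 1/40 → ‖w‖ ≤ 31/40 := by
    intro w hw
    have : ‖w‖ ≤ ‖w - z‖ + ‖z‖ := by simpa using norm_add_le (w - z) z
    linarith
  have := norm_deriv_le_of_forall_mem_sphere_norm_le (f := h) (c := z) (R := 1/40) (C := 64 * A)
    (by norm_num) ?_ ?_
  · refine this.trans (le_of_eq ?_); ring
  · refine hhd.diffContOnCl_ball ?_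
    intro w hw
    have := hb w (by simpa [dist_eq_norm] using hw)
    exact (hm w).2 (by linarith)
  · intro w hw
    exact hbc w (hb w (by simpa [dist_eq_norm] using le_of_eq hw))

lemma pz_landau_step {f : ℂ → ℂ} (hf : Differentiable ℂ f) {M : ℝ}
    (hM : ∀ z, ‖z‖ = 17/10 → ‖f z‖ ≤ M) (h0 : f 0 ≠ 0) {z₀ : ℂ} (hz₀ : ‖z₀‖ < 4/5) (hfz : f z₀ = 0) :
    ∃ f₁ : ℂ → ℂ, Differentiable ℂ f₁ ∧ (∀ z, ‖z‖ = 17/10 → ‖f₁ z‖ ≤ 10/9 * M) ∧ f₁ 0 ≠ 0 ∧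
      ‖f 0‖ ≤ 4/5 * ‖f₁ 0‖ ∧ ∀ z, f z = (z - z₀) * f₁ z := by
  have hfac : ∀ z, f z = (z - z₀) * dslope f z₀ z := by
    intro z
    have := sub_smul_dslope f z₀ z
    rw [hfz, sub_zero] at this
    simpa using this.symm
  have hne : dslope f z₀ 0 ≠ 0 := by
    intro h; apply h0; rw [hfac 0, h, mul_zero]
  refine ⟨dslope f z₀, ?_, ?_, hne, ?_, hfac⟩
  · rw [← differentiableOn_univ]
    exact (differentiableOn_dslope Filter.univ_mem).2 hf.differentiableOn
  · intro z hz
    have h1 := hM z hz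
    rw [hfac z, norm_mul] at h1
    have h2 : 9/10 ≤ ‖z - z₀‖ := by
      have := norm_sub_norm_le z z₀
      linarith
    nlinarith [norm_nonneg (dslope f z₀ z)]
  · rw [hfac 0, norm_mul]
    have : ‖0 - z₀‖ < 4/5 := by simpa using hz₀
    nlinarith [norm_nonneg (dslope f z₀ 0)]

lemma pz_landau (N : ℕ) : ∀ {f : ℂ → ℂ} (_ : Differentiable ℂ f) {M : ℝ}
    (_ : ∀ z, ‖z‖ = 17/10 → ‖f z‖ ≤ M) (_ : f 0 ≠ 0) (_ : M ≤ (9/8) ^ N * ‖f 0‖) {b : ℝ}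
    (_ : ∀ z, ‖z‖ < 4/5 → f z = 0 → z.re ≤ b) {z : ℂ} (_ : ‖z‖ ≤ 3/4) (_ : b < z.re),
    -(2560 * (Real.log (M / ‖f 0‖) + 1)) ≤ (deriv f z / f z).re := by
  induction N with
  | zero =>
    intro f hf M hM h0 hMN b hb z hz hzb
    have hf0 : 0 < ‖f 0‖ := norm_pos_iff.2 h0
    have hfree : ∀ z, ‖z‖ < 4/5 → f z ≠ 0 := by
      intro z₀ hz₀ hfz
      obtain ⟨f₁, hf₁, hM₁, h1, h2, h3⟩ := pz_landau_step hf hM h0 hz₀ hfz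
      have := pz_max hf₁ (by norm_num) hM₁ (z := 0) (by simp; norm_num)
      simp at hMN
      linarith
    have := pz_logderiv_zerofree hf (M := M)
      (fun z hz => pz_max hf (by norm_num) hM (by linarith)) h0 hfree hz
    have h2 := abs_re_le_norm (deriv f z / f z)
    linarith [neg_abs_le (deriv f z / f z).re]
  | succ N ih =>
    intro f hf M hM h0 hMN b hb z hz hzb
    have hf0 : 0 < ‖f 0‖ := norm_pos_iff.2 h0
    by_cases hfree : ∀ z, ‖z‖ < 4/5 → f z ≠ 0
    · have := pz_logderiv_zerofree hf (M := M)
        (fun z hz => pz_max hf (by norm_num) hM (by linarith)) h0 hfree hz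
      have h2 := abs_re_le_norm (deriv f z / f z)
      linarith [neg_abs_le (deriv f z / f z).re]
    · push Not at hfree
      obtain ⟨z₀, hz₀, hfz⟩ := hfree
      obtain ⟨f₁, hf₁, hM₁, h1, h2, h3⟩ := pz_landau_step hf hM h0 hz₀ hfz
      have hf10 : 0 < ‖f₁ 0‖ := norm_pos_iff.2 h1
      have hle := pz_max hf₁ (by norm_num) hM₁ (z := 0) (by simp; norm_num)
      have hMpos : 0 < M := by linarith
      have hzn : f z ≠ 0 := fun h => by
        have := hb z (by linarith) h; linarith
      have hz0 : z - z₀ ≠ 0 := fun h => hzn (by rw [h3, h, zero_mul])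
      have hf1z : f₁ z ≠ 0 := fun h => hzn (by rw [h3, h, mul_zero])
      have key := ih hf₁ hM₁ h1 (by
        rw [pow_succ] at hMN
        have : (0:ℝ) < (9/8) ^ N := by positivity
        nlinarith) (b := b) (fun w hw hw0 => hb w hw (by rw [h3, hw0, mul_zero])) hz hzb
      have hder : deriv f z / f z = 1 / (z - z₀) + deriv f₁ z / f₁ z := by
        have : HasDerivAt f (1 * f₁ z + (z - z₀) * deriv f₁ z) z := by
          have h := ((hasDerivAt_id z).sub_const z₀).mul (hf₁ z).hasDerivAt
          have e : f = fun z => (z - z₀) * f₁ z := funext h3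
          rw [e]; exact h
        rw [this.deriv, h3 z]
        field_simp
      rw [hder, add_re]
      have hpos : 0 ≤ (1 / (z - z₀)).re := by
        rw [one_div, inv_re]
        refine div_nonneg ?_ (normSq_nonneg _)
        have := hb z₀ hz₀ hfz
        rw [sub_re]; linarith
      have hlog : Real.log (10/9 * M / ‖f₁ 0‖) ≤ Real.log (M / ‖f 0‖) := by
        refine Real.log_le_log (by positivity) ?_
        rw [div_le_div_iff₀ hf10 hf0]
        nlinarith
      linarith

lemma pz_zeta_lower : ∃ c > 0, ∀ t : ℝ, c ≤ ‖riemannZeta (5/4 + t * I)‖ := by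
  have hre : ∀ t : ℝ, ((5/4 : ℂ) + t * I).re = 5/4 := by intro t; simp
  have hS := (ArithmeticFunction.LSeriesSummable_moebius_iff (s := ((5/4 : ℝ) : ℂ))).2
    (by rw [ofReal_re]; norm_num)
  have hS' := hS.norm
  set B := ∑' n, ‖LSeries.term (fun n => (ArithmeticFunction.moebius n : ℂ)) ((5/4 : ℝ) : ℂ) n‖
  have hB : 0 ≤ B := tsum_nonneg (fun n => norm_nonneg _)
  refine ⟨1 / (B + 1), by positivity, fun t => ?_⟩
  set s : ℂ := 5/4 + t * I with hs
  have h1 : 1 < s.re := by rw [hre]; norm_num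
  have h2 := ArithmeticFunction.LSeries_zeta_mul_Lseries_moebius h1
  rw [ArithmeticFunction.LSeries_zeta_eq_riemannZeta h1] at h2
  have h3 : ‖LSeries (fun n => (ArithmeticFunction.moebius n : ℂ)) s‖ ≤ B := by
    refine tsum_of_norm_bounded hS'.hasSum (fun n => ?_)
    exact LSeries.norm_term_le_of_re_le_re _ (by rw [hre]; simp) n
  have h4 := congrArg norm h2
  rw [norm_mul, norm_one] at h4
  rw [div_le_iff₀ (by positivity)]
  nlinarith [norm_nonneg (riemannZeta s)]

lemma pz_logderiv_upper : ∃ B > 0, ∀ t : ℝ,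
    ‖deriv riemannZeta (5/4 + t * I) / riemannZeta (5/4 + t * I)‖ ≤ B := by
  have hre : ∀ t : ℝ, ((5/4 : ℂ) + t * I).re = 5/4 := by intro t; simp
  have hS := (ArithmeticFunction.LSeriesSummable_vonMangoldt (s := ((5/4 : ℝ) : ℂ)))
    (by rw [ofReal_re]; norm_num)
  have hS' := hS.norm
  set B := ∑' n, ‖LSeries.term (fun n => (ArithmeticFunction.vonMangoldt n : ℂ)) ((5/4 : ℝ) : ℂ) n‖
  have hB : 0 ≤ B := tsum_nonneg (fun n => norm_nonneg _)
  refine ⟨B + 1, by positivity, fun t => ?_⟩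
  set s : ℂ := 5/4 + t * I with hs
  have h1 : 1 < s.re := by rw [hre]; norm_num
  have h2 := ArithmeticFunction.LSeries_vonMangoldt_eq_deriv_riemannZeta_div h1
  have h3 : ‖LSeries (fun n => (ArithmeticFunction.vonMangoldt n : ℂ)) s‖ ≤ B := by
    refine tsum_of_norm_bounded hS'.hasSum (fun n => ?_)
    exact LSeries.norm_term_le_of_re_le_re _ (by rw [hre]; simp) n
  rw [h2, neg_div, norm_neg] at h3
  linarith

lemma pz_pzZ_zero (hRH : RiemannHypothesis) {s : ℂ} (hs : 0 < s.re) (h : pzZ s = 0) : s.re = 1/2 := by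
  have hs1 : s ≠ 1 := by rintro rfl; simp [pzZ_one] at h
  rw [pzZ_of_ne hs1] at h
  have hz : riemannZeta s = 0 := by
    rcases mul_eq_zero.1 h with h | h
    · exact absurd (sub_eq_zero.1 h) hs1
    · exact h
  refine hRH s hz ?_ hs1
  rintro ⟨n, rfl⟩
  have : (-2 * ((n : ℂ) + 1)).re = -2 * (n + 1) := by simp
  rw [this] at hs
  have : (0 : ℝ) ≤ n := n.cast_nonneg
  linarith

lemma pz_landau_pzZ (hRH : RiemannHypothesis) : ∃ C > 0, ∀ s : ℂ, 1/2 < s.re → s.re ≤ 2 →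
    -(C * Real.log (|s.im| + 4)) ≤ (deriv pzZ s / pzZ s).re := by
  obtain ⟨C₁, hC₁, hb⟩ := pzZ_bound
  obtain ⟨c₀, hc₀, hl⟩ := pz_zeta_lower
  set D := |Real.log (C₁ / (c₀ / 4))| with hD
  refine ⟨2560 * (D + 4), by positivity, fun s h1 h2 => ?_⟩
  set τ := s.im with hτ
  set c : ℂ := 5/4 + τ * I with hc
  have hcre : c.re = 5/4 := by simp [hc]
  have hcim : c.im = τ := by simp [hc]
  let f : ℂ → ℂ := fun z => pzZ (c + z)
  have hf : Differentiable ℂ f := pzZ_differentiable.comp (by fun_prop)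
  have hc1 : c ≠ 1 := by intro h; rw [h] at hcre; norm_num at hcre
  set T := |τ| + 4 with hT
  have hT4 : 4 ≤ T := by linarith [abs_nonneg τ]
  have hM : ∀ z, ‖z‖ = 17/10 → ‖f z‖ ≤ C₁ * T ^ 3 := by
    intro z hz
    have hr := abs_re_le_norm z
    have hi := abs_im_le_norm z
    rw [hz] at hr hi
    have := abs_le.1 hr
    refine (hb (c + z) (by rw [add_re, hcre]; linarith) (by rw [add_re, hcre]; linarith)).trans ?_
    gcongr
    rw [add_im, hcim]
    linarith [abs_add_le τ z.im]
  have hf0 : c₀ / 4 ≤ ‖f 0‖ := by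
    simp only [f, add_zero]
    rw [pzZ_of_ne hc1, norm_mul]
    have h5 := hl τ
    have h6 : 1/4 ≤ ‖c - 1‖ := by
      have := re_le_norm (c - 1); rw [sub_re, hcre, one_re] at this; linarith
    nlinarith
  have hf0' : 0 < ‖f 0‖ := by linarith
  obtain ⟨N, hN⟩ := pow_unbounded_of_one_lt (C₁ * T ^ 3 / ‖f 0‖) (show (1:ℝ) < 9/8 by norm_num)
  have hk := pz_landau N hf hM (norm_pos_iff.1 hf0') (by
      rw [div_lt_iff₀ hf0'] at hN; exact hN.le) (b := -3/4) (by
      intro z hz hz0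
      have := abs_le.1 ((abs_re_le_norm z).trans hz.le)
      have := pz_pzZ_zero hRH (s := c + z) (by rw [add_re, hcre]; linarith) hz0
      rw [add_re, hcre] at this; linarith) (z := s - c) (by
      have : s - c = ((s.re - 5/4 : ℝ) : ℂ) := by
        apply Complex.ext <;> simp [hc, hτ]
      rw [this, norm_real, Real.norm_eq_abs, abs_le]
      constructor <;> linarith) (by rw [sub_re, hcre]; linarith)
  have hfz : f (s - c) = pzZ s := by simp [f]
  have hdz : deriv f (s - c) = deriv pzZ s := by
    have := deriv_comp_const_add (f := pzZ) c (s - c)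
    simpa [f] using this
  rw [hfz, hdz] at hk
  have hlog : Real.log (C₁ * T ^ 3 / ‖f 0‖) ≤ D + 3 * Real.log T := by
    calc Real.log (C₁ * T ^ 3 / ‖f 0‖) ≤ Real.log (C₁ / (c₀ / 4) * T ^ 3) := by
          refine Real.log_le_log (by positivity) ?_
          rw [div_mul_eq_mul_div]
          gcongr
      _ = Real.log (C₁ / (c₀ / 4)) + 3 * Real.log T := by
          rw [Real.log_mul (by positivity) (by positivity), Real.log_pow]; norm_num
      _ ≤ _ := by gcongr; exact le_abs_self _
  have hlT : 1 ≤ Real.log T := by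
    rw [Real.le_log_iff_exp_le (by linarith)]
    linarith [Real.exp_one_lt_d9]
  have hD0 : 0 ≤ D := abs_nonneg _
  nlinarith


/-- the logarithmic derivative of zeta -/
noncomputable def pzL : ℂ → ℂ := fun s => deriv riemannZeta s / riemannZeta s

lemma pz_zeta_ne (hRH : RiemannHypothesis) {s : ℂ} (hs : 1/2 < s.re) (hs1 : s ≠ 1) :
    riemannZeta s ≠ 0 := by
  intro h
  have := pz_pzZ_zero hRH (s := s) (by linarith) (by rw [pzZ_of_ne hs1, h, mul_zero])
  linarith

lemma pz_deriv_zeta_diff {s : ℂ} (hs1 : s ≠ 1) : DifferentiableAt ℂ (deriv riemannZeta) s := by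
  have : DifferentiableOn ℂ riemannZeta {1}ᶜ := fun z hz =>
    (differentiableAt_riemannZeta hz).differentiableWithinAt
  exact ((this.analyticOnNhd isOpen_compl_singleton).deriv s hs1).differentiableAt

lemma pzL_diff (hRH : RiemannHypothesis) {s : ℂ} (hs : 1/2 < s.re) (hs1 : s ≠ 1) :
    DifferentiableAt ℂ pzL s :=
  (pz_deriv_zeta_diff hs1).div (differentiableAt_riemannZeta hs1) (pz_zeta_ne hRH hs hs1)

lemma pzL_eq (hRH : RiemannHypothesis) {s : ℂ} (hs : 1/2 < s.re) (hs1 : s ≠ 1) :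
    pzL s = deriv pzZ s / pzZ s - 1 / (s - 1) := by
  have hz := pz_zeta_ne hRH hs hs1
  have h1 : HasDerivAt (fun s => (s - 1) * riemannZeta s)
      (1 * riemannZeta s + (s - 1) * deriv riemannZeta s) s :=
    ((hasDerivAt_id s).sub_const 1).mul (differentiableAt_riemannZeta hs1).hasDerivAt
  have h2 : HasDerivAt pzZ (1 * riemannZeta s + (s - 1) * deriv riemannZeta s) s := by
    refine h1.congr_of_eventuallyEq ?_
    filter_upwards [isOpen_ne.mem_nhds hs1] with z hz using pzZ_of_ne hz
  have h3 : s - 1 ≠ 0 := sub_ne_zero.2 hs1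
  rw [h2.deriv, pzZ_of_ne hs1, pzL]
  field_simp
  ring

lemma pzL_re_lower (hRH : RiemannHypothesis) : ∃ C > 0, ∀ s : ℂ, 1/2 < s.re → s.re ≤ 2 →
    ((s.re < 1) ∨ 1 ≤ |s.im|) → -(C * Real.log (|s.im| + 4)) ≤ (pzL s).re := by
  obtain ⟨C, hC, h⟩ := pz_landau_pzZ hRH
  refine ⟨C + 1, by positivity, fun s h1 h2 h3 => ?_⟩
  have hs1 : s ≠ 1 := by
    rintro rfl
    simp at h3
    norm_num at h3
  have hlT : 1 ≤ Real.log (|s.im| + 4) := by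
    rw [Real.le_log_iff_exp_le (by positivity)]
    linarith [Real.exp_one_lt_d9, abs_nonneg s.im]
  rw [pzL_eq hRH h1 hs1, sub_re]
  have := h s h1 h2
  have h4 : (1 / (s - 1)).re ≤ 1 := by
    rcases h3 with h3 | h3
    · rw [one_div, inv_re]
      refine (div_nonpos_of_nonpos_of_nonneg ?_ (normSq_nonneg _)).trans (by norm_num)
      simp; linarith
    · refine (re_le_norm _).trans ?_
      have := abs_im_le_norm (s - 1)
      simp at this
      rw [one_div, norm_inv]
      exact inv_le_one_of_one_le₀ (by linarith)
  linarith

lemma pz_harnack {f : ℂ → ℂ} {s : ℂ} {R A : ℝ} (hR : 0 < R)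
    (hf : ∀ z, ‖z - s‖ < R → DifferentiableAt ℂ f z) (hA : ∀ z, ‖z - s‖ < R → -A ≤ (f z).re)
    {z : ℂ} (hz : ‖z - s‖ < R) :
    ‖f z - f s‖ ≤ 2 * ((f s).re + A) * ‖z - s‖ / (R - ‖z - s‖) := by
  have h0 : 0 ≤ (f s).re + A := by
    have := hA s (by simpa using hR); linarith
  have key : ∀ ε > 0, ‖f z - f s‖ ≤ 2 * ((f s).re + A + ε) * ‖z - s‖ / (R - ‖z - s‖) := by
    intro ε hε
    have := borelCaratheodory_zero (f := fun w => f s - f (s + w)) (M := (f s).re + A + ε) (R := R)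
      (z := z - s) (by positivity) ?_ ?_ hR (by simpa using hz) (by simp)
    · rw [norm_sub_rev]; simpa using this
    · intro w hw
      have hw' : ‖w‖ < R := by simpa using hw
      refine DifferentiableAt.differentiableWithinAt ?_
      have : DifferentiableAt ℂ (fun w => f (s + w)) w :=
        DifferentiableAt.comp w (hf (s + w) (by simpa using hw')) (by fun_prop)
      exact this.const_sub _
    · intro w hw
      have hw' : ‖w‖ < R := by simpa using hw
      have := hA (s + w) (by simpa using hw')
      simp only [Set.mem_ofPred_eq, sub_re]
      linarith
  have hlim : Filter.Tendsto (fun ε : ℝ => 2 * ((f s).re + A + ε) * ‖z - s‖ / (R - ‖z - s‖))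
      (nhdsWithin 0 (Set.Ioi 0)) (nhds (2 * ((f s).re + A + 0) * ‖z - s‖ / (R - ‖z - s‖))) := by
    refine Filter.Tendsto.mono_left ?_ nhdsWithin_le_nhds
    have : Continuous (fun ε : ℝ => 2 * ((f s).re + A + ε) * ‖z - s‖ / (R - ‖z - s‖)) := by fun_prop
    exact this.tendsto 0
  rw [add_zero] at hlim
  exact ge_of_tendsto hlim (by filter_upwards [self_mem_nhdsWithin] with ε hε using key ε hε)

lemma pz_iter_le {f : ℂ → ℂ} {s : ℂ} {α A : ℝ} (hα : 0 < α)
    (hf : ∀ z, ‖z - s‖ < α → DifferentiableAt ℂ f z) (hA : ∀ z, ‖z - s‖ < α → -A ≤ (f z).re)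
    {n : ℕ} (hn : 1 ≤ n) :
    ‖iteratedDeriv n f s‖ ≤ n.factorial * (2 * ((f s).re + A)) / (α / 2) ^ n := by
  have h0 : 0 ≤ (f s).re + A := by
    have := hA s (by simpa using hα); linarith
  have e : iteratedDeriv n f s = iteratedDeriv n (fun z => f z - f s) s := by
    obtain ⟨m, rfl⟩ := Nat.exists_eq_add_of_le' hn
    rw [iteratedDeriv_succ', iteratedDeriv_succ']
    congr 1
    ext z; rw [deriv_sub_const]
  rw [e]
  refine norm_iteratedDeriv_le_of_forall_mem_sphere_norm_le n (by positivity) ?_ ?_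
  · refine DifferentiableOn.diffContOnCl_ball (U := Metric.ball s α) ?_
      (Metric.closedBall_subset_ball (by linarith))
    intro z hz
    exact ((hf z (by simpa [dist_eq_norm] using hz)).sub_const _).differentiableWithinAt
  · intro z hz
    have hz' : ‖z - s‖ = α / 2 := by simpa [dist_eq_norm] using hz
    have := pz_harnack hα hf hA (z := z) (by linarith)
    rw [hz'] at this
    refine this.trans (le_of_eq ?_)
    field_simp; ring

lemma pz_left_bound (hRH : RiemannHypothesis) {n : ℕ} (hn : 1 ≤ n) :
    ∃ C > 0, ∀ α > 0, α ≤ 1/8 → ∀ s : ℂ, s.re = 1/2 + α →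
    ‖iteratedDeriv n pzL s‖ * ‖riemannZeta s‖ ≤
      C / α ^ n * (‖deriv riemannZeta s‖ + Real.log (|s.im| + 5) * ‖riemannZeta s‖) := by
  obtain ⟨C, hC, h⟩ := pzL_re_lower hRH
  refine ⟨n.factorial * 2 * 2 ^ n * (C + 1), by positivity, fun α hα hα8 s hs => ?_⟩
  set A := C * Real.log (|s.im| + 5) with hA
  have hlT : 0 ≤ Real.log (|s.im| + 5) := Real.log_nonneg (by linarith [abs_nonneg s.im])
  have hre : ∀ z : ℂ, ‖z - s‖ < α → 1/2 < z.re ∧ z.re < 1 := by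
    intro z hz
    have := abs_lt.1 ((abs_re_le_norm (z - s)).trans_lt hz)
    rw [sub_re, hs] at this
    constructor <;> linarith
  have hs1 : s ≠ 1 := by rintro rfl; simp at hs; linarith
  have key := pz_iter_le (f := pzL) (s := s) (A := A) hα (fun z hz => by
      have := hre z hz
      refine pzL_diff hRH this.1 ?_
      rintro rfl; simp at this) (fun z hz => by
      have h1 := hre z hz
      have h2 := h z h1.1 (by linarith) (Or.inl h1.2)
      refine le_trans ?_ h2
      rw [neg_le_neg_iff]
      have h3 := (abs_im_le_norm (z - s)).trans hz.le
      rw [sub_im] at h3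
      have h4 := abs_sub_abs_le_abs_sub z.im s.im
      rw [hA]
      exact mul_le_mul_of_nonneg_left (Real.log_le_log (by positivity) (by linarith)) hC.le) hn
  have hre2 : (pzL s).re * ‖riemannZeta s‖ ≤ ‖deriv riemannZeta s‖ := by
    have hz := pz_zeta_ne hRH (s := s) (by linarith) hs1
    have hz' : 0 < ‖riemannZeta s‖ := norm_pos_iff.2 hz
    have h1 := re_le_norm (pzL s)
    rw [pzL, norm_div, le_div_iff₀ hz'] at h1
    exact h1
  have hz0 := norm_nonneg (riemannZeta s)
  calc _ ≤ n.factorial * (2 * ((pzL s).re + A)) / (α / 2) ^ n * ‖riemannZeta s‖ := by gcongr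
    _ = n.factorial * 2 * 2 ^ n / α ^ n * ((pzL s).re * ‖riemannZeta s‖ + A * ‖riemannZeta s‖) := by
        rw [div_pow]; field_simp
    _ ≤ n.factorial * 2 * 2 ^ n / α ^ n * ((C + 1) * (‖deriv riemannZeta s‖ + Real.log (|s.im| + 5) * ‖riemannZeta s‖)) := by
        gcongr
        rw [hA]
        nlinarith [norm_nonneg (deriv riemannZeta s), mul_nonneg hlT hz0, mul_nonneg hC.le (norm_nonneg (deriv riemannZeta s))]
    _ = _ := by ring

lemma pz_horiz_bound (hRH : RiemannHypothesis) {n : ℕ} (hn : 1 ≤ n) :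
    ∃ C > 0, ∀ α > 0, α ≤ 1/8 → ∀ s : ℂ, 1/2 + α ≤ s.re → s.re ≤ 5/4 → 2 ≤ |s.im| →
    ‖iteratedDeriv n pzL s‖ ≤ C / α ^ (n + 1) * Real.log (|s.im| + 5) := by
  obtain ⟨C, hC, h⟩ := pzL_re_lower hRH
  obtain ⟨B, hB, hBb⟩ := pz_logderiv_upper
  refine ⟨n.factorial * 2 * 2 ^ n * (3 * (C + B)), by positivity, fun α hα hα8 s hs1 hs2 ht => ?_⟩
  set l := Real.log (|s.im| + 5) with hl
  set A := C * l with hA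
  have hlT : 1 ≤ l := by
    rw [hl, Real.le_log_iff_exp_le (by positivity)]
    linarith [Real.exp_one_lt_d9, abs_nonneg s.im]
  have hA0 : 0 < A := by positivity
  have hlow : ∀ z : ℂ, 1/2 < z.re → z.re ≤ 2 → |z.im - s.im| ≤ 1 → -A ≤ (pzL z).re ∧ z ≠ 1 := by
    intro z h1 h2 h3
    have h4 := abs_sub_abs_le_abs_sub z.im s.im
    have h5 := abs_sub_abs_le_abs_sub s.im z.im
    rw [abs_sub_comm] at h5
    constructor
    · refine le_trans ?_ (h z h1 h2 (Or.inr (by linarith)))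
      rw [neg_le_neg_iff, hA, hl]
      exact mul_le_mul_of_nonneg_left (Real.log_le_log (by positivity) (by linarith)) hC.le
    · rintro rfl; simp at h3; linarith
  have key := pz_iter_le (f := pzL) (s := s) (A := A) (α := α) hα (fun z hz => by
      have h1 := abs_lt.1 ((abs_re_le_norm (z - s)).trans_lt hz)
      have h3 := (abs_im_le_norm (z - s)).trans hz.le
      rw [sub_re] at h1
      rw [sub_im] at h3
      exact pzL_diff hRH (by linarith) (hlow z (by linarith) (by linarith) (by linarith)).2) (fun z hz => by
      have h1 := abs_lt.1 ((abs_re_le_norm (z - s)).trans_lt hz)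
      have h3 := (abs_im_le_norm (z - s)).trans hz.le
      rw [sub_re] at h1
      rw [sub_im] at h3
      exact (hlow z (by linarith) (by linarith) (by linarith)).1) hn
  set c : ℂ := 5/4 + s.im * I with hc
  have hcre : c.re = 5/4 := by simp [hc]
  have hcim : c.im = s.im := by simp [hc]
  have hcb := hBb s.im
  have hcb' : ‖pzL c‖ ≤ B := hcb
  have hsc : ‖s - c‖ ≤ 3/4 - α := by
    have : s - c = ((s.re - 5/4 : ℝ) : ℂ) := by
      apply Complex.ext <;> simp [hc]
    rw [this, norm_real, Real.norm_eq_abs, abs_le]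
    constructor <;> linarith
  have hk2 := pz_harnack (f := pzL) (s := c) (R := 3/4) (A := A) (z := s) (by norm_num) (fun z hz => by
      have h1 := abs_lt.1 ((abs_re_le_norm (z - c)).trans_lt hz)
      have h3 := (abs_im_le_norm (z - c)).trans hz.le
      rw [sub_re, hcre] at h1
      rw [sub_im, hcim] at h3
      exact pzL_diff hRH (by linarith) (hlow z (by linarith) (by linarith) (by linarith)).2) (fun z hz => by
      have h1 := abs_lt.1 ((abs_re_le_norm (z - c)).trans_lt hz)
      have h3 := (abs_im_le_norm (z - c)).trans hz.le
      rw [sub_re, hcre] at h1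
      rw [sub_im, hcim] at h3
      exact (hlow z (by linarith) (by linarith) (by linarith)).1) (by linarith)
  have hcr : (pzL c).re ≤ B := (re_le_norm _).trans hcb'
  have hcr0 : 0 ≤ (pzL c).re + A := by
    have := (hlow c (by linarith) (by linarith) (by rw [hcim]; simp)).1
    linarith
  have hk3 : ‖pzL s - pzL c‖ ≤ 2 * (B + A) * (3/4) / α := by
    refine hk2.trans ?_
    have := norm_nonneg (s - c)
    gcongr <;> linarith
  have hre : (pzL s).re + A ≤ 3 * (A + B) / α := by
    have h1 : (pzL s).re ≤ ‖pzL s - pzL c‖ + ‖pzL c‖ :=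
      (re_le_norm _).trans (by simpa using norm_add_le (pzL s - pzL c) (pzL c))
    have h2 : (A + B) ≤ (A + B) * (1/8) / α := by
      rw [le_div_iff₀ hα]
      have : 0 < A + B := by positivity
      nlinarith
    have e1 : 2 * (B + A) * (3/4) / α = (A + B) / α * (3/2) := by ring
    have e2 : (A + B) * (1/8) / α = (A + B) / α * (1/8) := by ring
    have e3 : 3 * (A + B) / α = (A + B) / α * 3 := by ring
    have : 0 < (A + B) / α := by positivity
    linarith
  calc _ ≤ n.factorial * (2 * ((pzL s).re + A)) / (α / 2) ^ n := key
    _ ≤ n.factorial * (2 * (3 * (A + B) / α)) / (α / 2) ^ n := by gcongr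
    _ ≤ n.factorial * (2 * (3 * (C * l + B * l) / α)) / (α / 2) ^ n := by
        gcongr
        nlinarith
    _ = _ := by rw [div_pow]; field_simp; ring

open MeasureTheory


lemma pz_gauss {T : ℝ} (hT : 0 < T) (x : ℝ) :
    ∫ t : ℝ, cexp (I * x * t) * cexp (-((1 / T ^ 2 : ℝ) : ℂ) * t ^ 2)
      = ((Real.sqrt Real.pi * T * Real.exp (-(T ^ 2 * x ^ 2 / 4)) : ℝ) : ℂ) := by
  rw [fourierIntegral_gaussian (b := ((1 / T ^ 2 : ℝ) : ℂ)) (by rw [ofReal_re]; positivity) x]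
  have h1 : ((Real.pi : ℂ) / ((1 / T ^ 2 : ℝ) : ℂ)) ^ (1 / 2 : ℂ) = ((Real.sqrt Real.pi * T : ℝ) : ℂ) := by
    have e : ((Real.pi : ℂ) / ((1 / T ^ 2 : ℝ) : ℂ)) = ((Real.pi * T ^ 2 : ℝ) : ℂ) := by
      push_cast; field_simp
    have e2 : (1 / 2 : ℂ) = ((1/2 : ℝ) : ℂ) := by push_cast; rfl
    rw [e, e2, ← ofReal_cpow (by positivity), ← Real.sqrt_eq_rpow, Real.sqrt_mul (by positivity),
      Real.sqrt_sq hT.le]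
  rw [h1]
  push_cast
  congr 2
  field_simp

lemma pz_mv {X : Type*} [MeasurableSpace X] (μ : Measure X) [SFinite μ] {a : X → ℂ} {θ : X → ℝ}
    (ha : Measurable a) (hθ : Measurable θ) (hai : Integrable a μ) {T S : ℝ} (hT : 0 < T) (hS : 0 ≤ S)
    (hk : ∀ x, ∫⁻ y, ENNReal.ofReal (Real.exp (-(T ^ 2 * (θ y - θ x) ^ 2 / 4))) ∂μ ≤ ENNReal.ofReal S)
    (ha2 : Integrable (fun x => ‖a x‖ ^ 2) μ) :
    Integrable (fun t : ℝ => Real.exp (-(1 / T ^ 2) * t ^ 2) * ‖∫ x, a x * cexp (-(I * θ x * t)) ∂μ‖ ^ 2) ∧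
    ∫ t : ℝ, Real.exp (-(1 / T ^ 2) * t ^ 2) * ‖∫ x, a x * cexp (-(I * θ x * t)) ∂μ‖ ^ 2
      ≤ Real.sqrt Real.pi * T * S * ∫ x, ‖a x‖ ^ 2 ∂μ := by
  let H : ℝ → X × X → ℂ := fun t z => (a z.1 * starRingEnd ℂ (a z.2)) *
    (cexp (I * (θ z.2 - θ z.1 : ℝ) * t) * cexp (-((1 / T ^ 2 : ℝ) : ℂ) * t ^ 2))
  have hmeas : Measurable (Function.uncurry H) := by
    simp only [H, Function.uncurry_def]
    fun_prop
  have hunit : ∀ (x t : ℝ), ‖cexp (I * x * t)‖ = 1 := by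
    intro x t
    rw [show I * (x:ℂ) * t = ((x * t : ℝ) : ℂ) * I by push_cast; ring, norm_exp_ofReal_mul_I]
  have hgn : ∀ t : ℝ, ‖cexp (-((1 / T ^ 2 : ℝ) : ℂ) * t ^ 2)‖ = Real.exp (-(1 / T ^ 2) * t ^ 2) := by
    intro t
    rw [show (-((1 / T ^ 2 : ℝ) : ℂ) * t ^ 2) = ((-(1 / T ^ 2) * t ^ 2 : ℝ) : ℂ) by push_cast; ring,
      ← ofReal_exp, norm_real, Real.norm_of_nonneg (Real.exp_pos _).le]
  have hintg : Integrable (Function.uncurry H) (volume.prod (μ.prod μ)) := by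
    have h1 : Integrable (fun t : ℝ => Real.exp (-(1 / T ^ 2) * t ^ 2)) := integrable_exp_neg_mul_sq (by positivity)
    have h2 : Integrable (fun z : X × X => ‖a z.1‖ * ‖a z.2‖) (μ.prod μ) := hai.norm.mul_prod hai.norm
    refine (h1.mul_prod h2).mono hmeas.aestronglyMeasurable (Filter.Eventually.of_forall ?_)
    rintro ⟨t, x, y⟩
    simp only [Function.uncurry, H, norm_mul, hunit, hgn, RCLike.norm_conj, norm_norm, one_mul]
    rw [Real.norm_of_nonneg (Real.exp_pos _).le]
    exact le_of_eq (by ring)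
  have hF : ∀ t : ℝ, ((Real.exp (-(1 / T ^ 2) * t ^ 2) * ‖∫ x, a x * cexp (-(I * θ x * t)) ∂μ‖ ^ 2 : ℝ) : ℂ)
      = ∫ z, H t z ∂(μ.prod μ) := by
    intro t
    have e1 : ∀ z : X × X, H t z = cexp (-((1 / T ^ 2 : ℝ) : ℂ) * t ^ 2) *
        ((fun x => a x * cexp (-(I * θ x * t))) z.1 * (fun y => starRingEnd ℂ (a y * cexp (-(I * θ y * t)))) z.2) := by
      intro z
      simp only [H, map_mul]
      rw [← exp_conj]
      simp only [map_neg, map_mul, conj_I, conj_ofReal]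
      rw [show I * ((θ z.2 - θ z.1 : ℝ) : ℂ) * t = (-(I * θ z.1 * t)) + (-(-I * θ z.2 * t)) by push_cast; ring, exp_add]
      ring
    rw [integral_congr_ae (Filter.Eventually.of_forall e1), integral_const_mul,
      integral_prod_mul (fun x => a x * cexp (-(I * θ x * t)))
        (fun y => starRingEnd ℂ (a y * cexp (-(I * θ y * t)))), integral_conj, mul_conj]
    rw [show (-((1 / T ^ 2 : ℝ) : ℂ) * t ^ 2) = ((-(1 / T ^ 2) * t ^ 2 : ℝ) : ℂ) by push_cast; ring,
      ← ofReal_exp, normSq_eq_norm_sq]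
    push_cast; rfl
  have hL : ((∫ t : ℝ, Real.exp (-(1 / T ^ 2) * t ^ 2) * ‖∫ x, a x * cexp (-(I * θ x * t)) ∂μ‖ ^ 2 : ℝ) : ℂ)
      = ∫ z, (a z.1 * starRingEnd ℂ (a z.2)) *
        ((Real.sqrt Real.pi * T * Real.exp (-(T ^ 2 * (θ z.2 - θ z.1) ^ 2 / 4)) : ℝ) : ℂ) ∂(μ.prod μ) := by
    rw [← integral_complex_ofReal]
    simp only [hF]
    rw [integral_integral_swap hintg]
    congr 1; ext z
    simp only [H]
    rw [integral_const_mul, pz_gauss hT]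
  set P := Real.sqrt Real.pi * T with hP
  have hP0 : 0 ≤ P := by positivity
  set Q := ∫ x, ‖a x‖ ^ 2 ∂μ with hQ
  have hQ0 : 0 ≤ Q := integral_nonneg (fun x => by positivity)
  set k : X → X → ENNReal := fun x y => ENNReal.ofReal (Real.exp (-(T ^ 2 * (θ y - θ x) ^ 2 / 4))) with hkdef
  have hksymm : ∀ x y, k x y = k y x := by
    intro x y; simp only [hkdef]; congr 3; ring
  have hkm : Measurable (Function.uncurry k) := by
    simp only [hkdef, Function.uncurry_def]
    fun_prop
  have hqe : ∀ x, ENNReal.ofReal (‖a x‖ ^ 2) = ENNReal.ofReal (‖a x‖ ^ 2) := fun x => rfl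
  have hQl : ∫⁻ x, ENNReal.ofReal (‖a x‖ ^ 2) ∂μ = ENNReal.ofReal Q :=
    (ofReal_integral_eq_lintegral_ofReal ha2 (Filter.Eventually.of_forall (fun x => by positivity))).symm
  have hb1 : ∫⁻ z, ENNReal.ofReal (‖a z.1‖ ^ 2) * k z.1 z.2 ∂(μ.prod μ) ≤ ENNReal.ofReal (Q * S) := by
    rw [lintegral_prod _ (by fun_prop)]
    calc _ ≤ ∫⁻ x, ENNReal.ofReal (‖a x‖ ^ 2) * ENNReal.ofReal S ∂μ := by
          refine lintegral_mono (fun x => ?_)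
          simp only
          rw [lintegral_const_mul _ (by fun_prop)]
          gcongr
          exact hk x
      _ = _ := by
          rw [lintegral_mul_const _ (by fun_prop), hQl, ENNReal.ofReal_mul hQ0]
  have hb2 : ∫⁻ z, ENNReal.ofReal (‖a z.2‖ ^ 2) * k z.1 z.2 ∂(μ.prod μ) ≤ ENNReal.ofReal (Q * S) := by
    rw [lintegral_prod_symm _ (by fun_prop)]
    calc _ ≤ ∫⁻ x, ENNReal.ofReal (‖a x‖ ^ 2) * ENNReal.ofReal S ∂μ := by
          refine lintegral_mono (fun x => ?_)
          simp only
          rw [lintegral_const_mul _ (by fun_prop)]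
          gcongr
          refine le_trans (le_of_eq ?_) (hk x)
          congr 1; ext y; exact hksymm y x
      _ = _ := by
          rw [lintegral_mul_const _ (by fun_prop), hQl, ENNReal.ofReal_mul hQ0]
  have hfin : ENNReal.ofReal (∫ t : ℝ, Real.exp (-(1 / T ^ 2) * t ^ 2) * ‖∫ x, a x * cexp (-(I * θ x * t)) ∂μ‖ ^ 2)
      ≤ ENNReal.ofReal (P * S * Q) := by
    set J := ∫ t : ℝ, Real.exp (-(1 / T ^ 2) * t ^ 2) * ‖∫ x, a x * cexp (-(I * θ x * t)) ∂μ‖ ^ 2 with hJ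
    have hJ0 : 0 ≤ J := integral_nonneg (fun t => by positivity)
    have e : ENNReal.ofReal J = ‖(J : ℂ)‖ₑ := by
      rw [← ofReal_norm, norm_real, Real.norm_of_nonneg hJ0]
    rw [e, hL]
    refine (enorm_integral_le_lintegral_enorm _).trans ?_
    calc _ ≤ ∫⁻ z, ENNReal.ofReal (P / 2) * (ENNReal.ofReal (‖a z.1‖ ^ 2) * k z.1 z.2 +
            ENNReal.ofReal (‖a z.2‖ ^ 2) * k z.1 z.2) ∂(μ.prod μ) := by
          refine lintegral_mono (fun z => ?_)
          simp only [hkdef]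
          rw [← ENNReal.ofReal_mul (by positivity), ← ENNReal.ofReal_mul (by positivity),
            ← ENNReal.ofReal_add (by positivity) (by positivity), ← ENNReal.ofReal_mul (by positivity),
            ← ofReal_norm]
          refine ENNReal.ofReal_le_ofReal ?_
          rw [norm_mul, norm_mul, norm_real, RCLike.norm_conj, Real.norm_of_nonneg (by positivity)]
          have := two_mul_le_add_sq ‖a z.1‖ ‖a z.2‖
          set E := Real.exp (-(T ^ 2 * (θ z.2 - θ z.1) ^ 2 / 4))
          have hE : 0 ≤ P * E := mul_nonneg hP0 (Real.exp_pos _).le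
          nlinarith [mul_le_mul_of_nonneg_right this hE]
      _ = ENNReal.ofReal (P / 2) * (∫⁻ z, ENNReal.ofReal (‖a z.1‖ ^ 2) * k z.1 z.2 ∂(μ.prod μ) +
            ∫⁻ z, ENNReal.ofReal (‖a z.2‖ ^ 2) * k z.1 z.2 ∂(μ.prod μ)) := by
          rw [lintegral_const_mul _ (by fun_prop), lintegral_add_left (by fun_prop)]
      _ ≤ ENNReal.ofReal (P / 2) * (ENNReal.ofReal (Q * S) + ENNReal.ofReal (Q * S)) := by gcongr
      _ = _ := by
          rw [← ENNReal.ofReal_add (by positivity) (by positivity), ← ENNReal.ofReal_mul (by positivity)]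
          congr 1; ring
  refine ⟨?_, (ENNReal.ofReal_le_ofReal_iff (by positivity)).1 hfin⟩
  have h1 := hintg.integral_prod_left
  simp only [Function.uncurry_apply_pair, ← hF] at h1
  exact h1.re.congr (Filter.Eventually.of_forall fun t => Complex.ofReal_re _)

lemma pz_mv' {X : Type*} [MeasurableSpace X] (μ : Measure X) [SFinite μ] {a : X → ℂ} {θ : X → ℝ}
    (ha : Measurable a) (hθ : Measurable θ) (hai : Integrable a μ) {T S : ℝ} (hT : 0 < T) (hS : 0 ≤ S)
    (hk : ∀ x, ∫⁻ y, ENNReal.ofReal (Real.exp (-(T ^ 2 * (θ y - θ x) ^ 2 / 4))) ∂μ ≤ ENNReal.ofReal S)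
    (ha2 : Integrable (fun x => ‖a x‖ ^ 2) μ) :
    ∫ t in -T..T, ‖∫ x, a x * cexp (-(I * θ x * t)) ∂μ‖ ^ 2
      ≤ Real.exp 1 * (Real.sqrt Real.pi * T * S * ∫ x, ‖a x‖ ^ 2 ∂μ) := by
  obtain ⟨h1, h2⟩ := pz_mv μ ha hθ hai hT hS hk ha2
  refine le_trans ?_ (mul_le_mul_of_nonneg_left h2 (Real.exp_pos 1).le)
  rw [intervalIntegral.integral_of_le (by linarith), ← integral_const_mul]
  refine le_trans (integral_mono_of_nonneg (Filter.Eventually.of_forall (fun t => by positivity))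
    ((h1.const_mul (Real.exp 1)).integrableOn (s := Set.Ioc (-T) T)) ?_)
    (setIntegral_le_integral (h1.const_mul _) (Filter.Eventually.of_forall (fun t => by positivity)))
  refine (ae_restrict_iff' measurableSet_Ioc).2 (Filter.Eventually.of_forall (fun t ht => ?_))
  simp only
  rw [← mul_assoc, ← Real.exp_add]
  have : 1 ≤ Real.exp (1 + -(1 / T ^ 2) * t ^ 2) := by
    refine Real.one_le_exp ?_
    have h3 : t ^ 2 ≤ T ^ 2 := by
      refine sq_le_sq' ?_ ht.2; linarith [ht.1]
    have : 1 / T ^ 2 * t ^ 2 ≤ 1 := by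
      rw [one_div_mul_eq_div]; exact (div_le_one (by positivity)).2 h3
    linarith
  nlinarith [sq_nonneg ‖∫ x, a x * cexp (-(I * θ x * t)) ∂μ‖]


noncomputable def pzPsi (u : ℝ) : ℝ := Int.fract (Real.exp u) - 1 / 2

lemma pzPsi_meas : Measurable pzPsi := by
  unfold pzPsi; fun_prop

lemma pzPsi_le (u : ℝ) : |pzPsi u| ≤ 1 := by
  unfold pzPsi
  have h1 := Int.fract_nonneg (Real.exp u)
  have h2 := Int.fract_lt_one (Real.exp u)
  rw [abs_le]; constructor <;> linarith

lemma pz_exp_log (s : ℂ) {x : ℝ} (hx : 0 < x) : cexp (-(s * (Real.log x : ℝ))) = (x : ℂ) ^ (-s) := by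
  rw [cpow_def_of_ne_zero (by exact_mod_cast hx.ne'), ofReal_log hx.le]
  congr 1; ring

lemma pz_one_sub (s : ℂ) {x : ℝ} (hx : 0 < x) : (x : ℂ) ^ (1 - s) = x * (x : ℂ) ^ (-s) := by
  rw [sub_eq_add_neg, cpow_add _ _ (by exact_mod_cast hx.ne'), cpow_one]

lemma pz_G (s : ℂ) (A : ℝ) (a b : ℝ) :
    ∫ u in a..b, (s - 1) * s * (((Real.exp u - A : ℝ) : ℂ) * cexp (-(s * u)))
     = (-(Real.exp b * cexp (-(s * b))) - (s - 1) * ((Real.exp b - A) * cexp (-(s * b))))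
      - (-(Real.exp a * cexp (-(s * a))) - (s - 1) * ((Real.exp a - A) * cexp (-(s * a)))) := by
  refine intervalIntegral.integral_eq_sub_of_hasDerivAt
    (f := fun u : ℝ => -((Real.exp u : ℝ) * cexp (-(s * u))) - (s - 1) * (((Real.exp u : ℝ) - A) * cexp (-(s * u)))) ?_ ?_
  · intro u _
    have h1 : HasDerivAt (fun u : ℝ => ((Real.exp u : ℝ) : ℂ)) ((Real.exp u : ℝ) : ℂ) u :=
      (Real.hasDerivAt_exp u).ofReal_comp
    have h2 : HasDerivAt (fun u : ℝ => cexp (-(s * u))) (cexp (-(s * u)) * (-(s * 1))) u := by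
      have h3 : HasDerivAt (fun u : ℝ => -(s * (u : ℂ))) (-(s * 1)) u :=
        ((hasDerivAt_id (u : ℂ)).comp_ofReal.const_mul s).neg
      exact h3.cexp
    refine ((h1.mul h2).neg.sub (((h1.sub_const (A : ℂ)).mul h2).const_mul (s - 1))).congr_deriv ?_
    push_cast; ring
  · apply Continuous.intervalIntegrable
    fun_prop

lemma pzTerm_eq_int (n : ℕ) (s : ℂ) :
    ∫ u in Real.log (n + 1 / 2)..Real.log (n + 3 / 2), (s - 1) * s * ((pzPsi u : ℂ) * cexp (-(s * u)))
      = - pzTerm n s := by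
  have hn : (0 : ℝ) ≤ n := n.cast_nonneg
  have hl1 : Real.log (n + 1 / 2) ≤ Real.log (n + 1) := Real.log_le_log (by positivity) (by linarith)
  have hl2 : Real.log (n + 1) ≤ Real.log (n + 3 / 2) := Real.log_le_log (by positivity) (by linarith)
  have hbd : ∀ a b : ℝ, IntervalIntegrable (fun u : ℝ => (s - 1) * s * ((pzPsi u : ℂ) * cexp (-(s * u)))) volume a b := by
    intro a b
    refine IntervalIntegrable.const_mul ?_ _
    have hc : IntervalIntegrable (fun u : ℝ => cexp (-(s * u))) volume a b :=
      Continuous.intervalIntegrable (by fun_prop) _ _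
    refine hc.mono_fun ?_ ?_
    · exact ((Complex.measurable_ofReal.comp pzPsi_meas).mul (by fun_prop)).aestronglyMeasurable
    · refine Filter.Eventually.of_forall (fun u => ?_)
      simp only [norm_mul, norm_real]
      exact mul_le_of_le_one_left (norm_nonneg _) (pzPsi_le u)
  rw [← intervalIntegral.integral_add_adjacent_intervals (hbd _ (Real.log (n+1))) (hbd _ _)]
  have e1 : ∫ u in Real.log (n + 1 / 2)..Real.log (n + 1), (s - 1) * s * ((pzPsi u : ℂ) * cexp (-(s * u)))
      = ∫ u in Real.log (n + 1 / 2)..Real.log (n + 1), (s - 1) * s * (((Real.exp u - (n + 1/2 : ℝ) : ℝ) : ℂ) * cexp (-(s * u))) := by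
    rw [intervalIntegral.integral_of_le hl1, intervalIntegral.integral_of_le hl1,
      integral_Ioc_eq_integral_Ioo, integral_Ioc_eq_integral_Ioo]
    refine setIntegral_congr_fun measurableSet_Ioo (fun u hu => ?_)
    have h1 := (Real.log_lt_iff_lt_exp (by positivity)).1 hu.1
    have h2 := (Real.lt_log_iff_exp_lt (by positivity)).1 hu.2
    have h3 : ⌊Real.exp u⌋ = (n : ℤ) := by
      rw [Int.floor_eq_iff]; push_cast; constructor <;> linarith
    have : pzPsi u = Real.exp u - (n + 1/2 : ℝ) := by
      unfold pzPsi; rw [Int.fract, h3]; push_cast; ring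
    simp only [this]
  have e2 : ∫ u in Real.log (n + 1)..Real.log (n + 3 / 2), (s - 1) * s * ((pzPsi u : ℂ) * cexp (-(s * u)))
      = ∫ u in Real.log (n + 1)..Real.log (n + 3 / 2), (s - 1) * s * (((Real.exp u - (n + 3/2 : ℝ) : ℝ) : ℂ) * cexp (-(s * u))) := by
    rw [intervalIntegral.integral_of_le hl2, intervalIntegral.integral_of_le hl2,
      integral_Ioc_eq_integral_Ioo, integral_Ioc_eq_integral_Ioo]
    refine setIntegral_congr_fun measurableSet_Ioo (fun u hu => ?_)
    have h1 := (Real.log_lt_iff_lt_exp (by positivity)).1 hu.1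
    have h2 := (Real.lt_log_iff_exp_lt (by positivity)).1 hu.2
    have h3 : ⌊Real.exp u⌋ = ((n + 1 : ℕ) : ℤ) := by
      rw [Int.floor_eq_iff]; push_cast; constructor <;> linarith
    have : pzPsi u = Real.exp u - (n + 3/2 : ℝ) := by
      unfold pzPsi; rw [Int.fract, h3]; push_cast; ring
    simp only [this]
  rw [e1, e2, pz_G, pz_G, Real.exp_log (by positivity), Real.exp_log (by positivity), Real.exp_log (by positivity),
    pz_exp_log s (by positivity), pz_exp_log s (by positivity), pz_exp_log s (by positivity)]
  unfold pzTerm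
  rw [pz_one_sub s (by positivity), pz_one_sub s (by positivity)]
  push_cast
  ring

lemma pz_R_int (s : ℂ) (hs : 0 < s.re) (a : ℝ) :
    IntegrableOn (fun u : ℝ => (pzPsi u : ℂ) * cexp (-(s * u))) (Set.Ioi a) := by
  have h := exp_neg_integrableOn_Ioi a hs
  refine Integrable.mono h ?_ ?_
  · exact ((Complex.measurable_ofReal.comp pzPsi_meas).mul (by fun_prop)).aestronglyMeasurable
  · refine Filter.Eventually.of_forall (fun u => ?_)
    simp only [norm_mul, norm_real, norm_exp]
    have : (-(s * u)).re = -s.re * u := by simp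
    rw [this, Real.norm_of_nonneg (Real.exp_pos _).le]
    exact mul_le_of_le_one_left (Real.exp_pos _).le (pzPsi_le u)

lemma pz_tail (s : ℂ) (hs : 0 < s.re) (N : ℕ) :
    ∑' n, pzTerm (n + N) s = - ((s - 1) * s * ∫ u in Set.Ioi (Real.log (N + 1 / 2)), (pzPsi u : ℂ) * cexp (-(s * u))) := by
  have hsum : Summable (fun n => pzTerm (n + N) s) :=
    (summable_nat_add_iff N).2 (pzTerm_summable s (by linarith))
  have h1 := hsum.tendsto_sum_tsum_nat
  have hI : IntegrableOn (fun u : ℝ => (s - 1) * s * ((pzPsi u : ℂ) * cexp (-(s * u)))) (Set.Ioi (Real.log (N + 1/2))) :=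
    Integrable.const_mul (pz_R_int s hs (Real.log (N + 1/2))) ((s - 1) * s)
  have hlim : Filter.Tendsto (fun m : ℕ => Real.log (((m + N : ℕ) : ℝ) + 1 / 2)) Filter.atTop Filter.atTop := by
    refine Real.tendsto_log_atTop.comp ?_
    refine Filter.tendsto_atTop_add_const_right _ _ ?_
    exact tendsto_natCast_atTop_atTop.comp (Filter.tendsto_add_atTop_nat N)
  have h2 := intervalIntegral_tendsto_integral_Ioi _ hI hlim
  have h3 : ∀ m : ℕ, ∫ u in Real.log (N + 1 / 2)..Real.log (((m + N : ℕ) : ℝ) + 1 / 2), (s - 1) * s * ((pzPsi u : ℂ) * cexp (-(s * u)))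
      = - ∑ n ∈ range m, pzTerm (n + N) s := by
    intro m
    have := intervalIntegral.sum_integral_adjacent_intervals (μ := volume) (a := fun m : ℕ => Real.log (((m + N : ℕ) : ℝ) + 1 / 2))
      (f := fun u : ℝ => (s - 1) * s * ((pzPsi u : ℂ) * cexp (-(s * u)))) (n := m) (fun k _ => ?_)
    · simp only [zero_add] at this
      rw [← this, ← sum_neg_distrib]
      refine sum_congr rfl (fun k _ => ?_)
      rw [← pzTerm_eq_int]
      congr 2; push_cast; ring
    · have hb : ∀ j : ℕ, Real.log (N + 1/2) ≤ Real.log (((j + N : ℕ) : ℝ) + 1 / 2) := fun j =>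
        Real.log_le_log (by positivity) (by push_cast; linarith [(Nat.cast_nonneg j : (0:ℝ) ≤ j)])
      rw [intervalIntegrable_iff]
      refine hI.mono_set ?_
      intro u hu
      exact lt_of_le_of_lt (le_min (hb _) (hb _)) hu.1
  simp only [h3] at h2
  have := tendsto_nhds_unique h1.neg h2
  rw [integral_const_mul] at this
  rw [← this, neg_neg]

lemma pz_zeta_formula (s : ℂ) (hs : 0 < s.re) (hs1 : s ≠ 1) (N : ℕ) :
    riemannZeta s = ∑ n ∈ range N, (((n : ℝ) + 1 : ℝ) : ℂ) ^ (-s) + (((N : ℝ) + 1 / 2 : ℝ) : ℂ) ^ (1 - s) / (s - 1)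
      - s * ∫ u in Set.Ioi (Real.log (N + 1 / 2)), (pzPsi u : ℂ) * cexp (-(s * u)) := by
  have h0 : s - 1 ≠ 0 := sub_ne_zero.2 hs1
  have h1 : pzZ s = (s - 1) * riemannZeta s := pzZ_of_ne hs1
  have h2 := pzZ_eq (s := s) (by linarith)
  rw [← (pzTerm_summable s (by linarith)).sum_add_tsum_nat_add N, pz_tail s hs N] at h2
  have h3 : ∑ n ∈ range N, pzTerm n s = (s - 1) * ∑ n ∈ range N, (((n : ℝ) + 1 : ℝ) : ℂ) ^ (-s)
      + ((((N : ℝ) + 1 / 2 : ℝ) : ℂ) ^ (1 - s) - ((1 / 2 : ℝ) : ℂ) ^ (1 - s)) := by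
    have := sum_range_sub (fun n : ℕ => (((n : ℝ) + 1 / 2 : ℝ) : ℂ) ^ (1 - s)) N
    simp only [Nat.cast_zero, zero_add] at this
    rw [← this, mul_sum, ← sum_add_distrib]
    refine sum_congr rfl (fun n _ => ?_)
    unfold pzTerm
    rw [show (n : ℝ) + 3 / 2 = ((n + 1 : ℕ) : ℝ) + 1 / 2 by push_cast; ring]
    ring
  rw [h3, h1] at h2
  apply mul_left_cancel₀ h0
  rw [h2, mul_sub, mul_add, mul_div_cancel₀ _ h0]
  ring


lemma pz_ksum : Summable (fun k : ℤ => Real.exp (-((k : ℝ) ^ 2 / 4))) := by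
  have h1 : Summable (fun k : ℤ => 4 * (1 / (k : ℝ) ^ 2) + (if k = 0 then (1:ℝ) else 0)) :=
    ((Real.summable_one_div_int_pow.2 (by norm_num)).mul_left 4).add (hasSum_ite_eq 0 1).summable
  refine Summable.of_nonneg_of_le (fun k => (Real.exp_pos _).le) (fun k => ?_) h1
  by_cases hk : k = 0
  · simp [hk]
  · simp only [hk, if_false, add_zero]
    have hk2 : (0:ℝ) < (k:ℝ) ^ 2 := by positivity
    rw [Real.exp_neg]
    have := Real.add_one_le_exp ((k : ℝ) ^ 2 / 4)
    rw [show 4 * (1 / (k:ℝ) ^ 2) = ((k:ℝ)^2/4)⁻¹ by field_simp]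
    exact inv_anti₀ (by positivity) (by linarith)

lemma pz_logdiff {N : ℕ} {x y : ℕ} (hx : x < N) (hy : y < N) :
    ((y : ℝ) - x) ^ 2 ≤ (N : ℝ) ^ 2 * (Real.log (y + 1) - Real.log (x + 1)) ^ 2 := by
  wlog h : x ≤ y generalizing x y
  · have := this hy hx (le_of_not_ge h)
    nlinarith
  have hx' : (x : ℝ) + 1 ≤ N := by exact_mod_cast hx
  have hy' : (y : ℝ) + 1 ≤ N := by exact_mod_cast hy
  have h' : (x : ℝ) ≤ y := by exact_mod_cast h
  have hx0 : (0:ℝ) ≤ x := x.cast_nonneg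
  have h1 : 1 - ((y + 1) / (x + 1) : ℝ)⁻¹ ≤ Real.log ((y + 1) / (x + 1)) :=
    Real.one_sub_inv_le_log_of_pos (by positivity)
  rw [Real.log_div (by positivity) (by positivity), inv_div] at h1
  have h2 : ((y:ℝ) - x) ≤ N * (Real.log (y + 1) - Real.log (x + 1)) := by
    have h3 : 1 - ((x:ℝ) + 1) / (y + 1) = (y - x) / (y + 1) := by field_simp; ring
    rw [h3, div_le_iff₀ (by positivity)] at h1
    have h4 : 0 ≤ Real.log (y + 1) - Real.log (x + 1) :=
      sub_nonneg.2 (Real.log_le_log (by positivity) (by linarith))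
    nlinarith
  rw [← mul_pow]
  exact pow_le_pow_left₀ (by linarith) h2 2

lemma pz_D : ∃ C > 0, ∀ N : ℕ, 1 ≤ N → ∀ σ : ℝ, 1/2 ≤ σ →
    ∫ t in -(N:ℝ)..N, ‖∑ n ∈ range N, (((n : ℝ) + 1 : ℝ) : ℂ) ^ (-((σ:ℂ) + t * I))‖ ^ 2
      ≤ C * N * (1 + Real.log N) := by
  set S := ∑' k : ℤ, Real.exp (-((k : ℝ) ^ 2 / 4)) with hSdef
  have hS : 0 < S := pz_ksum.tsum_pos (fun k => (Real.exp_pos _).le) 0 (Real.exp_pos _)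
  refine ⟨Real.exp 1 * (Real.sqrt Real.pi * S), by positivity, fun N hN σ hσ => ?_⟩
  have hN0 : (0:ℝ) < N := by exact_mod_cast hN
  have key := pz_mv' (X := Fin N) Measure.count (a := fun x => (((((x : ℕ) : ℝ) + 1) ^ (-σ) : ℝ) : ℂ))
    (θ := fun x => Real.log (((x : ℕ) : ℝ) + 1)) (measurable_of_finite _) (measurable_of_finite _)
    (Integrable.of_finite) hN0 hS.le ?_ (Integrable.of_finite)
  · have e1 : ∀ t : ℝ, (∫ x : Fin N, (((((x : ℕ) : ℝ) + 1) ^ (-σ) : ℝ) : ℂ) * cexp (-(I * (Real.log (((x : ℕ) : ℝ) + 1) : ℝ) * t)) ∂Measure.count)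
        = ∑ n ∈ range N, (((n : ℝ) + 1 : ℝ) : ℂ) ^ (-((σ:ℂ) + t * I)) := by
      intro t
      rw [integral_count, Finset.sum_range]
      refine sum_congr rfl (fun x _ => ?_)
      have hp : (0:ℝ) < ((x:ℕ):ℝ) + 1 := by positivity
      rw [← pz_exp_log _ hp, Real.rpow_def_of_pos hp, ofReal_exp, ← Complex.exp_add]
      congr 1; push_cast; ring
    simp only [e1] at key
    refine key.trans ?_
    rw [integral_count]
    have h2 : ∑ x : Fin N, ‖(((((x : ℕ) : ℝ) + 1) ^ (-σ) : ℝ) : ℂ)‖ ^ 2 ≤ 1 + Real.log N := by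
      have h3 := harmonic_le_one_add_log N
      refine le_trans ?_ h3
      rw [harmonic]
      push_cast
      rw [Finset.sum_range]
      refine sum_le_sum (fun x _ => ?_)
      have hp : (1:ℝ) ≤ ((x:ℕ):ℝ) + 1 := by linarith [(Nat.cast_nonneg (x:ℕ) : (0:ℝ) ≤ (x:ℕ))]
      rw [norm_real, Real.norm_of_nonneg (by positivity), ← Real.rpow_natCast, ← Real.rpow_mul (by positivity),
        ← Real.rpow_neg_one]
      refine Real.rpow_le_rpow_of_exponent_le hp ?_
      push_cast; linarith
    calc _ ≤ Real.exp 1 * (Real.sqrt Real.pi * N * S * (1 + Real.log N)) := by gcongr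
      _ = _ := by ring
  · intro x
    rw [lintegral_count, tsum_fintype, ← ENNReal.ofReal_sum_of_nonneg (fun _ _ => (Real.exp_pos _).le)]
    refine ENNReal.ofReal_le_ofReal ?_
    calc _ ≤ ∑ y : Fin N, Real.exp (-((((((y:ℕ):ℤ) - ((x:ℕ):ℤ) : ℤ)) : ℝ) ^ 2 / 4)) := by
          refine sum_le_sum (fun y _ => Real.exp_le_exp.2 ?_)
          have := pz_logdiff x.2 y.2
          push_cast
          linarith
      _ = ∑ k ∈ (univ : Finset (Fin N)).image (fun y : Fin N => ((y:ℕ):ℤ) - ((x:ℕ):ℤ)), Real.exp (-((k : ℝ) ^ 2 / 4)) := by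
          rw [sum_image]
          intro y _ z _ h
          simp only at h
          exact Fin.ext (by omega)
      _ ≤ S := pz_ksum.sum_le_tsum _ (fun k _ => (Real.exp_pos _).le)

lemma pz_R (N : ℕ) (hN : 1 ≤ N) (σ : ℝ) (hσ : 1/2 ≤ σ) :
    ∫ t in -(N:ℝ)..N, ‖∫ u in Set.Ioi (Real.log (N + 1 / 2)), (pzPsi u : ℂ) * cexp (-(((σ:ℂ) + t * I) * u))‖ ^ 2
      ≤ 2 * Real.exp 1 * Real.pi / N := by
  have hN0 : (0:ℝ) < N := by exact_mod_cast hN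
  have hintg : ∀ r : ℝ, 0 < r → IntegrableOn (fun u : ℝ => Real.exp (-r * u)) (Set.Ioi (Real.log (N + 1 / 2))) :=
    fun r hr => exp_neg_integrableOn_Ioi _ hr
  have hle : ∀ u : ℝ, ‖(pzPsi u : ℂ) * cexp (-((σ:ℂ) * u))‖ ≤ Real.exp (-σ * u) := by
    intro u
    simp only [norm_mul, norm_real, norm_exp]
    have : (-((σ:ℂ) * u)).re = -σ * u := by simp
    rw [this]
    exact mul_le_of_le_one_left (Real.exp_pos _).le (pzPsi_le u)
  have hle2 : ∀ u : ℝ, ‖(pzPsi u : ℂ) * cexp (-((σ:ℂ) * u))‖ ^ 2 ≤ Real.exp (-(2 * σ) * u) := by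
    intro u
    refine (pow_le_pow_left₀ (norm_nonneg _) (hle u) 2).trans (le_of_eq ?_)
    rw [← Real.exp_nat_mul]; congr 1; push_cast; ring
  have hm : Measurable (fun u : ℝ => (pzPsi u : ℂ) * cexp (-((σ:ℂ) * u))) :=
    (Complex.measurable_ofReal.comp pzPsi_meas).mul (by fun_prop)
  have hi2 : Integrable (fun u : ℝ => ‖(pzPsi u : ℂ) * cexp (-((σ:ℂ) * u))‖ ^ 2) (volume.restrict (Set.Ioi (Real.log (N + 1 / 2)))) := by
    refine Integrable.mono (hintg (2 * σ) (by linarith)) (hm.norm.pow_const 2).aestronglyMeasurable (Filter.Eventually.of_forall fun u => ?_)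
    rw [Real.norm_of_nonneg (by positivity), Real.norm_of_nonneg (Real.exp_pos _).le]
    exact hle2 u
  have key := pz_mv' (volume.restrict (Set.Ioi (Real.log (N + 1 / 2)))) (a := fun u : ℝ => (pzPsi u : ℂ) * cexp (-((σ:ℂ) * u)))
    (θ := fun u => u) hm measurable_id
    (Integrable.mono (hintg σ (by linarith)) hm.aestronglyMeasurable (Filter.Eventually.of_forall fun u => by
      rw [Real.norm_of_nonneg (Real.exp_pos _).le]; exact hle u)) hN0 (S := 2 * Real.sqrt Real.pi / N) (by positivity) ?_ hi2
  · have e1 : ∀ t u : ℝ, (pzPsi u : ℂ) * cexp (-((σ:ℂ) * u)) * cexp (-(I * u * t)) = (pzPsi u : ℂ) * cexp (-(((σ:ℂ) + t * I) * u)) := by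
      intro t u
      rw [mul_assoc, ← Complex.exp_add]; congr 2; ring
    simp only [e1] at key
    refine key.trans ?_
    have hQ : ∫ u in Set.Ioi (Real.log (N + 1 / 2)), ‖(pzPsi u : ℂ) * cexp (-((σ:ℂ) * u))‖ ^ 2 ≤ 1 / N := by
      refine (integral_mono hi2 (hintg (2 * σ) (by linarith)) hle2).trans ?_
      rw [integral_exp_mul_Ioi (by linarith), neg_div_neg_eq, mul_comm, ← Real.rpow_def_of_pos (by positivity)]
      have h1 : ((N:ℝ) + 1/2) ^ (-(2*σ)) ≤ 1 / N := by
        calc ((N:ℝ) + 1/2) ^ (-(2*σ)) ≤ (N:ℝ) ^ (-(2*σ)) := Real.rpow_le_rpow_of_nonpos hN0 (by linarith) (by linarith)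
          _ ≤ (N:ℝ) ^ (-1:ℝ) := Real.rpow_le_rpow_of_exponent_le (by exact_mod_cast hN) (by linarith)
          _ = 1 / N := by rw [Real.rpow_neg_one, one_div]
      refine (div_le_self (by positivity) (by linarith)).trans h1
    calc _ ≤ Real.exp 1 * (Real.sqrt Real.pi * N * (2 * Real.sqrt Real.pi / N) * (1 / N)) := by gcongr
      _ = 2 * Real.exp 1 * (Real.sqrt Real.pi * Real.sqrt Real.pi) / N := by field_simp
      _ = _ := by rw [Real.mul_self_sqrt Real.pi_pos.le]
  · intro x
    refine (setLIntegral_le_lintegral _ _).trans ?_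
    have hg : Integrable (fun y : ℝ => Real.exp (-((N:ℝ) ^ 2 * (y - x) ^ 2 / 4))) := by
      have := (integrable_exp_neg_mul_sq (b := (N:ℝ)^2/4) (by positivity)).comp_sub_right x
      refine this.congr (Filter.Eventually.of_forall fun y => ?_)
      simp only; congr 1; ring
    rw [← ofReal_integral_eq_lintegral_ofReal hg (Filter.Eventually.of_forall fun y => (Real.exp_pos _).le)]
    refine ENNReal.ofReal_le_ofReal (le_of_eq ?_)
    have e : (fun y : ℝ => Real.exp (-((N:ℝ) ^ 2 * (y - x) ^ 2 / 4))) = fun y => (fun z : ℝ => Real.exp (-((N:ℝ)^2/4) * z ^ 2)) (y - x) := by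
      ext y; simp only; congr 1; ring
    rw [e, integral_sub_right_eq_self (fun z : ℝ => Real.exp (-((N:ℝ)^2/4) * z ^ 2)) x, integral_gaussian,
      Real.sqrt_div Real.pi_pos.le, show (N:ℝ)^2/4 = (N/2)^2 by ring, Real.sqrt_sq (by positivity)]
    field_simp

lemma pz_P (N : ℕ) (hN : 1 ≤ N) (σ : ℝ) (hσ : 1/2 ≤ σ) (hσ' : σ ≤ 3/4) :
    ∫ t in -(N:ℝ)..N, ‖(((N : ℝ) + 1 / 2 : ℝ) : ℂ) ^ (1 - ((σ:ℂ) + t * I)) / (((σ:ℂ) + t * I) - 1)‖ ^ 2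
      ≤ 32 * Real.pi * N := by
  have hN1 : (1:ℝ) ≤ N := by exact_mod_cast hN
  have hle : ∀ t : ℝ, ‖(((N : ℝ) + 1 / 2 : ℝ) : ℂ) ^ (1 - ((σ:ℂ) + t * I)) / (((σ:ℂ) + t * I) - 1)‖ ^ 2
      ≤ 32 * N * (1 + t ^ 2)⁻¹ := by
    intro t
    rw [norm_div, Complex.norm_cpow_eq_rpow_re_of_pos (by positivity), div_pow, ← Real.rpow_natCast, ← Real.rpow_mul (by positivity)]
    have h1 : ‖((σ:ℂ) + t * I) - 1‖ ^ 2 = (1 - σ) ^ 2 + t ^ 2 := by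
      rw [← normSq_eq_norm_sq, normSq_apply]; simp; ring
    have h2 : (1 + t ^ 2) / 16 ≤ ‖((σ:ℂ) + t * I) - 1‖ ^ 2 := by
      rw [h1]; nlinarith [sq_nonneg t]
    have h3 : ((N:ℝ) + 1/2) ^ ((1 - ((σ:ℂ) + t * I)).re * (2:ℕ)) ≤ 2 * N := by
      calc _ ≤ ((N:ℝ) + 1/2) ^ (1:ℝ) := by
            refine Real.rpow_le_rpow_of_exponent_le (by linarith) ?_
            simp; linarith
        _ ≤ _ := by rw [Real.rpow_one]; linarith
    calc _ ≤ (2 * N) / ((1 + t ^ 2) / 16) := by gcongr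
      _ = _ := by field_simp; ring
  have hi : Integrable (fun t : ℝ => 32 * (N:ℝ) * (1 + t ^ 2)⁻¹) := integrable_inv_one_add_sq.const_mul _
  rw [intervalIntegral.integral_of_le (by linarith)]
  refine (integral_mono_of_nonneg (Filter.Eventually.of_forall fun t => by positivity) hi.integrableOn
    (Filter.Eventually.of_forall hle)).trans ?_
  refine (setIntegral_le_integral hi (Filter.Eventually.of_forall fun t => by positivity)).trans ?_
  rw [integral_const_mul, integral_univ_inv_one_add_sq]
  exact le_of_eq (by ring)

lemma pz_moment2 : ∃ C > 0, ∀ N : ℕ, 1 ≤ N → ∀ σ : ℝ, 1/2 ≤ σ → σ ≤ 3/4 →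
    ∫ t in -(N:ℝ)..N, ‖riemannZeta ((σ:ℂ) + t * I)‖ ^ 2 ≤ C * N * (1 + Real.log N) := by
  obtain ⟨C, hC, hD⟩ := pz_D
  refine ⟨3 * (C + 32 * Real.pi + 4 * Real.exp 1 * Real.pi), by positivity, fun N hN σ h1 h2 => ?_⟩
  have hN1 : (1:ℝ) ≤ N := by exact_mod_cast hN
  have hN0 : (N:ℝ) ≠ 0 := by positivity
  have hre : ∀ t : ℝ, ((σ:ℂ) + t * I).re = σ := by intro t; simp
  have hne1 : ∀ t : ℝ, ((σ:ℂ) + t * I) ≠ 1 := by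
    intro t h; have := hre t; rw [h] at this; simp at this; linarith
  have hne0 : ∀ t : ℝ, ((σ:ℂ) + t * I) ≠ 0 := by
    intro t h; have := hre t; rw [h] at this; simp at this; linarith
  set D : ℝ → ℂ := fun t => ∑ n ∈ range N, (((n : ℝ) + 1 : ℝ) : ℂ) ^ (-((σ:ℂ) + t * I)) with hDd
  set P : ℝ → ℂ := fun t => (((N : ℝ) + 1 / 2 : ℝ) : ℂ) ^ (1 - ((σ:ℂ) + t * I)) / (((σ:ℂ) + t * I) - 1) with hPd
  set R : ℝ → ℂ := fun t => ∫ u in Set.Ioi (Real.log (N + 1 / 2)), (pzPsi u : ℂ) * cexp (-(((σ:ℂ) + t * I) * u)) with hRd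
  have hf : ∀ t : ℝ, riemannZeta ((σ:ℂ) + t * I) = D t + P t - ((σ:ℂ) + t * I) * R t := fun t =>
    pz_zeta_formula _ (by rw [hre]; linarith) (hne1 t) N
  have hcz : Continuous (fun t : ℝ => riemannZeta ((σ:ℂ) + t * I)) := by
    refine continuous_iff_continuousAt.2 fun t => ?_
    exact ContinuousAt.comp (f := fun t : ℝ => (σ:ℂ) + t * I) (differentiableAt_riemannZeta (hne1 t)).continuousAt (by fun_prop)
  have hcp : ∀ (x : ℝ) (w : ℝ → ℂ), 0 < x → Continuous w → Continuous (fun t => (x:ℂ) ^ (w t)) := by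
    intro x w hx hw
    exact hw.const_cpow (Or.inl (by exact_mod_cast hx.ne'))
  have hcD : Continuous D := continuous_finsetSum _ (fun n _ => hcp _ _ (by positivity) (by fun_prop))
  have hcP : Continuous P := (hcp _ _ (by positivity) (by fun_prop)).div (by fun_prop) (fun t => sub_ne_zero.2 (hne1 t))
  have hcR : Continuous R := by
    have : R = fun t => (D t + P t - riemannZeta ((σ:ℂ) + t * I)) / ((σ:ℂ) + t * I) := by
      ext t; rw [hf t, eq_div_iff (hne0 t)]; ring
    rw [this]
    exact ((hcD.add hcP).sub hcz).div (by fun_prop) hne0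
  have iD : IntervalIntegrable (fun t => ‖D t‖ ^ 2) volume (-(N:ℝ)) N := (hcD.norm.pow 2).intervalIntegrable _ _
  have iP : IntervalIntegrable (fun t => ‖P t‖ ^ 2) volume (-(N:ℝ)) N := (hcP.norm.pow 2).intervalIntegrable _ _
  have iR : IntervalIntegrable (fun t => ‖R t‖ ^ 2) volume (-(N:ℝ)) N := (hcR.norm.pow 2).intervalIntegrable _ _
  have hmono : ∫ t in -(N:ℝ)..N, ‖riemannZeta ((σ:ℂ) + t * I)‖ ^ 2
      ≤ ∫ t in -(N:ℝ)..N, 3 * (‖D t‖ ^ 2 + ‖P t‖ ^ 2 + 2 * N ^ 2 * ‖R t‖ ^ 2) := by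
    refine intervalIntegral.integral_mono_on (by linarith) ((hcz.norm.pow 2).intervalIntegrable _ _)
      (((iD.add iP).add (iR.const_mul _)).const_mul _) (fun t ht => ?_)
    rw [hf t]
    have hs : ‖(σ:ℂ) + t * I‖ ^ 2 ≤ 2 * N ^ 2 := by
      rw [← normSq_eq_norm_sq, normSq_apply]; simp
      nlinarith [ht.1, ht.2]
    have h4 : ‖D t + P t - ((σ:ℂ) + t * I) * R t‖ ≤ ‖D t‖ + ‖P t‖ + ‖(σ:ℂ) + t * I‖ * ‖R t‖ := by
      refine (norm_sub_le _ _).trans ?_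
      rw [norm_mul]
      gcongr
      exact norm_add_le _ _
    set a := ‖D t‖
    set b := ‖P t‖
    set d := ‖(σ:ℂ) + t * I‖
    set r := ‖R t‖
    calc _ ≤ (a + b + d * r) ^ 2 := pow_le_pow_left₀ (norm_nonneg _) h4 2
      _ ≤ 3 * (a ^ 2 + b ^ 2 + d ^ 2 * r ^ 2) := by
          nlinarith [sq_nonneg (a - b), sq_nonneg (a - d * r), sq_nonneg (b - d * r)]
      _ ≤ _ := by gcongr
  refine hmono.trans ?_
  rw [intervalIntegral.integral_const_mul, intervalIntegral.integral_add (iD.add iP) (iR.const_mul _),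
    intervalIntegral.integral_add iD iP, intervalIntegral.integral_const_mul]
  have kD := hD N hN σ h1
  have kP := pz_P N hN σ h1 h2
  have kR := pz_R N hN σ h1
  have hl : 0 ≤ Real.log N := Real.log_nonneg hN1
  calc _ ≤ 3 * (C * N * (1 + Real.log N) + 32 * Real.pi * N + 2 * N ^ 2 * (2 * Real.exp 1 * Real.pi / N)) := by
        gcongr
    _ = 3 * (C * N * (1 + Real.log N) + 32 * Real.pi * N + 4 * Real.exp 1 * Real.pi * N) := by field_simp; ring
    _ ≤ _ := by
        have h5 : 0 ≤ (32 * Real.pi + 4 * Real.exp 1 * Real.pi) * N * Real.log N := by positivity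
        nlinarith


lemma pz_cont_zeta (σ : ℝ) (hσ : σ ≠ 1) : Continuous (fun t : ℝ => riemannZeta ((σ:ℂ) + t * I)) := by
  refine continuous_iff_continuousAt.2 fun t => ?_
  refine ContinuousAt.comp (f := fun t : ℝ => (σ:ℂ) + t * I) (differentiableAt_riemannZeta ?_).continuousAt (by fun_prop)
  intro h
  have : ((σ:ℂ) + t * I).re = σ := by simp
  rw [h] at this; simp at this; exact hσ this.symm

lemma pz_cont_dzeta (σ : ℝ) (hσ : σ ≠ 1) : Continuous (fun t : ℝ => deriv riemannZeta ((σ:ℂ) + t * I)) := by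
  refine continuous_iff_continuousAt.2 fun t => ?_
  refine ContinuousAt.comp (f := fun t : ℝ => (σ:ℂ) + t * I) (pz_deriv_zeta_diff ?_).continuousAt (by fun_prop)
  intro h
  have : ((σ:ℂ) + t * I).re = σ := by simp
  rw [h] at this; simp at this; exact hσ this.symm

lemma pz_m1 : ∃ C > 0, ∀ N : ℕ, 1 ≤ N → ∀ σ : ℝ, 1/2 ≤ σ → σ ≤ 3/4 →
    ∫ t in -(N:ℝ)..N, ‖riemannZeta ((σ:ℂ) + t * I)‖ ≤ C * N * Real.sqrt (1 + Real.log N) := by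
  obtain ⟨C, hC, h⟩ := pz_moment2
  refine ⟨1 + C / 2, by positivity, fun N hN σ h1 h2 => ?_⟩
  have hN1 : (1:ℝ) ≤ N := by exact_mod_cast hN
  have hl : 0 ≤ Real.log N := Real.log_nonneg hN1
  set l := Real.sqrt (1 + Real.log N) with hld
  have hl0 : 0 < l := Real.sqrt_pos.2 (by linarith)
  have hl2 : l ^ 2 = 1 + Real.log N := Real.sq_sqrt (by linarith)
  have hc := (pz_cont_zeta σ (by linarith)).norm
  have i2 : IntervalIntegrable (fun t : ℝ => ‖riemannZeta ((σ:ℂ) + t * I)‖ ^ 2) volume (-(N:ℝ)) N :=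
    (hc.pow 2).intervalIntegrable _ _
  have hm : ∫ t in -(N:ℝ)..N, ‖riemannZeta ((σ:ℂ) + t * I)‖
      ≤ ∫ t in -(N:ℝ)..N, (l / 2 + (1 / (2 * l)) * ‖riemannZeta ((σ:ℂ) + t * I)‖ ^ 2) := by
    refine intervalIntegral.integral_mono_on (by linarith) (hc.intervalIntegrable _ _)
      (intervalIntegrable_const.add (i2.const_mul _)) (fun t _ => ?_)
    set x := ‖riemannZeta ((σ:ℂ) + t * I)‖
    have : l / 2 + (1 / (2 * l)) * x ^ 2 - x = (l - x) ^ 2 / (2 * l) := by field_simp; ring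
    have h3 : 0 ≤ (l - x) ^ 2 / (2 * l) := by positivity
    linarith
  refine hm.trans ?_
  rw [intervalIntegral.integral_add intervalIntegrable_const (i2.const_mul _), intervalIntegral.integral_const_mul,
    intervalIntegral.integral_const, smul_eq_mul]
  have hh := h N hN σ h1 h2
  rw [← hl2] at hh
  calc _ ≤ ((N:ℝ) - -N) * (l / 2) + 1 / (2 * l) * (C * N * l ^ 2) := by gcongr
    _ = _ := by field_simp; ring

set_option maxHeartbeats 1000000 in
lemma pz_m1d : ∃ C > 0, ∀ N : ℕ, 1 ≤ N → ∀ α : ℝ, 0 < α → α ≤ 1/8 →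
    ∫ t in -(N:ℝ)..N, ‖deriv riemannZeta (((1/2 + α : ℝ):ℂ) + t * I)‖
      ≤ C / α * N * Real.sqrt (1 + Real.log (N + 1)) := by
  obtain ⟨C, hC, h⟩ := pz_m1
  refine ⟨4 * C, by positivity, fun N hN α ha ha' => ?_⟩
  have hN1 : (1:ℝ) ≤ N := by exact_mod_cast hN
  set r := α / 2 with hr
  have hr0 : 0 < r := by positivity
  set σ := 1/2 + α with hσ
  set B := C * (N + 1 : ℝ) * Real.sqrt (1 + Real.log (N + 1)) with hB
  let F : ℝ → ℝ → ℝ := fun t θ => ‖riemannZeta (circleMap ((σ:ℂ) + t * I) r θ)‖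
  have hcm : ∀ t θ : ℝ, circleMap ((σ:ℂ) + t * I) r θ = ((σ + r * Real.cos θ : ℝ) : ℂ) + ((t + r * Real.sin θ : ℝ) : ℂ) * I := by
    intro t θ
    rw [circleMap, exp_mul_I]; push_cast; ring
  have hre : ∀ θ, 1/2 ≤ σ + r * Real.cos θ ∧ σ + r * Real.cos θ ≤ 3/4 := by
    intro θ
    have := Real.neg_one_le_cos θ; have := Real.cos_le_one θ
    constructor <;> nlinarith
  have hne : ∀ t θ : ℝ, circleMap ((σ:ℂ) + t * I) r θ ≠ 1 := by
    intro t θ hh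
    rw [hcm] at hh
    have := congrArg Complex.re hh
    simp only [add_re, ofReal_re, mul_re, I_re, mul_zero, ofReal_im, I_im, zero_mul, sub_zero, add_zero, one_re] at this
    linarith [(hre θ).2]
  have hFc : Continuous (Function.uncurry F) := by
    refine continuous_iff_continuousAt.2 fun z => ?_
    refine (ContinuousAt.comp (f := fun z : ℝ × ℝ => circleMap ((σ:ℂ) + z.1 * I) r z.2) (g := riemannZeta) (differentiableAt_riemannZeta (hne z.1 z.2)).continuousAt ?_).norm
    unfold circleMap; fun_prop
  have hpt : ∀ t : ℝ, ‖deriv riemannZeta ((σ:ℂ) + t * I)‖ ≤ 1 / (2 * Real.pi * r) * ∫ θ in 0..2 * Real.pi, F t θ := by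
    intro t
    have hd : DifferentiableOn ℂ riemannZeta (Metric.closedBall ((σ:ℂ) + t * I) r) := by
      intro z hz
      refine (differentiableAt_riemannZeta ?_).differentiableWithinAt
      rintro rfl
      rw [Metric.mem_closedBall, dist_eq_norm] at hz
      have h3 := (abs_re_le_norm _).trans hz
      simp only [sub_re, one_re, add_re, ofReal_re, mul_re, I_re, mul_zero, ofReal_im, I_im, zero_mul, sub_zero, add_zero] at h3
      have := (abs_le.1 h3).2
      linarith
    have h4 := hd.deriv_eq_smul_circleIntegral hr0
    have h5 : ‖∮ z in C((σ:ℂ) + t * I, r), (1 / (z - ((σ:ℂ) + t * I)) ^ 2) • riemannZeta z‖ ≤ (1 / r) * ∫ θ in 0..2 * Real.pi, F t θ := by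
      rw [circleIntegral]
      refine (intervalIntegral.norm_integral_le_integral_norm Real.two_pi_pos.le).trans ?_
      rw [← intervalIntegral.integral_const_mul]
      refine le_of_eq (intervalIntegral.integral_congr fun θ _ => ?_)
      simp only [F, deriv_circleMap, norm_smul, norm_mul, norm_I, norm_circleMap_zero, circleMap_sub_center, norm_div, norm_one, norm_pow, abs_of_pos hr0]
      field_simp
    rw [h4, norm_smul] at h5
    have e : ‖(2 * Real.pi * I : ℂ)‖ = 2 * Real.pi := by simp [abs_of_pos Real.pi_pos]
    rw [e] at h5
    have hpi := Real.pi_pos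
    rw [show 1 / (2 * Real.pi * r) = (1 / r) / (2 * Real.pi) by field_simp, div_mul_eq_mul_div, le_div_iff₀ (by positivity)]
    linarith
  have hin : ∀ θ : ℝ, ∫ t in -(N:ℝ)..N, F t θ ≤ B := by
    intro θ
    simp only [F, hcm]
    have e := intervalIntegral.integral_comp_add_right (a := -(N:ℝ)) (b := N) (fun t : ℝ => ‖riemannZeta (((σ + r * Real.cos θ : ℝ) : ℂ) + (t:ℂ) * I)‖) (r * Real.sin θ)
    rw [e]
    have hs1 := Real.neg_one_le_sin θ; have hs2 := Real.sin_le_one θ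
    have hh := h (N + 1) (by omega) (σ + r * Real.cos θ) (hre θ).1 (hre θ).2
    push_cast at hh
    refine le_trans ?_ (hh.trans (le_of_eq hB.symm))
    push_cast
    have hcz := (pz_cont_zeta (σ + r * Real.cos θ) (by linarith [(hre θ).2])).norm
    push_cast at hcz
    refine intervalIntegral.integral_mono_interval (by nlinarith) (by nlinarith) (by nlinarith)
      (Filter.Eventually.of_forall fun t => norm_nonneg _) (hcz.intervalIntegrable _ _)
  have hcI : Continuous (fun t : ℝ => ∫ θ in 0..2 * Real.pi, F t θ) :=
    intervalIntegral.continuous_parametric_intervalIntegral_of_continuous' hFc _ _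
  have hcI2 : Continuous (fun θ : ℝ => ∫ t in -(N:ℝ)..N, F t θ) :=
    intervalIntegral.continuous_parametric_intervalIntegral_of_continuous' (f := fun θ t => F t θ) (hFc.comp continuous_swap) _ _
  have hcd := (pz_cont_dzeta σ (by linarith)).norm
  calc _ ≤ ∫ t in -(N:ℝ)..N, 1 / (2 * Real.pi * r) * ∫ θ in 0..2 * Real.pi, F t θ :=
        intervalIntegral.integral_mono_on (by linarith) (hcd.intervalIntegrable _ _)
          ((continuous_const.mul hcI).intervalIntegrable _ _) (fun t _ => hpt t)
    _ = 1 / (2 * Real.pi * r) * ∫ θ in 0..2 * Real.pi, ∫ t in -(N:ℝ)..N, F t θ := by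
        rw [intervalIntegral.integral_const_mul, intervalIntegral_intervalIntegral_swap]
        refine (hFc.continuousOn.integrableOn_compact (isCompact_uIcc.prod isCompact_uIcc)).mono_set
          (Set.prod_mono Set.uIoc_subset_uIcc Set.uIoc_subset_uIcc)
    _ ≤ 1 / (2 * Real.pi * r) * ∫ θ in 0..2 * Real.pi, B := by
        have hpi := Real.pi_pos
        refine mul_le_mul_of_nonneg_left ?_ (by positivity)
        exact intervalIntegral.integral_mono_on (by positivity) (hcI2.intervalIntegrable _ _)
          intervalIntegrable_const (fun t _ => hin t)
    _ = 2 / α * B := by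
        have hpi := Real.pi_pos
        rw [intervalIntegral.integral_const, smul_eq_mul, hr]; field_simp; ring
    _ ≤ 2 / α * (C * (2 * N) * Real.sqrt (1 + Real.log (N + 1))) := by
        rw [hB]; gcongr; linarith
    _ = _ := by ring

lemma pz_dyadic {f : ℝ → ℝ} (hf : Continuous f) (h0 : ∀ t, 0 ≤ f t) {B : ℝ} (K : ℕ)
    (h : ∀ k ≤ K, ∫ t in -((2:ℝ)^k)..2^k, f t ≤ B * 2 ^ k) :
    ∫ t in -((2:ℝ)^K)..2^K, f t / (1 + |t|) ≤ B * (1 + 2 * K) := by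
  have hg : Continuous (fun t => f t / (1 + |t|)) := hf.div (by fun_prop) (fun t => by positivity)
  induction K with
  | zero =>
    have := h 0 le_rfl
    simp only [pow_zero, mul_one] at this
    simp only [pow_zero, Nat.cast_zero, mul_zero, add_zero, mul_one]
    refine le_trans ?_ this
    refine intervalIntegral.integral_mono_on (by norm_num) (hg.intervalIntegrable _ _) (hf.intervalIntegrable _ _) (fun t _ => ?_)
    exact div_le_self (h0 t) (by linarith [abs_nonneg t])
  | succ K ih =>
    have ih' := ih (fun k hk => h k (by omega))
    have hK := h (K + 1) le_rfl
    set b : ℝ := 2 ^ K with hb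
    have hb0 : 0 < b := by positivity
    have e2 : (2:ℝ) ^ (K + 1) = 2 * b := by rw [pow_succ, hb]; ring
    rw [e2] at hK ⊢
    have i1 : ∀ x y : ℝ, IntervalIntegrable f volume x y := fun x y => hf.intervalIntegrable _ _
    have i2 : ∀ x y : ℝ, IntervalIntegrable (fun t => f t / (1 + |t|)) volume x y := fun x y => hg.intervalIntegrable _ _
    have s1 := intervalIntegral.integral_add_adjacent_intervals (i1 (-(2*b)) (-b)) (i1 (-b) (2*b))
    have s2 := intervalIntegral.integral_add_adjacent_intervals (i1 (-b) b) (i1 b (2*b))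
    have s3 := intervalIntegral.integral_add_adjacent_intervals (i2 (-(2*b)) (-b)) (i2 (-b) (2*b))
    have s4 := intervalIntegral.integral_add_adjacent_intervals (i2 (-b) b) (i2 b (2*b))
    have hle : ∀ t, b ≤ |t| → f t / (1 + |t|) ≤ (1 / b) * f t := by
      intro t ht
      rw [one_div_mul_eq_div]
      exact div_le_div_of_nonneg_left (h0 t) hb0 (by linarith)
    have l1 : ∫ t in -(2*b)..(-b), f t / (1 + |t|) ≤ (1/b) * ∫ t in -(2*b)..(-b), f t := by
      rw [← intervalIntegral.integral_const_mul]
      refine intervalIntegral.integral_mono_on (by linarith) (i2 _ _) ((i1 _ _).const_mul _) (fun t ht => hle t ?_)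
      rw [abs_of_nonpos (by linarith [ht.2])]; linarith [ht.2]
    have l2 : ∫ t in b..(2*b), f t / (1 + |t|) ≤ (1/b) * ∫ t in b..(2*b), f t := by
      rw [← intervalIntegral.integral_const_mul]
      refine intervalIntegral.integral_mono_on (by linarith) (i2 _ _) ((i1 _ _).const_mul _) (fun t ht => hle t ?_)
      rw [abs_of_nonneg (by linarith [ht.1])]; exact ht.1
    have l3 : 0 ≤ ∫ t in (-b)..b, f t := intervalIntegral.integral_nonneg (by linarith) (fun t _ => h0 t)
    have l4 : (1/b) * (∫ t in -(2*b)..(-b), f t) + (1/b) * (∫ t in b..(2*b), f t) ≤ 2 * B := by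
      rw [← mul_add, one_div_mul_eq_div, div_le_iff₀ hb0]
      linarith
    push_cast
    linarith

lemma pz_left_int : ∃ C > 0, ∀ α : ℝ, 0 < α → α ≤ 1/8 → ∀ V : ℝ, 1 ≤ V →
    ∫ t in -V..V, (‖deriv riemannZeta (((1/2 + α : ℝ):ℂ) + t * I)‖ + Real.log (|t| + 5) * ‖riemannZeta (((1/2 + α : ℝ):ℂ) + t * I)‖)
        / (1 + |t|) ≤ C * (1 / α + Real.log (V + 5)) * Real.sqrt (Real.log (V + 5)) * Real.log (V + 5) := by
  obtain ⟨C1, hC1, h1⟩ := pz_m1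
  obtain ⟨C2, hC2, h2⟩ := pz_m1d
  refine ⟨(C2 + 2 * C1) * 2 * 9, by positivity, fun α ha ha' V hV => ?_⟩
  obtain ⟨n, hn1, hn2⟩ := exists_nat_pow_near hV (by norm_num : (1:ℝ) < 2)
  set K := n + 1 with hK
  set σ := 1/2 + α with hσ
  set l := Real.log (V + 5) with hl
  have hl1 : 1 ≤ l := by
    rw [hl, Real.le_log_iff_exp_le (by linarith)]
    have := Real.exp_one_lt_d9; linarith
  have hKV : (2:ℝ) ^ K ≤ 2 * V := by rw [hK, pow_succ]; linarith
  have hlog2 : Real.log (2 * V + 5) ≤ 2 * l := by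
    rw [hl, two_mul (Real.log (V+5)), ← Real.log_mul (by linarith) (by linarith)]
    exact Real.log_le_log (by linarith) (by nlinarith)
  have hKl : (K:ℝ) ≤ 4 * l := by
    have h3 : K * Real.log 2 ≤ 2 * l := by
      rw [← Real.log_pow]
      exact (Real.log_le_log (by positivity) (by linarith)).trans hlog2
    have := Real.log_two_gt_d9
    nlinarith [(Nat.cast_nonneg K : (0:ℝ) ≤ K)]
  have hcd := (pz_cont_dzeta σ (by linarith)).norm
  have hcz := (pz_cont_zeta σ (by linarith)).norm
  have hcl : Continuous (fun t : ℝ => Real.log (|t| + 5)) :=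
    Continuous.log (by fun_prop) (fun t => by positivity)
  set f : ℝ → ℝ := fun t => ‖deriv riemannZeta ((σ:ℂ) + t * I)‖ + Real.log (|t| + 5) * ‖riemannZeta ((σ:ℂ) + t * I)‖ with hfd
  have hf : Continuous f := hcd.add (hcl.mul hcz)
  have hlogn : ∀ t : ℝ, 0 ≤ Real.log (|t| + 5) := fun t => Real.log_nonneg (by linarith [abs_nonneg t])
  have hf0 : ∀ t, 0 ≤ f t := fun t => add_nonneg (norm_nonneg _) (mul_nonneg (hlogn t) (norm_nonneg _))
  have hg : Continuous (fun t => f t / (1 + |t|)) := hf.div (by fun_prop) (fun t => by positivity)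
  set B := (C2 / α + 2 * l * C1) * (2 * Real.sqrt l) with hB
  have hsq : ∀ x : ℝ, 1 ≤ x → x ≤ 2 * V + 5 → Real.sqrt (1 + Real.log x) ≤ 2 * Real.sqrt l := by
    intro x hx hx'
    rw [show (2:ℝ) = Real.sqrt 4 by rw [show (4:ℝ) = 2^2 by norm_num, Real.sqrt_sq (by norm_num)], ← Real.sqrt_mul (by norm_num)]
    refine Real.sqrt_le_sqrt ?_
    have := (Real.log_le_log (by linarith) hx').trans hlog2
    linarith
  have hdy := pz_dyadic hf hf0 (B := B) K (fun k hk => by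
    have hkK : (2:ℝ)^k ≤ 2 ^ K := pow_le_pow_right₀ (by norm_num) hk
    have hk1 : (1:ℝ) ≤ 2 ^ k := one_le_pow₀ (by norm_num)
    have a1 := h1 (2 ^ k) Nat.one_le_two_pow σ (by linarith) (by linarith)
    have a2 := h2 (2 ^ k) Nat.one_le_two_pow α ha ha'
    push_cast at a1 a2
    rw [hfd]
    have hm : ∫ t in -((2:ℝ)^k)..2^k, f t ≤ ∫ t in -((2:ℝ)^k)..2^k, (‖deriv riemannZeta ((σ:ℂ) + t * I)‖ + 2 * l * ‖riemannZeta ((σ:ℂ) + t * I)‖) := by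
      refine intervalIntegral.integral_mono_on (by linarith) (hf.intervalIntegrable _ _) ((hcd.add (continuous_const.mul hcz)).intervalIntegrable _ _) (fun t ht => ?_)
      have h5 : Real.log (|t| + 5) ≤ 2 * l := by
        have := abs_le.2 ht
        exact (Real.log_le_log (by positivity) (by linarith)).trans hlog2
      simp only [hfd]
      have := mul_le_mul_of_nonneg_right h5 (norm_nonneg (riemannZeta ((σ:ℂ) + t * I)))
      linarith
    refine hm.trans ?_
    rw [intervalIntegral.integral_add (hcd.intervalIntegrable _ _) (IntervalIntegrable.const_mul (hcz.intervalIntegrable _ _) _), intervalIntegral.integral_const_mul]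
    have b1 := hsq (2^k) hk1 (by linarith)
    have b2 := hsq (2^k + 1) (by linarith) (by linarith)
    have a1' : ∫ t in -((2:ℝ)^k)..2^k, ‖riemannZeta ((σ:ℂ) + t * I)‖ ≤ C1 * 2 ^ k * (2 * Real.sqrt l) :=
      a1.trans (mul_le_mul_of_nonneg_left b1 (by positivity))
    have a2' : ∫ t in -((2:ℝ)^k)..2^k, ‖deriv riemannZeta ((σ:ℂ) + t * I)‖ ≤ C2 / α * 2 ^ k * (2 * Real.sqrt l) := by
      refine le_trans ?_ (mul_le_mul_of_nonneg_left b2 (by positivity))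
      simpa [hσ] using a2
    have hl0 : 0 ≤ 2 * l := by linarith
    have := mul_le_mul_of_nonneg_left a1' hl0
    rw [hB]
    calc _ ≤ C2 / α * 2 ^ k * (2 * Real.sqrt l) + 2 * l * (C1 * 2 ^ k * (2 * Real.sqrt l)) := add_le_add a2' this
      _ = _ := by ring)
  have hV2 : V ≤ 2 ^ K := hn2.le
  calc _ ≤ ∫ t in -((2:ℝ)^K)..2^K, f t / (1 + |t|) :=
        intervalIntegral.integral_mono_interval (by linarith) (by linarith) hV2
          (Filter.Eventually.of_forall fun t => div_nonneg (hf0 t) (by positivity)) (hg.intervalIntegrable _ _)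
    _ ≤ B * (1 + 2 * K) := hdy
    _ ≤ B * (9 * l) := by
        refine mul_le_mul_of_nonneg_left (by linarith) ?_
        rw [hB]; positivity
    _ ≤ ((C2 + 2 * C1) * (1 / α + l)) * (2 * Real.sqrt l) * (9 * l) := by
        rw [hB]
        gcongr ?_ * _ * _
        have : 0 ≤ 1 / α := by positivity
        rw [div_eq_mul_one_div C2 α]
        nlinarith
    _ = _ := by ring


/-- boundary integral over the rectangle `[a,b] × [-V,V]` -/
noncomputable def pzRect (a b V : ℝ) (f : ℂ → ℂ) : ℂ :=
  (∫ x in a..b, f (x + ((-V : ℝ) : ℂ) * I)) - (∫ x in a..b, f (x + (V : ℂ) * I))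
    + I * (∫ y in -V..V, f ((b : ℂ) + y * I)) - I * (∫ y in -V..V, f ((a : ℂ) + y * I))

lemma pzRect_zero {a b V : ℝ} {f : ℂ → ℂ} (hab : a ≤ b)
    (h : ∀ s : ℂ, a ≤ s.re → DifferentiableAt ℂ f s) : pzRect a b V f = 0 := by
  have := integral_boundary_rect_eq_zero_of_differentiableOn f (a + (-V : ℝ) * I) (b + V * I) (by
    intro s hs
    refine (h s ?_).differentiableWithinAt
    have := hs.1
    simp only [add_re, ofReal_re, mul_re, I_re, mul_zero, ofReal_im, I_im, zero_mul, sub_zero, add_zero,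
      Set.mem_preimage, Set.uIcc_of_le hab] at this
    exact this.1)
  simp only [add_re, ofReal_re, mul_re, I_re, mul_zero, ofReal_im, I_im, sub_zero, add_zero,
    add_im, mul_im, mul_one, zero_add, smul_eq_mul] at this
  exact this

/-- points of the closed half plane `Re s ≥ a`, with `1` removed -/
def pzU (a : ℝ) : Set ℂ := {s | a ≤ s.re ∧ s ≠ 1}

section
variable {a b V : ℝ} {f g : ℂ → ℂ}

lemma pz_side_h (hab : a ≤ b) {v : ℝ} (hv : v ≠ 0) (hf : ContinuousOn f (pzU a)) :
    IntervalIntegrable (fun x : ℝ => f (x + (v : ℂ) * I)) volume a b := by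
  apply ContinuousOn.intervalIntegrable
  refine hf.comp (by fun_prop) (fun x hx => ?_)
  rw [Set.uIcc_of_le hab] at hx
  refine ⟨by simpa using hx.1, fun h => hv ?_⟩
  have := congrArg Complex.im h
  simpa using this

lemma pz_side_v {c : ℝ} (hac : a ≤ c) (hc : c ≠ 1) (hf : ContinuousOn f (pzU a)) :
    IntervalIntegrable (fun y : ℝ => f ((c:ℂ) + y * I)) volume (-V) V := by
  apply ContinuousOn.intervalIntegrable
  refine hf.comp (by fun_prop) (fun y _ => ?_)
  refine ⟨by simpa using hac, fun h => hc ?_⟩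
  have := congrArg Complex.re h
  simpa using this

lemma pzRect_add (ha : a < 1) (hb : 1 < b) (hV : 0 < V) (hf : ContinuousOn f (pzU a)) (hg : ContinuousOn g (pzU a)) :
    pzRect a b V (fun s => f s + g s) = pzRect a b V f + pzRect a b V g := by
  have hab : a ≤ b := by linarith
  unfold pzRect
  rw [intervalIntegral.integral_add (pz_side_h hab (by linarith) hf) (pz_side_h hab (by linarith) hg),
    intervalIntegral.integral_add (pz_side_h hab (by linarith) hf) (pz_side_h hab (by linarith) hg),
    intervalIntegral.integral_add (pz_side_v hab (by linarith) hf) (pz_side_v hab (by linarith) hg),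
    intervalIntegral.integral_add (pz_side_v le_rfl (by linarith) hf) (pz_side_v le_rfl (by linarith) hg)]
  ring

lemma pzRect_mul (c : ℂ) : pzRect a b V (fun s => c * f s) = c * pzRect a b V f := by
  unfold pzRect
  simp only [intervalIntegral.integral_const_mul]
  ring

lemma pzRect_sum (ha : a < 1) (hb : 1 < b) (hV : 0 < V) (F : ℕ → ℂ → ℂ) (n : ℕ)
    (hf : ∀ k, ContinuousOn (F k) (pzU a)) :
    pzRect a b V (fun s => ∑ k ∈ range n, F k s) = ∑ k ∈ range n, pzRect a b V (F k) := by
  induction n with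
  | zero => simp [pzRect]
  | succ n ih =>
    simp only [sum_range_succ]
    rw [pzRect_add ha hb hV (continuousOn_finsetSum _ (fun k _ => hf k)) (hf n), ih]

lemma pzRect_congr (ha : a < 1) (hb : 1 < b) (hV : 0 < V) (h : ∀ s ∈ pzU a, f s = g s) :
    pzRect a b V f = pzRect a b V g := by
  have hab : a ≤ b := by linarith
  have h1 : ∀ v : ℝ, v ≠ 0 → (∫ x in a..b, f (x + (v : ℂ) * I)) = ∫ x in a..b, g (x + (v : ℂ) * I) := by
    intro v hv
    refine intervalIntegral.integral_congr fun x hx => h _ ?_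
    rw [Set.uIcc_of_le hab] at hx
    refine ⟨by simpa using hx.1, fun h => hv ?_⟩
    simpa using congrArg Complex.im h
  have h2 : ∀ c : ℝ, a ≤ c → c ≠ 1 → (∫ y in -V..V, f ((c : ℂ) + y * I)) = ∫ y in -V..V, g ((c : ℂ) + y * I) := by
    intro c hac hc
    refine intervalIntegral.integral_congr fun x hx => h _ ?_
    refine ⟨by simpa using hac, fun h => hc ?_⟩
    simpa using congrArg Complex.re h
  unfold pzRect
  rw [h1 (-V) (by linarith), h1 V (by linarith), h2 b hab (by linarith), h2 a le_rfl (by linarith)]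

lemma pz_ftc_h {F : ℂ → ℂ} (hab : a ≤ b) {v : ℝ} (hF : ∀ x ∈ Set.Icc a b, HasDerivAt F (f (x + (v : ℂ) * I)) (x + (v:ℂ) * I))
    (hi : IntervalIntegrable (fun x : ℝ => f (x + (v : ℂ) * I)) volume a b) :
    ∫ x in a..b, f (x + (v : ℂ) * I) = F (b + (v:ℂ) * I) - F (a + (v:ℂ) * I) := by
  refine intervalIntegral.integral_eq_sub_of_hasDerivAt (f := fun x : ℝ => F (x + (v:ℂ) * I)) (fun x hx => ?_) hi
  rw [Set.uIcc_of_le hab] at hx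
  have h1 : HasDerivAt (fun z : ℂ => F (z + (v:ℂ) * I)) (f (x + (v : ℂ) * I)) (x : ℂ) :=
    HasDerivAt.comp_add_const (x : ℂ) ((v:ℂ) * I) (hF x hx)
  exact h1.comp_ofReal

lemma pz_ftc_v {F : ℂ → ℂ} (hV : 0 < V) {c : ℝ} (hF : ∀ y ∈ Set.Icc (-V) V, HasDerivAt F (f ((c:ℂ) + y * I)) ((c:ℂ) + y * I))
    (hi : IntervalIntegrable (fun y : ℝ => f ((c:ℂ) + y * I)) volume (-V) V) :
    I * ∫ y in -V..V, f ((c:ℂ) + y * I) = F (c + V * I) - F (c + (-V : ℝ) * I) := by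
  rw [← intervalIntegral.integral_const_mul]
  refine intervalIntegral.integral_eq_sub_of_hasDerivAt (f := fun y : ℝ => F ((c:ℂ) + y * I)) (fun y hy => ?_) (hi.const_mul _)
  rw [Set.uIcc_of_le (by linarith)] at hy
  have h2 : HasDerivAt (fun y : ℂ => (c:ℂ) + y * I) I (y : ℂ) := by
    have := ((hasDerivAt_id (y:ℂ)).mul_const I).const_add (c:ℂ)
    simpa using this
  have h1 : HasDerivAt (fun z : ℂ => F ((c:ℂ) + z * I)) (f ((c:ℂ) + y * I) * I) (y : ℂ) :=
    HasDerivAt.comp (y:ℂ) (h₂ := F) (hF y hy) h2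
  rw [mul_comm]
  exact h1.comp_ofReal

lemma pzRect_deriv {F : ℂ → ℂ} (ha : a < 1) (hb : 1 < b) (hV : 0 < V) (hf : ContinuousOn f (pzU a))
    (hF : ∀ s ∈ pzU a, HasDerivAt F (f s) s) : pzRect a b V f = 0 := by
  have hab : a ≤ b := by linarith
  have h1 : ∀ v : ℝ, v ≠ 0 → (∫ x in a..b, f (x + (v : ℂ) * I)) = F (b + (v:ℂ) * I) - F (a + (v:ℂ) * I) := by
    intro v hv
    refine pz_ftc_h hab (fun x hx => hF _ ?_) (pz_side_h hab hv hf)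
    refine ⟨by simpa using hx.1, fun h => hv ?_⟩
    simpa using congrArg Complex.im h
  have h2 : ∀ c : ℝ, a ≤ c → c ≠ 1 → I * (∫ y in -V..V, f ((c : ℂ) + y * I)) = F (c + V * I) - F (c + (-V : ℝ) * I) := by
    intro c hac hc
    refine pz_ftc_v hV (fun x hx => hF _ ?_) (pz_side_v hac hc hf)
    refine ⟨by simpa using hac, fun h => hc ?_⟩
    simpa using congrArg Complex.re h
  unfold pzRect
  rw [h1 (-V) (by linarith), h1 V (by linarith), h2 b hab (by linarith), h2 a le_rfl (by linarith)]
  ring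

lemma pz_cont_inv : ContinuousOn (fun s : ℂ => (s - 1)⁻¹) (pzU a) :=
  ContinuousOn.inv₀ (by fun_prop) (fun s hs => sub_ne_zero.2 hs.2)

lemma pz_cont_inv_pow (k : ℕ) : ContinuousOn (fun s : ℂ => ((s - 1) ^ k)⁻¹) (pzU a) :=
  ContinuousOn.inv₀ (by fun_prop) (fun s hs => pow_ne_zero _ (sub_ne_zero.2 hs.2))

lemma pz_log_neg_of_neg {z : ℂ} (hz : z.im < 0) : Complex.log (-z) = Complex.log z + Real.pi * I := by
  rw [Complex.log, Complex.log, norm_neg, arg_neg_eq_arg_add_pi_of_im_neg hz]; push_cast; ring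

lemma pz_log_neg_of_pos {z : ℂ} (hz : 0 < z.im) : Complex.log (-z) = Complex.log z - Real.pi * I := by
  rw [Complex.log, Complex.log, norm_neg, arg_neg_eq_arg_sub_pi_of_im_pos hz]; push_cast; ring

lemma pzRect_inv (ha : a < 1) (hb : 1 < b) (hV : 0 < V) :
    pzRect a b V (fun s => (s - 1)⁻¹) = 2 * Real.pi * I := by
  have hab : a ≤ b := by linarith
  have hc := pz_cont_inv (a := a)
  have hL : ∀ s : ℂ, (s - 1) ∈ slitPlane → HasDerivAt (fun s => Complex.log (s - 1)) ((s - 1)⁻¹) s := by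
    intro s hs
    have := ((hasDerivAt_id s).sub_const 1).clog hs
    simpa using this
  have hL' : ∀ s : ℂ, (1 - s) ∈ slitPlane → HasDerivAt (fun s => Complex.log (1 - s)) ((s - 1)⁻¹) s := by
    intro s hs
    have := ((hasDerivAt_id s).const_sub 1).clog hs
    refine this.congr_deriv ?_
    simp only [id]
    rw [← neg_sub s 1, div_neg, neg_div, neg_neg, one_div]
  have h1 : ∀ v : ℝ, v ≠ 0 → (∫ x in a..b, ((x + (v : ℂ) * I) - 1)⁻¹) = Complex.log (b + (v:ℂ) * I - 1) - Complex.log (a + (v:ℂ) * I - 1) := by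
    intro v hv
    refine pz_ftc_h (f := fun s => (s-1)⁻¹) (F := fun s => Complex.log (s - 1)) hab (fun x hx => hL _ ?_) (pz_side_h (f := fun s => (s-1)⁻¹) hab hv hc)
    rw [mem_slitPlane_iff]; right; simpa using hv
  have h2 : I * (∫ y in -V..V, (((b : ℂ) + y * I) - 1)⁻¹) = Complex.log (b + V * I - 1) - Complex.log (b + (-V : ℝ) * I - 1) := by
    refine pz_ftc_v (f := fun s => (s-1)⁻¹) (F := fun s => Complex.log (s - 1)) hV (fun x hx => hL _ ?_) (pz_side_v (f := fun s => (s-1)⁻¹) hab (by linarith) hc)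
    rw [mem_slitPlane_iff]; left; simpa using hb
  have h3 : I * (∫ y in -V..V, (((a : ℂ) + y * I) - 1)⁻¹) = Complex.log (1 - (a + V * I)) - Complex.log (1 - (a + (-V : ℝ) * I)) := by
    refine pz_ftc_v (f := fun s => (s-1)⁻¹) (F := fun s => Complex.log (1 - s)) hV (fun x hx => hL' _ ?_) (pz_side_v (f := fun s => (s-1)⁻¹) le_rfl (by linarith) hc)
    rw [mem_slitPlane_iff]; left; simpa using ha
  unfold pzRect
  rw [h1 (-V) (by linarith), h1 V (by linarith), h2, h3]
  have e1 : Complex.log (1 - (a + V * I)) = Complex.log (a + V * I - 1) - Real.pi * I := by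
    rw [← neg_sub, pz_log_neg_of_pos]; simpa using hV
  have e2 : Complex.log (1 - (a + (-V : ℝ) * I)) = Complex.log (a + (-V : ℝ) * I - 1) + Real.pi * I := by
    rw [← neg_sub, pz_log_neg_of_neg]; simpa using hV
  rw [e1, e2]
  ring

lemma pz_Y_deriv {Y : ℝ} (hY : 0 < Y) (s : ℂ) : HasDerivAt (fun s : ℂ => (Y:ℂ) ^ s) ((Real.log Y : ℝ) * (Y:ℂ) ^ s) s := by
  have := (hasDerivAt_id s).const_cpow (c := (Y:ℂ)) (Or.inl (by exact_mod_cast hY.ne'))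
  refine this.congr_deriv ?_
  simp only [id, mul_one]
  rw [ofReal_log hY.le]; ring

lemma pzRect_J {Y : ℝ} (hY : 0 < Y) (ha : a < 1) (hb : 1 < b) (hV : 0 < V) (k : ℕ) :
    pzRect a b V (fun s => ((s - 1) ^ (k + 1))⁻¹ * (Y:ℂ) ^ s) = 2 * Real.pi * I * (Y * (Real.log Y : ℝ) ^ k / k.factorial) := by
  have hYc : Continuous (fun s : ℂ => (Y:ℂ) ^ s) := continuous_iff_continuousAt.2 fun s => (pz_Y_deriv hY s).continuousAt
  induction k with
  | zero =>
    have hYd : Differentiable ℂ (fun s : ℂ => (Y:ℂ) ^ s) := fun s => (pz_Y_deriv hY s).differentiableAt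
    have h0 : pzRect a b V (dslope (fun s : ℂ => (Y:ℂ) ^ s) 1) = 0 := by
      refine pzRect_zero (by linarith) (fun s _ => ?_)
      have h2 : DifferentiableOn ℂ (dslope (fun s : ℂ => (Y:ℂ) ^ s) 1) Set.univ :=
        (Complex.differentiableOn_dslope Filter.univ_mem).2 hYd.differentiableOn
      exact (h2 s (Set.mem_univ s)).differentiableAt Filter.univ_mem
    have hcd : ContinuousOn (dslope (fun s : ℂ => (Y:ℂ) ^ s) 1) (pzU a) := by
      have h2 : DifferentiableOn ℂ (dslope (fun s : ℂ => (Y:ℂ) ^ s) 1) Set.univ :=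
        (Complex.differentiableOn_dslope Filter.univ_mem).2 hYd.differentiableOn
      exact h2.continuousOn.mono (Set.subset_univ _)
    have e : pzRect a b V (fun s => ((s - 1) ^ (0 + 1))⁻¹ * (Y:ℂ) ^ s)
        = pzRect a b V (fun s => (Y:ℂ) * (s - 1)⁻¹ + dslope (fun s : ℂ => (Y:ℂ) ^ s) 1 s) := by
      refine pzRect_congr ha hb hV (fun s hs => ?_)
      rw [dslope_of_ne _ hs.2, slope_def_field]
      have := sub_ne_zero.2 hs.2
      simp only [zero_add, pow_one, cpow_one]
      field_simp
      ring
    have hc1 : ContinuousOn (fun s : ℂ => (Y:ℂ) * (s - 1)⁻¹) (pzU a) := continuousOn_const.mul pz_cont_inv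
    rw [e, pzRect_add ha hb hV hc1 hcd, h0, pzRect_mul, pzRect_inv ha hb hV]
    simp; ring
  | succ k ih =>
    have hk : ((k:ℂ) + 1) ≠ 0 := by exact_mod_cast Nat.succ_ne_zero k
    have hc1 : ContinuousOn (fun s : ℂ => ((Real.log Y : ℝ):ℂ) * (((s - 1) ^ (k + 1))⁻¹ * (Y:ℂ) ^ s)) (pzU a) :=
      continuousOn_const.mul ((pz_cont_inv_pow _).mul hYc.continuousOn)
    have hc2 : ContinuousOn (fun s : ℂ => (-((k:ℂ) + 1)) * (((s - 1) ^ (k + 1 + 1))⁻¹ * (Y:ℂ) ^ s)) (pzU a) :=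
      continuousOn_const.mul ((pz_cont_inv_pow _).mul hYc.continuousOn)
    have hz := pzRect_deriv (f := fun s => (Real.log Y : ℝ) * (((s - 1) ^ (k + 1))⁻¹ * (Y:ℂ) ^ s) + (-((k:ℂ) + 1)) * (((s - 1) ^ (k + 1 + 1))⁻¹ * (Y:ℂ) ^ s))
      (F := fun s => ((s - 1) ^ (k + 1))⁻¹ * (Y:ℂ) ^ s) ha hb hV
      (hc1.add hc2)
      (fun s hs => by
        have hs0 := sub_ne_zero.2 hs.2
        have h1 : HasDerivAt (fun s : ℂ => (s - 1) ^ (k + 1)) (((k+1 : ℕ) : ℂ) * (s - 1) ^ k * 1) s := by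
          exact (((hasDerivAt_id s).sub_const 1).fun_pow (k + 1)).congr_deriv (by simp)
        have h2 := (h1.inv (pow_ne_zero _ hs0)).mul (pz_Y_deriv hY s)
        refine h2.congr_deriv ?_
        simp only [Pi.inv_apply]
        push_cast
        field_simp
        ring)
    rw [pzRect_add ha hb hV hc1 hc2,
      pzRect_mul, pzRect_mul, ih] at hz
    apply mul_left_cancel₀ hk
    have hfac : (k.factorial : ℂ) ≠ 0 := by exact_mod_cast k.factorial_ne_zero
    have : ((k:ℂ) + 1) * pzRect a b V (fun s => ((s - 1) ^ (k + 1 + 1))⁻¹ * (Y:ℂ) ^ s) = (Real.log Y : ℝ) * (2 * Real.pi * I * (Y * (Real.log Y : ℝ) ^ k / k.factorial)) := by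
      linear_combination -hz
    rw [this, Nat.factorial_succ]
    push_cast
    field_simp
    ring
end


lemma pz_ps {a : ℕ → ℂ} {f : ℂ → ℂ}
    (h : ∀ᶠ s in nhdsWithin (1 : ℂ) {(1 : ℂ)}ᶜ, HasSum (fun j : ℕ => a j * (s - 1) ^ j) (f s)) :
    ∃ g : ℂ → ℂ, HasFPowerSeriesAt g (FormalMultilinearSeries.ofScalars ℂ a) 1 ∧
      ∀ᶠ s in nhdsWithin (1 : ℂ) {(1 : ℂ)}ᶜ, f s = g s := by
  refine ⟨fun s => ∑' j, a j * (s - 1) ^ j, ?_, h.mono fun s hs => hs.tsum_eq.symm⟩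
  rw [hasFPowerSeriesAt_iff']
  have h1 : ∀ᶠ s in nhds (1:ℂ), s ≠ 1 → HasSum (fun j : ℕ => a j * (s - 1) ^ j) (f s) := by
    simpa [eventually_nhdsWithin_iff] using h
  filter_upwards [h1] with s hs
  have e : (fun n => (s - 1) ^ n • (FormalMultilinearSeries.ofScalars ℂ a).coeff n) = fun j : ℕ => a j * (s - 1) ^ j := by
    funext n
    rw [FormalMultilinearSeries.coeff_ofScalars, smul_eq_mul, mul_comm]
  rw [e]
  by_cases h : s = 1
  · refine Summable.hasSum (summable_of_ne_finset_zero (s := {0}) (fun b hb => ?_))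
    have : b ≠ 0 := by simpa using hb
    simp [h, this]
  · exact (hs h).summable.hasSum

lemma pz_ps_shift {a : ℕ → ℂ} {f : ℂ → ℂ} (m : ℕ)
    (h : ∀ᶠ s in nhdsWithin (1 : ℂ) {(1 : ℂ)}ᶜ, HasSum (fun j : ℕ => a j * (s - 1) ^ j) (f s)) :
    ∃ g : ℂ → ℂ, AnalyticAt ℂ g 1 ∧
      ∀ᶠ s in nhdsWithin (1 : ℂ) {(1 : ℂ)}ᶜ, f s = ∑ j ∈ range m, a j * (s - 1) ^ j + (s - 1) ^ m * g s := by
  have h2 : ∀ᶠ s in nhdsWithin (1 : ℂ) {(1 : ℂ)}ᶜ, HasSum (fun j : ℕ => a (j + m) * (s - 1) ^ j)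
      ((f s - ∑ j ∈ range m, a j * (s - 1) ^ j) / (s - 1) ^ m) := by
    filter_upwards [h, self_mem_nhdsWithin] with s hs hs1
    have hw : (s - 1) ^ m ≠ 0 := pow_ne_zero _ (sub_ne_zero.2 hs1)
    have h3 : HasSum (fun j : ℕ => a (j + m) * (s - 1) ^ (j + m)) (f s - ∑ j ∈ range m, a j * (s - 1) ^ j) := by
      rw [hasSum_nat_add_iff (f := fun j : ℕ => a j * (s - 1) ^ j) m]
      simpa using hs
    have h4 := h3.div_const ((s - 1) ^ m)
    have e : (fun j : ℕ => a (j + m) * (s - 1) ^ j) = fun j : ℕ => a (j + m) * (s - 1) ^ (j + m) / (s - 1) ^ m := by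
      funext j
      rw [pow_add]; field_simp
    rw [e]; exact h4
  obtain ⟨g, hg, he⟩ := pz_ps h2
  refine ⟨g, hg.analyticAt, ?_⟩
  filter_upwards [he, self_mem_nhdsWithin] with s hs hs1
  have hw : (s - 1) ^ m ≠ 0 := pow_ne_zero _ (sub_ne_zero.2 hs1)
  rw [← hs]; field_simp; ring

lemma pz_ps_deriv {a : ℕ → ℂ} {g : ℂ → ℂ} (h : HasFPowerSeriesAt g (FormalMultilinearSeries.ofScalars ℂ a) 1) (n : ℕ) :
    iteratedDeriv n g 1 = n.factorial * a n := by
  have h1 := h.analyticAt.hasFPowerSeriesAt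
  have h2 := congrArg (fun p => FormalMultilinearSeries.coeff p n) (h1.eq_formalMultilinearSeries h)
  simp only [FormalMultilinearSeries.coeff_ofScalars] at h2
  rw [← h2]
  have : (n.factorial : ℂ) ≠ 0 := by exact_mod_cast n.factorial_ne_zero
  field_simp

lemma pz_an_iter {g : ℂ → ℂ} {s : ℂ} (h : AnalyticAt ℂ g s) (n : ℕ) : AnalyticAt ℂ (iteratedDeriv n g) s := by
  rw [iteratedDeriv_eq_iterate]; exact h.iterated_deriv n

lemma pz_iter_polar {f g : ℂ → ℂ} (hg : AnalyticAt ℂ g 1)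
    (h : ∀ᶠ s in nhdsWithin (1 : ℂ) {(1 : ℂ)}ᶜ, f s + 1 / (s - 1) = g s) (n : ℕ) :
    ∀ᶠ s in nhdsWithin (1 : ℂ) {(1 : ℂ)}ᶜ, iteratedDeriv n f s =
      (-1) ^ (n + 1) * n.factorial * ((s - 1) ^ (n + 1))⁻¹ + iteratedDeriv n g s := by
  induction n with
  | zero =>
    filter_upwards [h] with s hs
    simp only [iteratedDeriv_zero]
    rw [← hs]; simp
  | succ n ih =>
    have hga : ∀ᶠ s in nhdsWithin (1 : ℂ) {(1 : ℂ)}ᶜ, AnalyticAt ℂ g s :=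
      hg.eventually_analyticAt.filter_mono nhdsWithin_le_nhds
    filter_upwards [eventually_eventually_nhdsWithin.2 ih, hga, self_mem_nhdsWithin] with s hs hgs hs1
    rw [isOpen_compl_singleton.nhdsWithin_eq hs1] at hs
    have hw : s - 1 ≠ 0 := sub_ne_zero.2 hs1
    rw [iteratedDeriv_succ, iteratedDeriv_succ, Filter.EventuallyEq.deriv_eq hs]
    have h1 : HasDerivAt (fun s : ℂ => (s - 1) ^ (n + 1)) (((n+1 : ℕ) : ℂ) * (s - 1) ^ n * 1) s :=
      (((hasDerivAt_id s).sub_const 1).fun_pow (n + 1)).congr_deriv (by simp)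
    have h2 := ((h1.fun_inv (pow_ne_zero _ hw)).const_mul ((-1 : ℂ) ^ (n + 1) * n.factorial)).fun_add
      (pz_an_iter hgs n).differentiableAt.hasDerivAt
    rw [h2.deriv, Nat.factorial_succ]
    push_cast
    congr 1
    field_simp
    ring

/-- Taylor coefficients of the regular part of `ζ(s)/s` -/
noncomputable def pzB (C : ℕ → ℂ) (k : ℕ) : ℂ := (-1 : ℂ) ^ k * (-1 + ∑ j ∈ Finset.range (k + 1), (-1 : ℂ) ^ j * C j)

lemma pzB_alg (C : ℕ → ℂ) (w : ℂ) (n : ℕ) : (1 + w) * ∑ k ∈ range (n + 1), pzB C k * w ^ k =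
    ∑ k ∈ range (n + 1), C k * w ^ k - 1 + pzB C n * w ^ (n + 1) := by
  induction n with
  | zero => simp [pzB]; ring
  | succ n ih =>
    rw [sum_range_succ, mul_add, ih, sum_range_succ _ (n + 1)]
    have : pzB C (n + 1) = C (n + 1) - pzB C n := by
      unfold pzB
      rw [sum_range_succ _ (n + 1)]
      have h : ((-1 : ℂ) ^ n) * (-1) ^ n = 1 := by rw [← mul_pow]; simp
      simp only [pow_succ]
      linear_combination (C (n+1)) * h
    rw [this]; ring

/-- polar part of `(ζ'/ζ)^{(n)}(s) ζ(s)/s` at `s = 1` -/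
noncomputable def pzPol (C A : ℕ → ℂ) (n : ℕ) (s : ℂ) : ℂ :=
  (-1) ^ (n + 1) * n.factorial * ((s - 1) ^ (n + 1 + 1))⁻¹
  + (∑ k ∈ range (n + 1), (-1) ^ (n + 1) * n.factorial * pzB C k * ((s - 1) ^ (n - k + 1))⁻¹
  + n.factorial * A n * ((s - 1) ^ (0 + 1))⁻¹)

lemma pzPol_diff (C A : ℕ → ℂ) (n : ℕ) {s : ℂ} (hs : s ≠ 1) : DifferentiableAt ℂ (pzPol C A n) s := by
  have hi : ∀ k : ℕ, DifferentiableAt ℂ (fun s : ℂ => ((s - 1) ^ k)⁻¹) s := fun k =>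
    DifferentiableAt.fun_inv (by fun_prop) (pow_ne_zero _ (sub_ne_zero.2 hs))
  unfold pzPol
  refine ((hi _).const_mul _).fun_add (DifferentiableAt.fun_add (DifferentiableAt.fun_sum fun k _ => ?_) ((hi _).const_mul _))
  exact (hi _).const_mul _

lemma pzL_analytic (hRH : RiemannHypothesis) {s : ℂ} (hs : 1/2 < s.re) (hs1 : s ≠ 1) : AnalyticAt ℂ pzL s := by
  have ho : IsOpen {s : ℂ | 1/2 < s.re ∧ s ≠ 1} :=
    (isOpen_lt continuous_const continuous_re).inter isOpen_compl_singleton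
  have hd : DifferentiableOn ℂ pzL {s : ℂ | 1/2 < s.re ∧ s ≠ 1} := fun z hz =>
    (pzL_diff hRH hz.1 hz.2).differentiableWithinAt
  exact hd.analyticAt (ho.mem_nhds ⟨hs, hs1⟩)

/-- the integrand without `Y^s` -/
noncomputable def pzPhi (n : ℕ) (s : ℂ) : ℂ := iteratedDeriv n pzL s * riemannZeta s / s

lemma pzPhi_diff (hRH : RiemannHypothesis) (n : ℕ) {s : ℂ} (hs : 1/2 < s.re) (hs1 : s ≠ 1) : DifferentiableAt ℂ (pzPhi n) s := by
  have h0 : s ≠ 0 := by rintro rfl; simp at hs; linarith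
  exact (((pz_an_iter (pzL_analytic hRH hs hs1) n).differentiableAt).fun_mul (differentiableAt_riemannZeta hs1)).fun_div
    differentiableAt_id h0

lemma pz_residue (n : ℕ) (hRH : RiemannHypothesis) (C A : ℕ → ℂ)
    (hC : ∀ᶠ s in nhdsWithin (1 : ℂ) {(1 : ℂ)}ᶜ,
      HasSum (fun j : ℕ => C j * (s - 1) ^ j) (riemannZeta s - 1 / (s - 1)))
    (hA : ∀ᶠ s in nhdsWithin (1 : ℂ) {(1 : ℂ)}ᶜ,
      HasSum (fun j : ℕ => A j * (s - 1) ^ j)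
        (deriv riemannZeta s / riemannZeta s + 1 / (s - 1))) :
    ∃ Q : ℂ → ℂ, (∀ s : ℂ, 1/2 < s.re → DifferentiableAt ℂ Q s) ∧
      ∀ s : ℂ, s ≠ 1 → pzPhi n s = pzPol C A n s + Q s := by
  obtain ⟨g, hg, hge⟩ := pz_ps hA
  have hgd := pz_ps_deriv hg n
  have hL := pz_iter_polar (f := pzL) hg.analyticAt hge n
  obtain ⟨G, hG, hGe⟩ := pz_ps_shift (n + 1) hC
  obtain ⟨c, hc, hce⟩ := pz_ps hC
  have hh := pz_an_iter hg.analyticAt n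
  set h := iteratedDeriv n g with hdef
  have hds : DifferentiableAt ℂ (dslope h 1) 1 := by
    obtain ⟨p, hp⟩ := hh
    exact hp.has_fpower_series_dslope_fslope.analyticAt.differentiableAt
  set q : ℂ → ℂ := fun s => (-1) ^ (n + 1) * n.factorial * ((G s - pzB C n) / s) + dslope h 1 s + h s * ((c s - 1) / s) with hq
  have hqd : DifferentiableAt ℂ q 1 := by
    have h1 : DifferentiableAt ℂ (fun s => (G s - pzB C n) / s) 1 :=
      (hG.differentiableAt.sub_const _).fun_div differentiableAt_id one_ne_zero
    have h2 : DifferentiableAt ℂ (fun s => (c s - 1) / s) 1 :=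
      (hc.analyticAt.differentiableAt.sub_const _).fun_div differentiableAt_id one_ne_zero
    exact ((h1.const_mul _).fun_add hds).fun_add (hh.differentiableAt.fun_mul h2)
  have hev : ∀ᶠ s in nhdsWithin (1 : ℂ) {(1 : ℂ)}ᶜ, pzPhi n s - pzPol C A n s = q s := by
    have hne : ∀ᶠ s in nhdsWithin (1 : ℂ) {(1 : ℂ)}ᶜ, s ≠ 0 :=
      (isOpen_compl_singleton.mem_nhds (by simp : (1:ℂ) ∈ ({0} : Set ℂ)ᶜ)) |> fun h => nhdsWithin_le_nhds h
    filter_upwards [hL, hGe, hce, self_mem_nhdsWithin, hne] with s h1 h2 h3 hs1 hs0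
    have hw : s - 1 ≠ 0 := sub_ne_zero.2 hs1
    have hz : riemannZeta s = 1 / (s - 1) + c s := by rw [← h3]; ring
    have hcs : c s = ∑ j ∈ range (n + 1), C j * (s - 1) ^ j + (s - 1) ^ (n + 1) * G s := by rw [← h3, h2]
    have halg := pzB_alg C (s - 1) n
    have hb : (c s - 1) / s = ∑ k ∈ range (n + 1), pzB C k * (s - 1) ^ k + (s - 1) ^ (n + 1) * ((G s - pzB C n) / s) := by
      field_simp
      rw [hcs]
      linear_combination -halg
    have hsum : ∑ k ∈ range (n + 1), (-1) ^ (n + 1) * (n.factorial : ℂ) * pzB C k * ((s - 1) ^ (n - k + 1))⁻¹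
        = (-1) ^ (n + 1) * (n.factorial : ℂ) * ((s - 1) ^ (n + 1))⁻¹ * ∑ k ∈ range (n + 1), pzB C k * (s - 1) ^ k := by
      rw [mul_sum]
      refine sum_congr rfl fun k hk => ?_
      have hk' : k ≤ n := by simpa [Nat.lt_succ_iff] using hk
      have : (s - 1) ^ (n + 1) = (s - 1) ^ (n - k + 1) * (s - 1) ^ k := by
        rw [← pow_add]; congr 1; omega
      rw [this]; field_simp
    have hdsl : h s = n.factorial * A n + (s - 1) * dslope h 1 s := by
      rw [dslope_of_ne _ hs1, slope_def_field, ← hgd]; field_simp; ring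
    have hzs : riemannZeta s / s = (s - 1)⁻¹ + (c s - 1) / s := by
      rw [hz]; field_simp; ring
    have e1 : ((s - 1) ^ (n + 1))⁻¹ * (s - 1) ^ (n + 1) = 1 := inv_mul_cancel₀ (pow_ne_zero _ hw)
    have e2 : ((s - 1) ^ (n + 1 + 1))⁻¹ = ((s - 1) ^ (n + 1))⁻¹ * (s - 1)⁻¹ := by
      rw [pow_succ _ (n + 1), mul_inv]
    have e3 : (s - 1) * (s - 1)⁻¹ = 1 := mul_inv_cancel₀ hw
    rw [pzPhi, pzPol, hsum, mul_div_assoc, hzs, h1, e2, zero_add, pow_one]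
    simp only [hq]
    generalize (s - 1)⁻¹ = v at *
    generalize ((s - 1) ^ (n + 1))⁻¹ = u at *
    have hb' : u * ((c s - 1) / s) = u * ∑ k ∈ range (n + 1), pzB C k * (s - 1) ^ k + (G s - pzB C n) / s := by
      rw [hb]; linear_combination ((G s - pzB C n) / s) * e1
    linear_combination ((-1) ^ (n + 1) * (n.factorial : ℂ)) * hb' + v * hdsl + (dslope h 1 s) * e3
  refine ⟨Function.update (fun s => pzPhi n s - pzPol C A n s) 1 (q 1), fun s hs => ?_, fun s hs => ?_⟩
  · by_cases hs1 : s = 1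
    · subst hs1
      refine hqd.congr_of_eventuallyEq ?_
      rw [eventually_nhdsWithin_iff] at hev
      filter_upwards [hev] with s hs'
      by_cases h1 : s = 1
      · subst h1; simp
      · rw [Function.update_of_ne h1]; exact hs' h1
    · have hd : DifferentiableAt ℂ (fun s => pzPhi n s - pzPol C A n s) s :=
        (pzPhi_diff hRH n hs hs1).fun_sub (pzPol_diff C A n hs1)
      refine hd.congr_of_eventuallyEq ?_
      filter_upwards [isOpen_compl_singleton.mem_nhds hs1] with z hz
      rw [Function.update_of_ne hz]
  · rw [Function.update_of_ne hs]; ring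


lemma pz_rect_main (n : ℕ) (hRH : RiemannHypothesis) (C A : ℕ → ℂ)
    (hC : ∀ᶠ s in nhdsWithin (1 : ℂ) {(1 : ℂ)}ᶜ,
      HasSum (fun j : ℕ => C j * (s - 1) ^ j) (riemannZeta s - 1 / (s - 1)))
    (hA : ∀ᶠ s in nhdsWithin (1 : ℂ) {(1 : ℂ)}ᶜ,
      HasSum (fun j : ℕ => A j * (s - 1) ^ j)
        (deriv riemannZeta s / riemannZeta s + 1 / (s - 1)))
    {a b V Y : ℝ} (hY : 0 < Y) (ha' : 1/2 < a) (ha : a < 1) (hb : 1 < b) (hV : 0 < V) :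
    pzRect a b V (fun s => pzPhi n s * (Y:ℂ) ^ s) = 2 * Real.pi * I * Mterm C A n Y := by
  obtain ⟨Q, hQ, hQe⟩ := pz_residue n hRH C A hC hA
  have hYd : ∀ s : ℂ, DifferentiableAt ℂ (fun s : ℂ => (Y:ℂ) ^ s) s := fun s => (pz_Y_deriv hY s).differentiableAt
  have hYc : Continuous (fun s : ℂ => (Y:ℂ) ^ s) := continuous_iff_continuousAt.2 fun s => (hYd s).continuousAt
  set P : ℂ := (-1) ^ (n + 1) * n.factorial with hP
  have hJ : ∀ (d : ℂ) (k : ℕ), ContinuousOn (fun s : ℂ => d * (((s - 1) ^ (k + 1))⁻¹ * (Y:ℂ) ^ s)) (pzU a) := fun d k =>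
    continuousOn_const.mul ((pz_cont_inv_pow _).mul hYc.continuousOn)
  have e : pzRect a b V (fun s => pzPhi n s * (Y:ℂ) ^ s) = pzRect a b V (fun s =>
      P * (((s - 1) ^ (n + 1 + 1))⁻¹ * (Y:ℂ) ^ s) + (∑ k ∈ range (n + 1), (P * pzB C k) * (((s - 1) ^ (n - k + 1))⁻¹ * (Y:ℂ) ^ s)
        + (n.factorial * A n * (((s - 1) ^ (0 + 1))⁻¹ * (Y:ℂ) ^ s) + Q s * (Y:ℂ) ^ s))) := by
    refine pzRect_congr ha hb hV (fun s hs => ?_)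
    rw [hQe s hs.2, pzPol]
    have : ∑ k ∈ range (n + 1), (P * pzB C k) * (((s - 1) ^ (n - k + 1))⁻¹ * (Y:ℂ) ^ s)
        = (∑ k ∈ range (n + 1), P * pzB C k * ((s - 1) ^ (n - k + 1))⁻¹) * (Y:ℂ) ^ s := by
      rw [sum_mul]; exact sum_congr rfl fun k _ => by ring
    rw [this]; ring
  have hQc : ContinuousOn (fun s => Q s * (Y:ℂ) ^ s) (pzU a) := fun s hs =>
    ((hQ s (by linarith [hs.1])).continuousAt.mul hYc.continuousAt).continuousWithinAt
  have hQ0 : pzRect a b V (fun s => Q s * (Y:ℂ) ^ s) = 0 :=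
    pzRect_zero (by linarith) (fun s hs => (hQ s (by linarith)).fun_mul (hYd s))
  have c3 : ContinuousOn (fun s => n.factorial * A n * (((s - 1) ^ (0 + 1))⁻¹ * (Y:ℂ) ^ s) + Q s * (Y:ℂ) ^ s) (pzU a) :=
    (hJ _ _).add hQc
  have c2s : ContinuousOn (fun s => ∑ k ∈ range (n + 1), (P * pzB C k) * (((s - 1) ^ (n - k + 1))⁻¹ * (Y:ℂ) ^ s)) (pzU a) :=
    continuousOn_finsetSum _ (fun k _ => hJ _ _)
  have c2 : ContinuousOn (fun s => ∑ k ∈ range (n + 1), (P * pzB C k) * (((s - 1) ^ (n - k + 1))⁻¹ * (Y:ℂ) ^ s)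
        + (n.factorial * A n * (((s - 1) ^ (0 + 1))⁻¹ * (Y:ℂ) ^ s) + Q s * (Y:ℂ) ^ s)) (pzU a) := c2s.add c3
  rw [e, pzRect_add ha hb hV (hJ _ _) c2, pzRect_add ha hb hV c2s c3, pzRect_add ha hb hV (hJ _ _) hQc, hQ0,
    pzRect_sum ha hb hV _ _ (fun k => hJ _ _), pzRect_mul, pzRect_mul, pzRect_J hY ha hb hV, pzRect_J hY ha hb hV]
  simp only [pzRect_mul, pzRect_J hY ha hb hV]
  have hfac : (n.factorial : ℂ) ≠ 0 := by exact_mod_cast n.factorial_ne_zero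
  have hn1 : (n : ℂ) + 1 ≠ 0 := by exact_mod_cast Nat.succ_ne_zero n
  have s1 : P * (2 * Real.pi * I * (Y * (Real.log Y : ℝ) ^ (n + 1) / (n + 1).factorial))
      = 2 * Real.pi * I * ((-1 : ℂ) ^ (n + 1) * (1 / ((n : ℂ) + 1)) * ((Y * Real.log Y ^ (n + 1) : ℝ) : ℂ)) := by
    rw [hP, Nat.factorial_succ]; push_cast; field_simp
  have s2 : ∑ k ∈ range (n + 1), P * pzB C k * (2 * Real.pi * I * (Y * (Real.log Y : ℝ) ^ (n - k) / (n - k).factorial))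
      = 2 * Real.pi * I * ((-1 : ℂ) ^ (n + 1) *
      ∑ k ∈ Finset.range (n + 1),
        (n.choose k : ℂ) * (-1 : ℂ) ^ k * (k.factorial : ℂ) *
          (-1 + ∑ j ∈ Finset.range (k + 1), (-1 : ℂ) ^ j * C j) *
          ((Y * Real.log Y ^ (n - k) : ℝ) : ℂ)) := by
    rw [mul_sum, mul_sum]
    refine sum_congr rfl fun k hk => ?_
    have hk' : k ≤ n := by simpa [Nat.lt_succ_iff] using hk
    have hch : (n.choose k : ℂ) * k.factorial * (n - k).factorial = n.factorial := by
      exact_mod_cast Nat.choose_mul_factorial_mul_factorial hk'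
    have hfk : ((n - k).factorial : ℂ) ≠ 0 := by exact_mod_cast (n - k).factorial_ne_zero
    rw [hP, pzB, ← hch]
    push_cast
    field_simp
  rw [s1, s2, Mterm]
  simp
  ring


lemma pz_Y_norm {Y : ℝ} (hY : Real.exp 8 ≤ Y) {s : ℂ} {r : ℝ} (hs : s.re ≤ r + 1 / Real.log Y) :
    ‖(Y:ℂ) ^ s‖ ≤ Real.exp 1 * Y ^ r := by
  have h1 : 1 ≤ Y := le_trans (by simp) hY
  have h0 : 0 < Y := by linarith
  have hL : 8 ≤ Real.log Y := by rw [Real.le_log_iff_exp_le h0]; exact hY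
  rw [norm_cpow_eq_rpow_re_of_pos h0]
  calc Y ^ s.re ≤ Y ^ (r + 1 / Real.log Y) := Real.rpow_le_rpow_of_exponent_le h1 hs
    _ = Y ^ r * Y ^ (1 / Real.log Y) := Real.rpow_add h0 _ _
    _ = Real.exp 1 * Y ^ r := by
      have : Y ^ (1 / Real.log Y) = Real.exp 1 := by
        rw [Real.rpow_def_of_pos h0]; congr 1; field_simp
      rw [this]; ring

lemma pz_left_side (n : ℕ) (hn : 1 ≤ n) (hRH : RiemannHypothesis) : ∃ K > 0, ∀ Y : ℝ, Real.exp 8 ≤ Y →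
    ∀ V : ℝ, 1 ≤ V → Real.log (V + 5) ≤ 2 * Real.log Y →
    ‖∫ t in -V..V, pzPhi n (((1/2 + 1 / Real.log Y : ℝ) : ℂ) + t * I) * (Y:ℂ) ^ ((((1/2 + 1 / Real.log Y : ℝ) : ℂ) + t * I))‖
      ≤ K * (Y ^ ((1:ℝ)/2) * (Real.log Y ^ (n + 2) * Real.sqrt (Real.log Y))) := by
  obtain ⟨C₁, hC₁, h1⟩ := pz_left_bound hRH hn
  obtain ⟨C₂, hC₂, h2⟩ := pz_left_int
  refine ⟨3 * C₁ * Real.exp 1 * (C₂ * 12), by positivity, fun Y hY V hV hVL => ?_⟩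
  have h0 : 0 < Y := lt_of_lt_of_le (Real.exp_pos 8) hY
  have hL : 8 ≤ Real.log Y := by rw [Real.le_log_iff_exp_le h0]; exact hY
  set L := Real.log Y with hLdef
  have hα : 0 < 1 / L := by positivity
  have hα8 : 1 / L ≤ 1 / 8 := one_div_le_one_div_of_le (by norm_num) hL
  set F : ℝ → ℝ := fun t => (‖deriv riemannZeta (((1/2+1/L:ℝ):ℂ)+t*I)‖ + Real.log (|t|+5)*‖riemannZeta (((1/2+1/L:ℝ):ℂ)+t*I)‖)/(1+|t|) with hF
  have hintg := h2 (1 / L) hα hα8 V hV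
  have hFc : Continuous F := by
    have hne : (1/2+1/L:ℝ) ≠ 1 := by intro h; linarith
    have hz := pz_cont_zeta _ hne
    have hdz := pz_cont_dzeta _ hne
    have hlog : Continuous fun t : ℝ => Real.log (|t| + 5) :=
      Continuous.log (by fun_prop) (fun t => by positivity)
    exact (hdz.norm.add (hlog.mul hz.norm)).div (by fun_prop) (fun t => by positivity)
  have hpt : ∀ t : ℝ, ‖pzPhi n (((1/2 + 1 / L : ℝ) : ℂ) + t * I) * (Y:ℂ) ^ ((((1/2 + 1 / L : ℝ) : ℂ) + t * I))‖
      ≤ (3 * C₁ * Real.exp 1 * (L ^ n * Y ^ ((1:ℝ)/2))) * F t := by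
    intro t
    set s : ℂ := ((1/2 + 1 / L : ℝ) : ℂ) + t * I with hs
    have hre : s.re = 1/2 + 1/L := by simp [hs]
    have him : s.im = t := by simp [hs]
    have b1 := h1 (1 / L) hα hα8 s hre
    have b2 : ‖(Y:ℂ) ^ s‖ ≤ Real.exp 1 * Y ^ ((1:ℝ)/2) := pz_Y_norm hY hre.le
    have b3 : (1 + |t|) / 3 ≤ ‖s‖ := by
      have := abs_re_le_norm s
      have := abs_im_le_norm s
      have := le_abs_self s.re
      rw [him] at *
      linarith
    have b4 : 0 < (1 + |t|) / 3 := by positivity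
    rw [him] at b1
    set W := ‖deriv riemannZeta s‖ + Real.log (|t| + 5) * ‖riemannZeta s‖ with hW
    have hW0 : 0 ≤ W := by
      have : 0 ≤ Real.log (|t| + 5) := Real.log_nonneg (by linarith [abs_nonneg t])
      positivity
    have hFt : F t = W / (1 + |t|) := rfl
    rw [norm_mul, pzPhi, norm_div, norm_mul, hFt]
    calc ‖iteratedDeriv n pzL s‖ * ‖riemannZeta s‖ / ‖s‖ * ‖(Y:ℂ) ^ s‖
        ≤ (C₁ / (1 / L) ^ n * W) / ((1 + |t|) / 3) * (Real.exp 1 * Y ^ ((1:ℝ)/2)) := by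
          gcongr
      _ = _ := by
          have : (1 / L) ^ n = (L ^ n)⁻¹ := by rw [one_div, inv_pow]
          rw [this]; field_simp
  have hle := intervalIntegral.norm_integral_le_of_norm_le (μ := volume) (a := -V) (b := V) (by linarith)
    (Filter.Eventually.of_forall fun t _ => hpt t)
    ((hFc.intervalIntegrable (-V) V).const_mul _)
  refine hle.trans ?_
  rw [intervalIntegral.integral_const_mul]
  have hlV : 0 ≤ Real.log (V + 5) := Real.log_nonneg (by linarith)
  have hsq : Real.sqrt (Real.log (V + 5)) ≤ 2 * Real.sqrt L := by
    have : (2:ℝ) * Real.sqrt L = Real.sqrt (4 * L) := by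
      rw [Real.sqrt_mul (by norm_num), show (4:ℝ) = 2 ^ 2 by norm_num, Real.sqrt_sq (by norm_num)]
    rw [this]; exact Real.sqrt_le_sqrt (by linarith)
  have hintg2 : ∫ t in -V..V, F t ≤ C₂ * 12 * (L ^ 2 * Real.sqrt L) := by
    refine hintg.trans ?_
    calc C₂ * (1 / (1 / L) + Real.log (V + 5)) * Real.sqrt (Real.log (V + 5)) * Real.log (V + 5)
        ≤ C₂ * (L + 2 * L) * (2 * Real.sqrt L) * (2 * L) := by
          rw [one_div_one_div]; gcongr
      _ = _ := by ring
  calc _ ≤ (3 * C₁ * Real.exp 1 * (L ^ n * Y ^ ((1:ℝ)/2))) * (C₂ * 12 * (L ^ 2 * Real.sqrt L)) := by gcongr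
    _ = _ := by ring

lemma pz_horiz_side (n : ℕ) (hn : 1 ≤ n) (hRH : RiemannHypothesis) : ∃ K > 0, ∀ Y : ℝ, Real.exp 8 ≤ Y →
    ∀ v : ℝ, |v| = 2 * Real.pi * Y → Real.log (|v| + 5) ≤ 2 * Real.log Y →
    ∀ c : ℝ, 1 < c → c ≤ 1 + 1 / Real.log Y →
    ‖∫ x in (1/2 + 1 / Real.log Y : ℝ)..c, pzPhi n ((x : ℂ) + (v:ℂ) * I) * (Y:ℂ) ^ ((x : ℂ) + (v:ℂ) * I)‖
      ≤ K * (Y ^ ((1:ℝ)/2) * Real.log Y ^ (n + 2)) := by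
  obtain ⟨C₁, hC₁, h1⟩ := pz_horiz_bound hRH hn
  obtain ⟨C₂, hC₂, h2⟩ := pz_zeta_sqrt
  refine ⟨6 * C₁ * C₂ * Real.exp 1, by positivity, fun Y hY v hv hvL c hc1 hc => ?_⟩
  have h0 : 0 < Y := lt_of_lt_of_le (Real.exp_pos 8) hY
  have hY1 : 1 ≤ Y := le_trans (by simp) hY
  have hL : 8 ≤ Real.log Y := by rw [Real.le_log_iff_exp_le h0]; exact hY
  set L := Real.log Y with hLdef
  have hα : 0 < 1 / L := by positivity
  have hα8 : 1 / L ≤ 1 / 8 := one_div_le_one_div_of_le (by norm_num) hL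
  have hpi := Real.pi_gt_three
  have hpi4 := Real.pi_lt_four
  have hvY : Y ≤ |v| := by rw [hv]; nlinarith
  have hv2 : 2 ≤ |v| := by rw [hv]; nlinarith
  have key : ∀ x ∈ Set.uIoc (1/2 + 1 / L : ℝ) c, ‖pzPhi n ((x : ℂ) + (v:ℂ) * I) * (Y:ℂ) ^ ((x : ℂ) + (v:ℂ) * I)‖
      ≤ 6 * C₁ * C₂ * Real.exp 1 * (Y ^ ((1:ℝ)/2) * L ^ (n + 2)) := by
    intro x hx
    rw [Set.uIoc_of_le (by linarith)] at hx
    set s : ℂ := (x:ℂ) + (v:ℂ) * I with hs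
    have hre : s.re = x := by simp [hs]
    have him : s.im = v := by simp [hs]
    have b1 := h1 (1 / L) hα hα8 s (by rw [hre]; exact hx.1.le) (by rw [hre]; linarith [hx.2]) (by rw [him]; exact hv2)
    have b2 := h2 s (by rw [hre]; linarith [hx.1]) (by rw [hre]; linarith [hx.2]) (by rw [him]; linarith)
    have b3 : ‖(Y:ℂ) ^ s‖ ≤ Real.exp 1 * Y ^ (1:ℝ) := pz_Y_norm hY (by rw [hre]; linarith [hx.2])
    have b4 : |v| ≤ ‖s‖ := by
      have := abs_im_le_norm s
      rwa [him] at this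
    rw [Real.rpow_one] at b3
    rw [him] at b1 b2
    have hvpos : 0 < |v| := by linarith
    have e1 : Real.sqrt |v| ≤ 3 * Y ^ ((1:ℝ)/2) := by
      rw [← Real.sqrt_eq_rpow, show (3:ℝ) * Real.sqrt Y = Real.sqrt (9 * Y) by
        rw [Real.sqrt_mul (by norm_num), show (9:ℝ) = 3 ^ 2 by norm_num, Real.sqrt_sq (by norm_num)]]
      apply Real.sqrt_le_sqrt
      rw [hv]
      have := Real.pi_lt_d2
      nlinarith
    rw [norm_mul, pzPhi, norm_div, norm_mul]
    have hlog0 : 0 ≤ Real.log (|v| + 5) := Real.log_nonneg (by linarith)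
    calc ‖iteratedDeriv n pzL s‖ * ‖riemannZeta s‖ / ‖s‖ * ‖(Y:ℂ) ^ s‖
        ≤ (C₁ / (1 / L) ^ (n + 1) * (2 * L)) * (C₂ * (3 * Y ^ ((1:ℝ)/2))) / Y * (Real.exp 1 * Y) := by
          have b1' : ‖iteratedDeriv n pzL s‖ ≤ C₁ / (1 / L) ^ (n + 1) * (2 * L) := b1.trans (by gcongr)
          have b2' : ‖riemannZeta s‖ ≤ C₂ * (3 * Y ^ ((1:ℝ)/2)) := b2.trans (by gcongr)
          have b4' : Y ≤ ‖s‖ := by linarith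
          gcongr
      _ = _ := by
          have : (1 / L) ^ (n + 1) = (L ^ (n + 1))⁻¹ := by rw [one_div, inv_pow]
          rw [this]; field_simp; ring
  refine (intervalIntegral.norm_integral_le_of_norm_le_const key).trans ?_
  have : |c - (1/2 + 1 / L)| ≤ 1 := by rw [abs_le]; constructor <;> linarith
  exact mul_le_of_le_one_right (by positivity) this

theorem perron_integral_residue_RH (n : ℕ) (hn : 1 ≤ n)
    (hRH : RiemannHypothesis) (C A : ℕ → ℂ)
    (hC : ∀ᶠ s in nhdsWithin (1 : ℂ) {(1 : ℂ)}ᶜ,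
      HasSum (fun j : ℕ => C j * (s - 1) ^ j) (riemannZeta s - 1 / (s - 1)))
    (hA : ∀ᶠ s in nhdsWithin (1 : ℂ) {(1 : ℂ)}ᶜ,
      HasSum (fun j : ℕ => A j * (s - 1) ^ j)
        (deriv riemannZeta s / riemannZeta s + 1 / (s - 1))) :
    ∃ K > (0 : ℝ), ∃ Y₀ : ℝ, ∀ Y ≥ Y₀,
      ∀ c V : ℝ, c = 1 + 1 / Real.log (2 * Real.pi * Y) → V = 2 * Real.pi * Y →
        ‖perronIntegral n c V Y - Mterm C A n Y‖ ≤
          K * Y ^ ((1 : ℝ) / 2) * Real.log Y ^ ((n : ℝ) + 5 / 2) := by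
  obtain ⟨K₁, hK₁, h1⟩ := pz_left_side n hn hRH
  obtain ⟨K₂, hK₂, h2⟩ := pz_horiz_side n hn hRH
  refine ⟨K₁ + 2 * K₂, by positivity, Real.exp 8, fun Y hY c V hc hV => ?_⟩
  have hY' : Real.exp 8 ≤ Y := hY
  have h0 : 0 < Y := lt_of_lt_of_le (Real.exp_pos 8) hY
  have hY9 : 9 ≤ Y := le_trans (by have := Real.add_one_le_exp (8:ℝ); linarith) hY'
  have hL : 8 ≤ Real.log Y := by rw [Real.le_log_iff_exp_le h0]; exact hY
  have hpi := Real.pi_gt_three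
  have hpi4 := Real.pi_lt_d2
  have hVY : Y ≤ V := by rw [hV]; nlinarith
  have hVpos : 0 < V := by linarith
  have hlogV : Real.log (V + 5) ≤ 2 * Real.log Y := by
    rw [← Real.log_rpow h0]
    apply Real.log_le_log (by linarith)
    rw [Real.rpow_ofNat, hV]
    nlinarith
  have hlog2 : Real.log Y ≤ Real.log (2 * Real.pi * Y) := by
    rw [← hV]; exact Real.log_le_log h0 hVY
  set L := Real.log Y with hLdef
  have hα : 0 < 1 / L := by positivity
  have hα8 : 1 / L ≤ 1 / 8 := one_div_le_one_div_of_le (by norm_num) hL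
  have hc1 : 1 < c := by
    have : 0 < 1 / Real.log (2 * Real.pi * Y) := by apply one_div_pos.2; linarith
    linarith
  have hc2 : c ≤ 1 + 1 / L := by
    rw [hc]
    have := one_div_le_one_div_of_le (by linarith) hlog2
    linarith
  have main := pz_rect_main n hRH C A hC hA (a := 1/2 + 1/L) (b := c) (V := V) h0 (by linarith) (by linarith) hc1 hVpos
  have bl := h1 Y hY' V (by linarith) hlogV
  have bt := h2 Y hY' V (by rw [abs_of_pos hVpos, hV]) (by rw [abs_of_pos hVpos]; exact hlogV) c hc1 hc2
  have bb := h2 Y hY' (-V) (by rw [abs_neg, abs_of_pos hVpos, hV]) (by rw [abs_neg, abs_of_pos hVpos]; exact hlogV) c hc1 hc2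
  have hP : perronIntegral n c V Y = ((1 / (2 * Real.pi) : ℝ) : ℂ) * ∫ t in -V..V, pzPhi n ((c:ℂ) + t * I) * (Y:ℂ) ^ ((c:ℂ) + t * I) := by
    unfold perronIntegral
    congr 1
    refine intervalIntegral.integral_congr fun t _ => ?_
    change iteratedDeriv n pzL ((c:ℂ) + t * I) * riemannZeta ((c:ℂ) + t * I) * (Y:ℂ) ^ ((c:ℂ) + t * I) / ((c:ℂ) + t * I)
      = pzPhi n ((c:ℂ) + t * I) * (Y:ℂ) ^ ((c:ℂ) + t * I)
    rw [pzPhi]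
    ring
  rw [hP]
  unfold pzRect at main
  set R := ∫ t in -V..V, pzPhi n ((c:ℂ) + t * I) * (Y:ℂ) ^ ((c:ℂ) + t * I) with hR
  set Lf := ∫ t in -V..V, pzPhi n (((1/2 + 1 / L : ℝ) : ℂ) + t * I) * (Y:ℂ) ^ ((((1/2 + 1 / L : ℝ) : ℂ) + t * I)) with hLf
  set T := ∫ x in (1/2 + 1 / L : ℝ)..c, pzPhi n ((x : ℂ) + (V:ℂ) * I) * (Y:ℂ) ^ ((x : ℂ) + (V:ℂ) * I) with hT
  set Bo := ∫ x in (1/2 + 1 / L : ℝ)..c, pzPhi n ((x : ℂ) + ((-V : ℝ):ℂ) * I) * (Y:ℂ) ^ ((x : ℂ) + ((-V : ℝ):ℂ) * I) with hBo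
  have hpic : (Real.pi : ℂ) ≠ 0 := by exact_mod_cast Real.pi_ne_zero
  have hdiff : ((1 / (2 * Real.pi) : ℝ) : ℂ) * R - Mterm C A n Y = ((1 / (2 * Real.pi) : ℝ) : ℂ) * (Lf - I * (T - Bo)) := by
    push_cast
    field_simp
    linear_combination (-I) * main + (R - Lf - 2 * Real.pi * Mterm C A n Y) * I_sq
  rw [hdiff, norm_mul]
  have hn1 : ‖((1 / (2 * Real.pi) : ℝ) : ℂ)‖ ≤ 1 := by
    rw [norm_real, Real.norm_of_nonneg (by positivity), div_le_one (by positivity)]; linarith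
  have hn2 : ‖Lf - I * (T - Bo)‖ ≤ ‖Lf‖ + (‖T‖ + ‖Bo‖) := by
    refine (norm_sub_le _ _).trans ?_
    rw [norm_mul, norm_I, one_mul]
    gcongr
    exact norm_sub_le _ _
  have hLp : L ^ ((n : ℝ) + 5 / 2) = L ^ (n + 2) * Real.sqrt L := by
    rw [Real.sqrt_eq_rpow, ← Real.rpow_natCast, ← Real.rpow_add (by linarith)]
    congr 1; push_cast; ring
  have hs1 : 1 ≤ Real.sqrt L := by rw [Real.one_le_sqrt]; linarith
  have hYp : 0 < Y ^ ((1:ℝ)/2) := Real.rpow_pos_of_pos h0 _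
  have hLn : 0 < L ^ (n + 2) := by positivity
  have hmono : K₂ * (Y ^ ((1:ℝ)/2) * L ^ (n + 2)) ≤ K₂ * (Y ^ ((1:ℝ)/2) * (L ^ (n + 2) * Real.sqrt L)) := by
    gcongr
    exact le_mul_of_one_le_right hLn.le hs1
  rw [hLp]
  calc _ ≤ 1 * ‖Lf - I * (T - Bo)‖ := by gcongr
    _ ≤ ‖Lf‖ + (‖T‖ + ‖Bo‖) := by rw [one_mul]; exact hn2
    _ ≤ (K₁ + 2 * K₂) * (Y ^ ((1:ℝ)/2) * (L ^ (n + 2) * Real.sqrt L)) := by linarith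
    _ = _ := by ring
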